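/- arXiv:2107.02158 — 3 statements merged into one kernel-verified Lean document; each statement's English description precedes it below -/
import Mathlib

section
/- For every integer k ≥ 2 there exist constants c₀, c, C > 0 (with c₀ an absolute constant and c, C depending only on k) such that the following holds for all sufficiently large N. Set Q := exp((log N)^{1/10}). Suppose χ is a primitive real (quadratic) Dirichlet character of conductor q < Q and β is a real number with 1 − c₀/log Q < β < 1 satisfying L(β, χ) = 0, where L(s, χ) is the Dirichlet L-function of χ. Then ‖n ↦ Λ_{Cramér,Q}(n)·n^{β−1}·χ(n)‖_{U^k([N])} ≤ C·q^{−c}; equivalently, ‖Λ_Siegel − Λ_{Cramér,Q}‖_{U^k([N])} ≤ C·q^{−c}, where Λ_Siegel(n) := Λ_{Cramér,Q}(n)·(1 − n^{β−1}·χ(n)). -/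
open scoped Classical

noncomputable section

/-- The product of conjugated shifts appearing in the Gowers norm over an additive group. -/
def gowersProd {G : Type*} [AddCommGroup G] (k : ℕ) (f : G → ℂ) (n : G) (h : Fin k → G) : ℂ :=
  ∏ ω : Fin k → Bool,
    (⇑(starRingEnd ℂ))^[(Finset.univ.filter fun i => ω i = true).card]
      (f (n + ∑ i, if ω i then h i else 0))

/-- The unnormalized Gowers norm `‖f‖_{Ũ^k(G)}`. -/
def gowersTildeU {G : Type*} [AddCommGroup G] (k : ℕ) (f : G → ℂ) : ℝ :=
  (∑' nh : G × (Fin k → G), gowersProd k f nh.1 nh.2).re ^ ((1 : ℝ) / 2 ^ k)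

/-- The restriction `f·1_{[N]}` of `f : ℤ → ℂ` to `[N] = {n ∈ ℕ : 1 ≤ n ≤ N}`. -/
def truncN (N : ℝ) (f : ℤ → ℂ) : ℤ → ℂ := fun n => if 1 ≤ n ∧ (n : ℝ) ≤ N then f n else 0

/-- The local (normalized) Gowers norm `‖f‖_{U^k([N])}`. -/
def gowersUN (k : ℕ) (N : ℝ) (f : ℤ → ℂ) : ℝ :=
  gowersTildeU k (truncN N f) / gowersTildeU k (truncN N fun _ => 1)

/-- The Cramér model `Λ_{Cramér,w}(n) = ∏_{p < w, p prime} (p/(p-1))·1_{p ∤ n}`. -/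
def cramer (w : ℝ) (n : ℤ) : ℝ :=
  ∏ p ∈ (Finset.range (⌈w⌉₊ + 1)).filter fun p => Nat.Prime p ∧ (p : ℝ) < w,
    if (p : ℤ) ∣ n then 0 else (p : ℝ) / ((p : ℝ) - 1)

/-- The quantity `Q = exp((log N)^{1/10})`. -/
def Qparam (N : ℝ) : ℝ := Real.exp (Real.log N ^ ((1 : ℝ) / 10))

end

section
open Polynomial

noncomputable def stepOp {F : Type*} [CommRing F] (f : F[X]) (n : ℕ) : ℕ → (F[X] →ₗ[F] F[X])
  | 0 => LinearMap.id
  | i + 1 => ((((n - i : ℕ) : F) • LinearMap.mulLeft F (derivative f)) +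
      (LinearMap.mulLeft F f) ∘ₗ derivative) ∘ₗ stepOp f n i

lemma stepOp_succ {F : Type*} [CommRing F] (f : F[X]) (n i : ℕ) (s : F[X]) :
    stepOp f n (i+1) s = ((n - i : ℕ) : F[X]) * (derivative f * stepOp f n i s) +
      f * derivative (stepOp f n i s) := by
  simp only [stepOp, LinearMap.comp_apply, LinearMap.add_apply, LinearMap.smul_apply,
    LinearMap.mulLeft_apply]
  rw [Polynomial.smul_eq_C_mul]
  simp

lemma stepOp_spec {F : Type*} [CommRing F] (f : F[X]) (n : ℕ) (s : F[X]) (i : ℕ) (hi : i ≤ n) :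
    derivative^[i] (f ^ n * s) = f ^ (n - i) * stepOp f n i s := by
  induction i with
  | zero => simp [stepOp]
  | succ i ih =>
    rw [Function.iterate_succ_apply', ih (by omega), stepOp_succ]
    obtain ⟨c, hc⟩ : ∃ c, n - i = c + 1 := ⟨n - i - 1, by omega⟩
    have h2 : n - (i + 1) = c := by omega
    rw [h2, hc, derivative_mul, derivative_pow]
    simp
    ring

lemma stepOp_natDegree {F : Type*} [CommRing F] (f : F[X]) (n : ℕ) (s : F[X]) (i : ℕ) :
    (stepOp f n i s).natDegree ≤ s.natDegree + i * f.natDegree := by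
  induction i with
  | zero => simp [stepOp]
  | succ i ih =>
    rw [stepOp_succ]
    have hd : (derivative f).natDegree ≤ f.natDegree := (natDegree_derivative_le f).trans (by omega)
    have hd2 : (derivative (stepOp f n i s)).natDegree ≤ (stepOp f n i s).natDegree :=
      (natDegree_derivative_le _).trans (by omega)
    refine (natDegree_add_le _ _).trans (max_le ?_ ?_)
    · refine natDegree_mul_le.trans ?_
      have := (natDegree_mul_le (p := derivative f) (q := stepOp f n i s))
      rw [natDegree_natCast]
      linarith
    · refine natDegree_mul_le.trans ?_
      linarith

lemma iter_deriv_mul_Xp {p : ℕ} [Fact p.Prime] (h : (ZMod p)[X]) (j i : ℕ) :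
    derivative^[i] (h * X ^ (j * p)) = derivative^[i] h * X ^ (j * p) := by
  induction i with
  | zero => simp
  | succ i ih =>
    rw [Function.iterate_succ_apply', ih, Function.iterate_succ_apply', derivative_mul, derivative_X_pow]
    simp

lemma step_nonvanish {p : ℕ} [Fact p.Prime] (f : (ZMod p)[X]) (e m : ℕ) (he : 2 * e + 1 = p)
    (hm : 2 * m + f.natDegree ≤ p) (hm1 : 1 ≤ m)
    (H : ∀ r s : (ZMod p)[X], r ^ 2 * f = C (f.eval 0) * s ^ 2 → r = 0 ∧ s = 0) (J : ℕ) :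
    ∀ r s : ℕ → (ZMod p)[X], (∀ j, (r j).natDegree < m) → (∀ j, (s j).natDegree < m) →
      ∑ j ∈ Finset.range J, (r j + s j * f ^ e) * X ^ (j * p) = 0 →
      ∀ j < J, r j = 0 ∧ s j = 0 := by
  induction J with
  | zero => intro r s _ _ _ j hj; omega
  | succ J ih =>
    intro r s hr hs h
    have hp : p.Prime := Fact.out
    rw [Finset.sum_range_succ'] at h
    have hsum : ∑ j ∈ Finset.range J, (r (j+1) + s (j+1) * f ^ e) * X ^ ((j+1) * p) =
        X ^ p * ∑ j ∈ Finset.range J, (r (j+1) + s (j+1) * f ^ e) * X ^ (j * p) := by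
      rw [Finset.mul_sum]
      refine Finset.sum_congr rfl fun j _ => ?_
      rw [add_mul 1 j p |> fun _ => (by ring : (j+1)*p = p + j * p), pow_add]; ring
    rw [hsum] at h
    simp only [zero_mul, pow_zero, mul_one] at h
    have hdvd : (X : (ZMod p)[X]) ^ p ∣ r 0 + s 0 * f ^ e := by
      refine ⟨-∑ j ∈ Finset.range J, (r (j+1) + s (j+1) * f ^ e) * X ^ (j * p), ?_⟩
      linear_combination h
    have hfp : (X : (ZMod p)[X]) ^ p ∣ f ^ p - C (f.eval 0) := by
      have h1 : (X : (ZMod p)[X]) ∣ f - C (f.eval 0) := by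
        rw [X_dvd_iff]; simp [coeff_zero_eq_eval_zero]
      have h2 := map_dvd (expand (ZMod p) p) h1
      rw [expand_X, map_sub, ZMod.expand_card, expand_C] at h2
      exact h2
    have hd2 : (X : (ZMod p)[X]) ^ p ∣ r 0 ^ 2 * f - C (f.eval 0) * s 0 ^ 2 := by
      have : r 0 ^ 2 * f - C (f.eval 0) * s 0 ^ 2 =
        (r 0 + s 0 * f ^ e) * ((r 0 - s 0 * f ^ e) * f) + (f ^ p - C (f.eval 0)) * s 0 ^ 2 := by
        have : f ^ p = f ^ e * f ^ e * f := by
          calc f ^ p = f ^ (2 * e + 1) := congrArg (fun n => f ^ n) he.symm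
            _ = _ := by ring
        rw [this]; ring
      rw [this]
      exact dvd_add (Dvd.dvd.mul_right hdvd _) (Dvd.dvd.mul_right hfp _)
    have hz : r 0 ^ 2 * f - C (f.eval 0) * s 0 ^ 2 = 0 := by
      apply eq_zero_of_dvd_of_natDegree_lt hd2
      rw [natDegree_X_pow]
      have h1 : (r 0 ^ 2 * f).natDegree ≤ 2 * (r 0).natDegree + f.natDegree :=
        natDegree_mul_le.trans (by gcongr; exact natDegree_pow_le)
      have h2 : (C (f.eval 0) * s 0 ^ 2).natDegree ≤ 2 * (s 0).natDegree :=
        (natDegree_C_mul_le _ _).trans natDegree_pow_le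
      have := natDegree_sub_le (r 0 ^ 2 * f) (C (f.eval 0) * s 0 ^ 2)
      have := hr 0
      have := hs 0
      omega
    obtain ⟨h0r, h0s⟩ := H _ _ (sub_eq_zero.mp hz)
    rw [h0r, h0s] at h
    have hne : (X : (ZMod p)[X]) ^ p ≠ 0 := pow_ne_zero _ X_ne_zero
    have h3 : ∑ j ∈ Finset.range J, (r (j+1) + s (j+1) * f ^ e) * X ^ (j * p) = 0 := by
      have : (X : (ZMod p)[X]) ^ p * ∑ j ∈ Finset.range J, (r (j+1) + s (j+1) * f ^ e) * X ^ (j * p) = 0 := by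
        simpa using h
      exact (mul_eq_zero.mp this).resolve_left hne
    have h4 := ih (fun j => r (j+1)) (fun j => s (j+1)) (fun j => hr _) (fun j => hs _) h3
    intro j hj
    cases j with
    | zero => exact ⟨h0r, h0s⟩
    | succ j => exact h4 j (by omega)

lemma stepanov_count {p : ℕ} [Fact p.Prime] (f : (ZMod p)[X]) (e m l J : ℕ) (he : 2 * e + 1 = p)
    (hm : 2 * m + f.natDegree ≤ p) (hm1 : 1 ≤ m) (hf : f ≠ 0)
    (H : ∀ r s : (ZMod p)[X], r ^ 2 * f = C (f.eval 0) * s ^ 2 → r = 0 ∧ s = 0)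
    (hl : l ≤ p) (hpar : l * (m + l * f.natDegree + J) < 2 * J * m)
    (a : ZMod p) (Z : Finset (ZMod p)) (hZ : ∀ x ∈ Z, f.eval x ^ e = a) :
    Z.card * l ≤ l * f.natDegree + m + e * f.natDegree + J * p := by
  classical
  have hp : p.Prime := Fact.out
  set d := f.natDegree with hd
  let W := degreeLT (ZMod p) m
  let B := m + l * d + J
  let E : ℕ → ((Fin J → W × W) →ₗ[ZMod p] (ZMod p)[X]) := fun i =>
    ∑ j : Fin J, (LinearMap.mulRight (ZMod p) ((X : (ZMod p)[X]) ^ (j : ℕ))) ∘ₗ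
      ((stepOp f l i) ∘ₗ W.subtype ∘ₗ (LinearMap.fst _ _ _) ∘ₗ (LinearMap.proj j) +
        a • ((stepOp f (l + e) i) ∘ₗ W.subtype ∘ₗ (LinearMap.snd _ _ _) ∘ₗ (LinearMap.proj j)))
  have hE : ∀ i u, E i u = ∑ j : Fin J, (stepOp f l i (u j).1 + C a * stepOp f (l+e) i (u j).2) * X ^ (j : ℕ) := by
    intro i u
    simp [E, LinearMap.sum_apply, Polynomial.smul_eq_C_mul]
  let Ψ : (Fin J → W × W) →ₗ[ZMod p] (Fin l → Fin B → ZMod p) :=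
    LinearMap.pi fun i => LinearMap.pi fun b => (lcoeff (ZMod p) (b : ℕ)) ∘ₗ (E i)
  have hfin : Module.finrank (ZMod p) (Fin l → Fin B → ZMod p) < Module.finrank (ZMod p) (Fin J → W × W) := by
    have hW : Module.finrank (ZMod p) W = m := by
      have := LinearEquiv.finrank_eq (degreeLTEquiv (ZMod p) m)
      simpa using this
    have : Module.Finite (ZMod p) W := Module.Finite.equiv (degreeLTEquiv (ZMod p) m).symm
    have hWW : Module.finrank (ZMod p) (W × W) = 2 * m := by
      rw [Module.finrank_prod, hW]; ring
    have h1 : Module.finrank (ZMod p) (Fin J → W × W) = J * (2 * m) := by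
      rw [Module.finrank_pi_fintype]; simp [hWW]
    have h2 : Module.finrank (ZMod p) (Fin l → Fin B → ZMod p) = l * B := by
      rw [Module.finrank_pi_fintype]; simp
    rw [h1, h2]
    calc l * B < 2 * J * m := hpar
      _ = _ := by ring
  have : Module.Finite (ZMod p) W := Module.Finite.equiv (degreeLTEquiv (ZMod p) m).symm
  have hker := LinearMap.ker_ne_bot_of_finrank_lt hfin (f := Ψ)
  obtain ⟨u, hu, hu0⟩ := (Submodule.ne_bot_iff _).mp hker
  have hdeg : ∀ w : W, (w : (ZMod p)[X]).natDegree < m := by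
    intro w
    have := mem_degreeLT.mp w.2
    by_cases h0 : (w : (ZMod p)[X]) = 0
    · rw [h0]; simp; omega
    · exact (natDegree_lt_iff_degree_lt h0).mpr this
  have hE0 : ∀ i < l, E i u = 0 := by
    intro i hi
    ext b
    simp only [coeff_zero]
    by_cases hb : b < B
    · have := congrFun (congrFun (LinearMap.mem_ker.mp hu) ⟨i, hi⟩) ⟨b, hb⟩
      simpa [Ψ] using this
    · apply coeff_eq_zero_of_natDegree_lt
      refine lt_of_lt_of_le ?_ (not_lt.mp hb)
      rw [hE]
      have : (∑ j : Fin J, (stepOp f l i (u j).1 + C a * stepOp f (l+e) i (u j).2) * X ^ (j : ℕ)).natDegree ≤ B - 1 := by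
        refine natDegree_sum_le_of_forall_le _ _ fun j _ => ?_
        refine natDegree_mul_le.trans ?_
        rw [natDegree_X_pow]
        have h1 := stepOp_natDegree f l (u j).1 i
        have h2 := stepOp_natDegree f (l+e) (u j).2 i
        have h3 := natDegree_C_mul_le a (stepOp f (l+e) i (u j).2)
        have h4 := natDegree_add_le (stepOp f l i (u j).1) (C a * stepOp f (l+e) i (u j).2)
        have h5 := hdeg (u j).1
        have h6 := hdeg (u j).2
        have h7 : i * f.natDegree ≤ l * d := Nat.mul_le_mul hi.le le_rfl
        have h8 := j.2
        simp only [B]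
        omega
      have hB : 1 ≤ B := by simp only [B]; omega
      omega
  set r : (ZMod p)[X] := ∑ j : Fin J, (((u j).1 : (ZMod p)[X]) + ((u j).2 : (ZMod p)[X]) * f ^ e) * X ^ ((j : ℕ) * p) with hr
  have hr0 : r ≠ 0 := by
    intro h0
    let rr : ℕ → (ZMod p)[X] := fun j => if h : j < J then ((u ⟨j, h⟩).1 : (ZMod p)[X]) else 0
    let ss : ℕ → (ZMod p)[X] := fun j => if h : j < J then ((u ⟨j, h⟩).2 : (ZMod p)[X]) else 0
    have := step_nonvanish f e m he hm hm1 H J rr ss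
      (by intro j; simp only [rr]; split_ifs; exacts [hdeg _, by simp; omega])
      (by intro j; simp only [ss]; split_ifs; exacts [hdeg _, by simp; omega])
      (by
        rw [← Fin.sum_univ_eq_sum_range (fun j => (rr j + ss j * f ^ e) * X ^ (j * p)), ← h0, hr]
        refine Finset.sum_congr rfl fun j _ => ?_
        simp [rr, ss])
    apply hu0
    ext j
    · have := (this j j.2).1
      simp only [rr, j.2, dif_pos] at this
      simp [this]
    · have := (this j j.2).2
      simp only [ss, j.2, dif_pos] at this
      simp [this]
  have hder : ∀ x ∈ Z, ∀ i < l, (derivative^[i] (f ^ l * r)).eval x = 0 := by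
    intro x hx i hi
    have hexp : f ^ l * r = ∑ j : Fin J, (f ^ l * ((u j).1 : (ZMod p)[X]) + f ^ (l + e) * ((u j).2 : (ZMod p)[X])) * X ^ ((j : ℕ) * p) := by
      rw [hr, Finset.mul_sum]
      refine Finset.sum_congr rfl fun j _ => ?_
      rw [pow_add]; ring
    rw [hexp, iterate_derivative_sum, eval_finsetSum]
    have h1 : ∀ j : Fin J, (derivative^[i] ((f ^ l * ((u j).1 : (ZMod p)[X]) + f ^ (l + e) * ((u j).2 : (ZMod p)[X])) * X ^ ((j : ℕ) * p))).eval x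
       = f.eval x ^ (l - i) * ((stepOp f l i (u j).1 + C a * stepOp f (l+e) i (u j).2) * X ^ (j : ℕ)).eval x := by
      intro j
      rw [iter_deriv_mul_Xp, iterate_map_add, stepOp_spec f l _ i hi.le, stepOp_spec f (l+e) _ i (by omega)]
      have : l + e - i = (l - i) + e := by omega
      rw [this, pow_add]
      simp only [eval_mul, eval_add, eval_pow, eval_X, eval_C, hZ x hx]
      rw [mul_comm (j : ℕ) p, pow_mul, ZMod.pow_card]
      ring
    rw [Finset.sum_congr rfl fun j _ => h1 j, ← Finset.mul_sum, ← eval_finsetSum, ← hE, hE0 i hi]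
    simp
  have hfr : f ^ l * r ≠ 0 := mul_ne_zero (pow_ne_zero _ hf) hr0
  have hmult : ∀ x ∈ Z, l ≤ (f ^ l * r).rootMultiplicity x := by
    intro x hx
    rcases Nat.eq_zero_or_pos l with h0 | hpos
    · omega
    obtain ⟨l', rfl⟩ : ∃ l', l = l' + 1 := ⟨l - 1, by omega⟩
    apply lt_rootMultiplicity_of_isRoot_iterate_derivative_of_mem_nonZeroDivisors hfr
    · intro i hi
      exact hder x hx i (by omega)
    · rw [mem_nonZeroDivisors_iff_ne_zero, Ne, CharP.cast_eq_zero_iff (ZMod p) p, hp.dvd_factorial]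
      omega
  have hcard : Z.card * l ≤ (f ^ l * r).natDegree := by
    calc Z.card * l = ∑ x ∈ Z, l := by simp
      _ ≤ ∑ x ∈ Z, (f ^ l * r).roots.count x := Finset.sum_le_sum fun x hx => by
          rw [count_roots]; exact hmult x hx
      _ ≤ ∑ x ∈ Z ∪ (f ^ l * r).roots.toFinset, (f ^ l * r).roots.count x :=
          Finset.sum_le_sum_of_subset Finset.subset_union_left
      _ = (f ^ l * r).roots.card := by
          rw [Multiset.sum_count_eq_card]
          intro x hx; exact Finset.mem_union_right _ (Multiset.mem_toFinset.mpr hx)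
      _ ≤ _ := card_roots' _
  refine hcard.trans ?_
  refine natDegree_mul_le.trans ?_
  have h1 : (f ^ l).natDegree ≤ l * d := natDegree_pow_le
  have h2 : r.natDegree ≤ m + e * d + J * p := by
    refine natDegree_sum_le_of_forall_le _ _ fun j _ => ?_
    refine natDegree_mul_le.trans ?_
    rw [natDegree_X_pow]
    have h3 := natDegree_add_le ((u j).1 : (ZMod p)[X]) (((u j).2 : (ZMod p)[X]) * f ^ e)
    have h4 : (((u j).2 : (ZMod p)[X]) * f ^ e).natDegree ≤ ((u j).2 : (ZMod p)[X]).natDegree + e * d :=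
      natDegree_mul_le.trans (by gcongr; exact natDegree_pow_le)
    have h5 := hdeg (u j).1
    have h6 := hdeg (u j).2
    have h7 : (j : ℕ) * p ≤ J * p := Nat.mul_le_mul j.2.le le_rfl
    have h8 := (max_le_iff.mpr ⟨(show ((u j).1 : (ZMod p)[X]).natDegree ≤ m + e * d by omega), (show (((u j).2 : (ZMod p)[X]) * f ^ e).natDegree ≤ m + e * d by omega)⟩)
    omega
  omega

end

section
open Polynomial

lemma prod_lin_H {p : ℕ} [Fact p.Prime] {ι : Type*} [Fintype ι] [Nonempty ι] (b : ι → ZMod p)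
    (hb : Function.Injective b) (c : ZMod p) (hc : c ≠ 0) (r s : (ZMod p)[X])
    (h : r ^ 2 * (∏ i, (X + C (b i))) = C c * s ^ 2) : r = 0 ∧ s = 0 := by
  classical
  have hX : ∀ i, (X + C (b i)) ≠ 0 := fun i => X_add_C_ne_zero _
  have hf : (∏ i, (X + C (b i))) ≠ 0 := Finset.prod_ne_zero_iff.mpr fun i _ => hX i
  have hcC : (C c : (ZMod p)[X]) ≠ 0 := C_ne_zero.mpr hc
  by_cases hr : r = 0
  · subst hr
    have : C c * s ^ 2 = 0 := by rw [← h]; simp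
    exact ⟨rfl, by simpa [hc] using this⟩
  by_cases hs : s = 0
  · subst hs
    have : r ^ 2 * (∏ i, (X + C (b i))) = 0 := by rw [h]; simp
    rcases mul_eq_zero.mp this with h1 | h1
    · exact absurd (by simpa using h1) hr
    · exact absurd h1 hf
  exfalso
  obtain ⟨i0⟩ := ‹Nonempty ι›
  have hm := congrArg (rootMultiplicity (-(b i0))) h
  rw [rootMultiplicity_mul (mul_ne_zero (pow_ne_zero _ hr) hf),
    rootMultiplicity_mul (mul_ne_zero hcC (pow_ne_zero _ hs)), rootMultiplicity_C, sq, sq,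
    rootMultiplicity_mul (mul_ne_zero hr hr), rootMultiplicity_mul (mul_ne_zero hs hs)] at hm
  have h1 : rootMultiplicity (-(b i0)) (∏ i, (X + C (b i))) = 1 := by
    rw [← Finset.mul_prod_erase _ _ (Finset.mem_univ i0)]
    have hne : (∏ x ∈ Finset.univ.erase i0, (X + C (b x))) ≠ 0 :=
      Finset.prod_ne_zero_iff.mpr fun i _ => hX i
    rw [rootMultiplicity_mul (mul_ne_zero (hX _) hne)]
    have h2 : rootMultiplicity (-(b i0)) (X + C (b i0)) = 1 := by
      have := rootMultiplicity_X_sub_C_self (x := -(b i0))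
      simpa using this
    have h3 : rootMultiplicity (-(b i0)) (∏ x ∈ Finset.univ.erase i0, (X + C (b x))) = 0 := by
      apply rootMultiplicity_eq_zero
      rw [IsRoot.def, eval_prod, Finset.prod_eq_zero_iff]
      rintro ⟨x, hx, h0⟩
      simp only [eval_add, eval_X, eval_C] at h0
      have : b x = b i0 := by linear_combination h0
      exact (Finset.mem_erase.mp hx).1 (hb this)
    rw [h2, h3]
  rw [h1] at hm
  omega

lemma Z_bound {p : ℕ} [Fact p.Prime] (hp2 : p ≠ 2) {ι : Type*} [Fintype ι] [Nonempty ι] (b : ι → ZMod p)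
    (hb : Function.Injective b) (hb0 : ∀ i, b i ≠ 0) (hpl : 256 * (Fintype.card ι + 1) ^ 2 ≤ p)
    (a : ZMod p) (Z : Finset (ZMod p)) (hZ : ∀ x ∈ Z, (∏ i, (x + b i)) ^ (p / 2) = a) :
    (Z.card : ℝ) ≤ p / 2 + 10 * (Fintype.card ι + 1) * Real.sqrt p := by
  have hp : p.Prime := Fact.out
  set d := Fintype.card ι with hd
  have hd1 : 1 ≤ d := Fintype.card_pos
  let f : (ZMod p)[X] := ∏ i, (X + C (b i))
  have hdeg : f.natDegree = d := by
    simp only [f]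
    rw [natDegree_prod _ _ fun i _ => X_add_C_ne_zero _]
    simp [hd]
  have hodd : 2 * (p / 2) + 1 = p := by
    rcases hp.eq_two_or_odd with h | h <;> omega
  have hf0 : f.eval 0 ≠ 0 := by
    simp only [f, eval_prod, eval_add, eval_X, eval_C, zero_add]
    exact Finset.prod_ne_zero_iff.mpr fun i _ => hb0 i
  have hfne : f ≠ 0 := by rintro h; rw [h] at hf0; simp at hf0
  obtain ⟨lam, hlam⟩ : ∃ x, x = Nat.sqrt p := ⟨_, rfl⟩
  have hl1 : lam * lam ≤ p := by rw [hlam]; exact Nat.sqrt_le p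
  have hl2 : p < (lam + 1) * (lam + 1) := by rw [hlam]; exact Nat.lt_succ_sqrt p
  have hl3 : 16 * (d + 1) ≤ lam := by
    rw [hlam, Nat.le_sqrt]; nlinarith
  obtain ⟨m, hm⟩ : ∃ m, m = (p - d) / 2 := ⟨_, rfl⟩
  have hdp : d ≤ p := by nlinarith
  have hm1 : 2 * m + d ≤ p := by omega
  have hm2 : p ≤ 2 * m + d + 1 := by omega
  have key := stepanov_count f (p / 2) m (2 * lam) (lam + 8 * (d + 1)) hodd (by rw [hdeg]; exact hm1)
    (by nlinarith) hfne (prod_lin_H b hb _ hf0) (by nlinarith)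
    (by
      rw [hdeg]
      have e1 : lam * (2 * lam * d + lam + 8 * (d+1)) < 8 * (d+1) * m := by
        have h1 : 16 * (d+1) * lam ≤ lam * lam := Nat.mul_le_mul hl3 le_rfl
        have h2 : 4 * (d+1) * p ≤ 4 * (d+1) * (2 * m + d + 1) := Nat.mul_le_mul le_rfl hm2
        have h3 : lam * lam * d ≤ p * d := Nat.mul_le_mul hl1 le_rfl
        have h4 : 0 < p := hp.pos
        nlinarith
      nlinarith) a Z (by
      intro x hx
      simpa [f, eval_prod] using hZ x hx)
  rw [hdeg] at key
  have keyR : (Z.card : ℝ) * (2 * lam) ≤ 2 * lam * d + m + (p / 2 : ℕ) * d + (lam + 8 * (d + 1)) * p := by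
    exact_mod_cast key
  have hm3 : (m : ℝ) ≤ p := by exact_mod_cast (by omega : m ≤ p)
  have hp3 : ((p / 2 : ℕ) : ℝ) ≤ p := by exact_mod_cast (by omega : p / 2 ≤ p)
  have hs : Real.sqrt p ≤ 2 * lam := by
    rw [Real.sqrt_le_left (by positivity)]
    have : p ≤ (2 * lam) ^ 2 := by nlinarith
    exact_mod_cast this
  have hsp : Real.sqrt p * Real.sqrt p = p := Real.mul_self_sqrt (by positivity)
  have hs1 : (1 : ℝ) ≤ Real.sqrt p := by
    rw [Real.one_le_sqrt]; exact_mod_cast hp.one_le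
  have hlpos : (0 : ℝ) < 2 * lam := by
    have : 0 < lam := by omega
    positivity
  have hdR : (1 : ℝ) ≤ d := by exact_mod_cast hd1
  rw [← mul_le_mul_iff_left₀ hlpos]
  have h5 : ((p / 2 : ℕ) : ℝ) * d ≤ p * d := by gcongr
  have h6 : (p : ℝ) ≤ Real.sqrt p * (2 * lam) := by nlinarith
  have h7 : (9 * (d+1) : ℝ) * p ≤ 9 * (d + 1) * (Real.sqrt p * (2 * lam)) := by gcongr
  have h8 : (d : ℝ) * (2 * lam) ≤ (d + 1) * Real.sqrt p * (2 * lam) := by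
    gcongr
    nlinarith
  nlinarith

lemma charsum0 {p : ℕ} [Fact p.Prime] (hp2 : p ≠ 2) {ι : Type*} [Fintype ι] [Nonempty ι] (b : ι → ZMod p)
    (hb : Function.Injective b) (hb0 : ∀ i, b i ≠ 0) (hpl : 256 * (Fintype.card ι + 1) ^ 2 ≤ p) :
    |((∑ x : ZMod p, quadraticChar (ZMod p) (∏ i, (x + b i)) : ℤ) : ℝ)| ≤ 21 * (Fintype.card ι + 1) * Real.sqrt p := by
  classical
  have hp : p.Prime := Fact.out
  have hch : ringChar (ZMod p) ≠ 2 := by rwa [ZMod.ringChar_zmod_n]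
  set d := Fintype.card ι with hd
  let g : ZMod p → ZMod p := fun x => ∏ i, (x + b i)
  let Zp := Finset.univ.filter fun x => quadraticChar (ZMod p) (g x) = 1
  let Zm := Finset.univ.filter fun x => quadraticChar (ZMod p) (g x) = -1
  let Z0 := Finset.univ.filter fun x => g x = 0
  have hpow : ∀ x, ((quadraticChar (ZMod p) (g x) : ℤ) : ZMod p) = (g x) ^ (p / 2) := by
    intro x
    have := quadraticChar_eq_pow_of_char_ne_two' hch (g x)
    rwa [ZMod.card] at this
  have h1 := Z_bound hp2 b hb hb0 hpl 1 Zp (by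
    intro x hx
    have := hpow x
    rw [(Finset.mem_filter.mp hx).2] at this
    simpa [g] using this.symm)
  have h2 := Z_bound hp2 b hb hb0 hpl (-1) Zm (by
    intro x hx
    have := hpow x
    rw [(Finset.mem_filter.mp hx).2] at this
    simpa [g] using this.symm)
  have h0 : Z0.card ≤ d := by
    have : Z0 ⊆ Finset.univ.image fun i => - b i := by
      intro x hx
      have := (Finset.mem_filter.mp hx).2
      obtain ⟨i, -, hi⟩ := Finset.prod_eq_zero_iff.mp this
      exact Finset.mem_image.mpr ⟨i, Finset.mem_univ _, by linear_combination -hi⟩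
    exact (Finset.card_le_card this).trans (Finset.card_image_le.trans (by simp [hd]))
  have hsplit : ∀ x, quadraticChar (ZMod p) (g x) = (if quadraticChar (ZMod p) (g x) = 1 then 1 else 0) - (if quadraticChar (ZMod p) (g x) = -1 then 1 else 0) ∧
     (1:ℤ) = (if quadraticChar (ZMod p) (g x) = 1 then 1 else 0) + (if quadraticChar (ZMod p) (g x) = -1 then 1 else 0) + (if g x = 0 then 1 else 0) := by
    intro x
    by_cases hx : g x = 0
    · simp [hx]
    · rcases quadraticChar_dichotomy hx with h | h <;> simp [h, hx]
  have hsum : (∑ x : ZMod p, quadraticChar (ZMod p) (g x) : ℤ) = Zp.card - Zm.card := by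
    rw [Finset.sum_congr rfl fun x _ => (hsplit x).1, Finset.sum_sub_distrib]
    simp [Zp, Zm]
  have hcnt : (p : ℤ) = Zp.card + Zm.card + Z0.card := by
    have : (p : ℤ) = ∑ x : ZMod p, 1 := by
      rw [Finset.sum_const, Finset.card_univ, ZMod.card]; simp
    rw [this, Finset.sum_congr rfl fun x _ => (hsplit x).2, Finset.sum_add_distrib, Finset.sum_add_distrib]
    simp [Zp, Zm, Z0]
  have hcntR : (p : ℝ) = Zp.card + Zm.card + Z0.card := by exact_mod_cast hcnt
  have h0R : (Z0.card : ℝ) ≤ d := by exact_mod_cast h0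
  have h0' : (0 : ℝ) ≤ Z0.card := Nat.cast_nonneg _
  have hs1 : (1 : ℝ) ≤ Real.sqrt p := by
    rw [Real.one_le_sqrt]; exact_mod_cast hp.one_le
  have h8 : (d : ℝ) ≤ (d + 1) * Real.sqrt p := by
    have : (0:ℝ) ≤ d := by positivity
    nlinarith
  change |((∑ x : ZMod p, quadraticChar (ZMod p) (g x) : ℤ) : ℝ)| ≤ _
  rw [hsum]
  push_cast
  rw [abs_le]
  constructor <;> nlinarith

lemma charsum {p : ℕ} [Fact p.Prime] (hp2 : p ≠ 2) {ι : Type*} [Fintype ι] [Nonempty ι] (b : ι → ZMod p)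
    (hb : Function.Injective b) :
    |((∑ x : ZMod p, quadraticChar (ZMod p) (∏ i, (x + b i)) : ℤ) : ℝ)| ≤ 21 * (Fintype.card ι + 1) * Real.sqrt p := by
  classical
  have hp : p.Prime := Fact.out
  by_cases hpl : 256 * (Fintype.card ι + 1) ^ 2 ≤ p
  · obtain ⟨c, hc⟩ : ∃ c, c ∉ Finset.univ.image fun i => - b i := by
      by_contra! hcon
      have h1 : Fintype.card (ZMod p) ≤ (Finset.univ.image fun i => - b i).card :=
        Finset.card_le_card fun x _ => hcon x
      have h2 : (Finset.univ.image fun i => - b i).card ≤ Fintype.card ι := Finset.card_image_le.trans (by simp)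
      rw [ZMod.card] at h1
      nlinarith
    have := charsum0 hp2 (fun i => c + b i) (fun i j h => hb (by simpa using h)) (by
      intro i hi
      apply hc
      exact Finset.mem_image.mpr ⟨i, Finset.mem_univ _, by linear_combination -hi⟩) hpl
    rw [← Equiv.sum_comp (Equiv.addRight c)]
    simpa [add_assoc] using this
  · have h1 : |(∑ x : ZMod p, quadraticChar (ZMod p) (∏ i, (x + b i)) : ℤ)| ≤ p := by
      refine (Finset.abs_sum_le_sum_abs _ _).trans ?_
      have : (p : ℤ) = ∑ x : ZMod p, 1 := by
        rw [Finset.sum_const, Finset.card_univ, ZMod.card]; simp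
      rw [this]
      refine Finset.sum_le_sum fun x _ => ?_
      by_cases hx : (∏ i, (x + b i)) = 0
      · simp [hx]
      · rcases quadraticChar_dichotomy hx with h | h <;> simp [h]
    have h2 : |((∑ x : ZMod p, quadraticChar (ZMod p) (∏ i, (x + b i)) : ℤ) : ℝ)| ≤ p := by
      exact_mod_cast h1
    have hsp : Real.sqrt p * Real.sqrt p = p := Real.mul_self_sqrt (by positivity)
    have h3 : Real.sqrt p ≤ 16 * (Fintype.card ι + 1) := by
      rw [Real.sqrt_le_left (by positivity)]
      have : p ≤ (16 * (Fintype.card ι + 1)) ^ 2 := by nlinarith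
      exact_mod_cast this
    have h4 : 0 ≤ Real.sqrt p := Real.sqrt_nonneg _
    nlinarith

end

section

abbrev VV (k : ℕ) (R : Type) : Type := R × (Fin k → R)

def Lf {k : ℕ} {R : Type} [AddCommMonoid R] (ω : Fin k → Bool) (v : VV k R) : R :=
  v.1 + ∑ i, if ω i then v.2 i else 0

lemma Lf_add {k : ℕ} {R : Type} [AddCommMonoid R] (ω : Fin k → Bool) (v w : VV k R) :
    Lf ω (v + w) = Lf ω v + Lf ω w := by
  simp only [Lf, Prod.fst_add, Prod.snd_add, Pi.add_apply]
  rw [add_add_add_comm, ← Finset.sum_add_distrib]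
  congr 1
  refine Finset.sum_congr rfl fun i _ => ?_
  split_ifs <;> simp

lemma Lf_sub {k : ℕ} {R : Type} [AddCommGroup R] (ω : Fin k → Bool) (v w : VV k R) :
    Lf ω (v - w) = Lf ω v - Lf ω w := by
  have := Lf_add ω (v - w) w
  rw [sub_add_cancel] at this
  rw [this]; simp

def vcast {k : ℕ} (m : ℕ) (v : VV k ℤ) : VV k (ZMod m) := ((v.1 : ZMod m), fun i => (v.2 i : ZMod m))

def vval {k : ℕ} {m : ℕ} (v : VV k (ZMod m)) : VV k ℤ := ((v.1.val : ℤ), fun i => ((v.2 i).val : ℤ))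

lemma vcast_vval {k m : ℕ} [NeZero m] (v : VV k (ZMod m)) : vcast m (vval v) = v := by
  ext <;> simp [vcast, vval]

lemma vcast_add {k m : ℕ} (v w : VV k ℤ) : vcast m (v + w) = vcast m v + vcast m w := by
  ext <;> simp [vcast]

lemma Lf_vcast {k m : ℕ} (ω : Fin k → Bool) (v : VV k ℤ) : Lf ω (vcast m v) = ((Lf ω v : ℤ) : ZMod m) := by
  simp only [Lf, vcast]
  push_cast
  rfl

noncomputable def ibox (k m : ℕ) : Finset (VV k ℤ) :=
  (Finset.Ico (0 : ℤ) m) ×ˢ Fintype.piFinset fun _ => Finset.Ico (0 : ℤ) m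

lemma mem_ibox {k m : ℕ} {v : VV k ℤ} : v ∈ ibox k m ↔ (0 ≤ v.1 ∧ v.1 < m) ∧ ∀ i, 0 ≤ v.2 i ∧ v.2 i < m := by
  simp [ibox, Fintype.mem_piFinset]

noncomputable def mean {k : ℕ} (m : ℕ) (G : VV k ℤ → ℝ) : ℝ := (∑ v ∈ ibox k m, G v) / (m : ℝ) ^ (k + 1)

def Per {k : ℕ} (m : ℕ) (G : VV k ℤ → ℝ) : Prop := ∀ v w, vcast m v = vcast m w → G v = G w

lemma sum_ibox {k m : ℕ} [NeZero m] (G : VV k ℤ → ℝ) :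
    ∑ v ∈ ibox k m, G v = ∑ s : VV k (ZMod m), G (vval s) := by
  symm
  refine Finset.sum_bij' (fun s _ => vval s) (fun v _ => vcast m v) ?_ ?_ ?_ ?_ ?_
  · intro s _
    rw [mem_ibox]
    simp only [vval]
    refine ⟨⟨by positivity, by exact_mod_cast ZMod.val_lt _⟩, fun i => ⟨by positivity, by exact_mod_cast ZMod.val_lt _⟩⟩
  · intro v _; simp
  · intro s _; exact vcast_vval s
  · intro v hv
    rw [mem_ibox] at hv
    ext
    · simp only [vcast, vval, ZMod.val_intCast]
      exact Int.emod_eq_of_lt hv.1.1 hv.1.2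
    · simp only [vcast, vval, ZMod.val_intCast]
      exact Int.emod_eq_of_lt (hv.2 _).1 (hv.2 _).2
  · intro _ _; rfl

lemma mean_eq {k m : ℕ} [NeZero m] (G : VV k ℤ → ℝ) :
    mean m G = (∑ s : VV k (ZMod m), G (vval s)) / (m : ℝ) ^ (k + 1) := by
  rw [mean, sum_ibox]

lemma card_VV {k m : ℕ} [NeZero m] : Fintype.card (VV k (ZMod m)) = m ^ (k + 1) := by
  simp [ZMod.card, pow_succ, mul_comm]

lemma card_ibox {k m : ℕ} : (ibox k m).card = m ^ (k+1) := by
  simp [ibox, pow_succ, mul_comm]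

lemma mean_nonneg {k m : ℕ} {G : VV k ℤ → ℝ} (h : ∀ v, 0 ≤ G v) : 0 ≤ mean m G :=
  div_nonneg (Finset.sum_nonneg fun v _ => h v) (by positivity)

lemma mean_mono {k m : ℕ} {G H : VV k ℤ → ℝ} (h : ∀ v, G v ≤ H v) : mean m G ≤ mean m H := by
  unfold mean
  gcongr with v
  exact h v

lemma abs_mean_le {k m : ℕ} (hm : m ≠ 0) {G : VV k ℤ → ℝ} (h : ∀ v, |G v| ≤ 1) : |mean m G| ≤ 1 := by
  unfold mean
  rw [abs_div, abs_of_nonneg (by positivity : (0:ℝ) ≤ (m:ℝ)^(k+1))]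
  rw [div_le_one (by positivity)]
  refine (Finset.abs_sum_le_sum_abs _ _).trans ((Finset.sum_le_sum fun v _ => h v).trans ?_)
  simp [card_ibox]

lemma mean_mul {k a b : ℕ} (ha : a ≠ 0) (hb : b ≠ 0) (hab : a.Coprime b) {G H : VV k ℤ → ℝ}
    (hG : Per a G) (hH : Per b H) : mean (a * b) (fun v => G v * H v) = mean a G * mean b H := by
  have : NeZero a := ⟨ha⟩
  have : NeZero b := ⟨hb⟩
  have : NeZero (a * b) := ⟨mul_ne_zero ha hb⟩
  rw [mean_eq, mean_eq, mean_eq]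
  let e := ZMod.chineseRemainder hab
  let E : VV k (ZMod (a * b)) ≃ VV k (ZMod a) × VV k (ZMod b) :=
    { toFun := fun v => (((e v.1).1, fun i => (e (v.2 i)).1), ((e v.1).2, fun i => (e (v.2 i)).2))
      invFun := fun w => (e.symm (w.1.1, w.2.1), fun i => e.symm (w.1.2 i, w.2.2 i))
      left_inv := by intro v; ext <;> simp
      right_inv := by intro v; ext <;> simp }
  have h1 : ∀ s : VV k (ZMod (a * b)), G (vval s) = G (vval (E s).1) := by
    intro s
    apply hG
    rw [vcast_vval]
    have key : ∀ x : ZMod (a * b), ((x.val : ℤ) : ZMod a) = (e x).1 := by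
      intro x
      have : e x = e (((x.val : ℤ) : ZMod (a * b))) := by simp
      rw [this, map_intCast]; rfl
    ext <;> simp only [vcast, vval, key, E, Equiv.coe_fn_mk]
  have h2 : ∀ s : VV k (ZMod (a * b)), H (vval s) = H (vval (E s).2) := by
    intro s
    apply hH
    rw [vcast_vval]
    have key : ∀ x : ZMod (a * b), ((x.val : ℤ) : ZMod b) = (e x).2 := by
      intro x
      have : e x = e (((x.val : ℤ) : ZMod (a * b))) := by simp
      rw [this, map_intCast]; rfl
    ext <;> simp only [vcast, vval, key, E, Equiv.coe_fn_mk]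
  have h3 : ∑ s : VV k (ZMod (a * b)), G (vval s) * H (vval s) =
      (∑ s : VV k (ZMod a), G (vval s)) * ∑ s : VV k (ZMod b), H (vval s) := by
    rw [Finset.sum_congr rfl fun s _ => by rw [h1 s, h2 s]]
    rw [Equiv.sum_comp E (fun w => G (vval w.1) * H (vval w.2)), Finset.sum_mul_sum, ← Finset.univ_product_univ, Finset.sum_product]
  rw [h3]
  push_cast
  rw [mul_pow]
  field_simp

lemma Per_mul {k m n : ℕ} {G H : VV k ℤ → ℝ} (hG : Per m G) (hH : Per n H) : Per (m * n) (fun v => G v * H v) := by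
  have key : ∀ (c : ℕ), c ∣ m * n → ∀ v w : VV k ℤ, vcast (m * n) v = vcast (m * n) w → vcast c v = vcast c w := by
    intro c hc v w h
    have h1 : ∀ x y : ℤ, ((x : ZMod (m * n)) = y) → (x : ZMod c) = y := by
      intro x y hxy
      have := congrArg (ZMod.castHom hc (ZMod c)) hxy
      simpa using this
    ext
    · exact h1 _ _ (congrArg Prod.fst h)
    · exact h1 _ _ (congrFun (congrArg Prod.snd h) _)
  intro v w h
  show G v * H v = G w * H w
  rw [hG v w (key m (dvd_mul_right _ _) v w h), hH v w (key n (dvd_mul_left _ _) v w h)]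

lemma Per_prod {k : ℕ} (S : Finset ℕ) (J : ℕ → VV k ℤ → ℝ) (hJ : ∀ p ∈ S, Per p (J p)) :
    Per (∏ p ∈ S, p) (fun v => ∏ p ∈ S, J p v) := by
  classical
  induction S using Finset.induction_on with
  | empty => intro v w _; simp
  | insert a S ha ih =>
    simp only [Finset.prod_insert ha]
    exact Per_mul (hJ a (by simp)) (ih fun p hp => hJ p (by simp [hp]))

lemma mean_prod {k : ℕ} (S : Finset ℕ) (J : ℕ → VV k ℤ → ℝ) (hJ : ∀ p ∈ S, Per p (J p)) (hS : ∀ p ∈ S, p.Prime) :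
    mean (∏ p ∈ S, p) (fun v => ∏ p ∈ S, J p v) = ∏ p ∈ S, mean p (J p) := by
  classical
  induction S using Finset.induction_on with
  | empty => simp [mean, card_ibox]
  | insert a S ha ih =>
    simp only [Finset.prod_insert ha]
    rw [mean_mul (hS a (by simp)).ne_zero (Finset.prod_ne_zero_iff.mpr fun p hp => (hS p (by simp [hp])).ne_zero)
      _ (hJ a (by simp)) (Per_prod S J fun p hp => hJ p (by simp [hp])),
      ih (fun p hp => hJ p (by simp [hp])) (fun p hp => hS p (by simp [hp]))]
    apply Nat.Coprime.prod_right
    intro p hp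
    exact (Nat.coprime_primes (hS a (by simp)) (hS p (by simp [hp]))).mpr (by rintro rfl; exact ha hp)

lemma sum_shift {k m : ℕ} (hm : m ≠ 0) {G : VV k ℤ → ℝ} (hG : Per m G) (v : VV k ℤ) :
    ∑ s ∈ ibox k m, G (v + s) = (m : ℝ) ^ (k+1) * mean m G := by
  have : NeZero m := ⟨hm⟩
  rw [mean_eq, sum_ibox (fun s => G (v + s))]
  have : (m : ℝ) ^ (k+1) ≠ 0 := by positivity
  field_simp
  rw [← Equiv.sum_comp (Equiv.addLeft (vcast m v)) (fun s => G (vval s))]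
  refine Finset.sum_congr rfl fun s _ => ?_
  apply hG
  rw [vcast_vval, vcast_add, vcast_vval]; rfl

end

section

lemma count_shift {p : ℕ} [Fact p.Prime] {V : Type*} [Fintype V] [AddCommGroup V] (T : V → Prop) [DecidablePred T]
    (φ : V → ZMod p) (u : ZMod p → V) (c : ZMod p) (hc : c ≠ 0)
    (hT : ∀ v s, T (v + u s) ↔ T v) (hφ : ∀ v s, φ (v + u s) = φ v + s * c) :
    p * (Finset.univ.filter fun v => T v ∧ φ v = 0).card = (Finset.univ.filter T).card := by
  have h1 : ∀ s : ZMod p, (Finset.univ.filter fun v => T v ∧ φ v = 0).card =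
      ∑ v : V, if T v ∧ φ v + s * c = 0 then 1 else 0 := by
    intro s
    rw [Finset.card_filter, ← Equiv.sum_comp (Equiv.addRight (u s))]
    refine Finset.sum_congr rfl fun v _ => ?_
    simp only [Equiv.coe_addRight, hT, hφ]
  have h2 : ∑ s : ZMod p, (Finset.univ.filter fun v => T v ∧ φ v = 0).card =
      p * (Finset.univ.filter fun v => T v ∧ φ v = 0).card := by
    rw [Finset.sum_const, Finset.card_univ, ZMod.card, smul_eq_mul]
  rw [← h2, Finset.sum_congr rfl fun s _ => h1 s, Finset.sum_comm, Finset.card_filter]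
  refine Finset.sum_congr rfl fun v _ => ?_
  by_cases hv : T v
  · simp only [hv, true_and, if_true]
    rw [← Finset.card_filter, Finset.card_eq_one]
    refine ⟨-(φ v) / c, ?_⟩
    ext s
    simp only [Finset.mem_filter, Finset.mem_univ, true_and, Finset.mem_singleton]
    rw [eq_div_iff hc]
    constructor <;> intro h <;> linear_combination h
  · simp [hv]

lemma Lf_shift1 {k : ℕ} {R : Type} [AddCommMonoid R] (ω : Fin k → Bool) (v : VV k R) (s : R) :
    Lf ω (v + (s, 0)) = Lf ω v + s := by
  rw [Lf_add]; simp [Lf]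

lemma Lf_shift2 {k : ℕ} {R : Type} [AddCommMonoid R] (ω : Fin k → Bool) (v : VV k R) (i : Fin k) (s : R) :
    Lf ω (v + (0, Pi.single i s)) = Lf ω v + if ω i then s else 0 := by
  rw [Lf_add]; congr 1
  simp only [Lf, zero_add]
  rw [Finset.sum_eq_single i]
  · simp
  · intro j _ hj; simp [Pi.single_eq_of_ne hj]
  · simp

lemma count_one {k p : ℕ} [Fact p.Prime] (ω : Fin k → Bool) :
    p * (Finset.univ.filter fun v : VV k (ZMod p) => Lf ω v = 0).card = p ^ (k+1) := by
  have := count_shift (p := p) (V := VV k (ZMod p)) (fun _ => True) (fun v => Lf ω v) (fun s => (s, 0)) 1 one_ne_zero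
    (fun _ _ => Iff.rfl) (fun v s => by rw [Lf_shift1, mul_one])
  simp only [true_and] at this
  rw [this, Finset.filter_true, Finset.card_univ, card_VV]

lemma count_two {k p : ℕ} [Fact p.Prime] (ω ω' : Fin k → Bool) (h : ω ≠ ω') :
    p ^ 2 * (Finset.univ.filter fun v : VV k (ZMod p) => Lf ω v = 0 ∧ Lf ω' v = 0).card = p ^ (k+1) := by
  have key : ∀ (ω ω' : Fin k → Bool) (i : Fin k), ω i = false → ω' i = true →
      p ^ 2 * (Finset.univ.filter fun v : VV k (ZMod p) => Lf ω v = 0 ∧ Lf ω' v = 0).card = p ^ (k+1) := by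
    intro ω ω' i h1 h2
    have := count_shift (p := p) (V := VV k (ZMod p)) (fun v => Lf ω v = 0) (fun v => Lf ω' v) (fun s => (0, Pi.single i s)) 1 one_ne_zero
      (fun v s => by rw [Lf_shift2, h1]; simp) (fun v s => by rw [Lf_shift2, h2]; simp)
    rw [sq, mul_assoc, this, count_one]
  obtain ⟨i, hi⟩ := Function.ne_iff.mp h
  cases h1 : ω i <;> cases h2 : ω' i
  · simp_all
  · exact key ω ω' i h1 h2
  · have := key ω' ω i h2 h1
    rw [← this]; congr 2; ext v; simp [and_comm]
  · simp_all

lemma mean_vcast {k m : ℕ} [NeZero m] (g : VV k (ZMod m) → ℝ) :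
    mean m (fun v => g (vcast m v)) = (∑ s, g s) / (m : ℝ) ^ (k+1) := by
  rw [mean_eq]; simp only [vcast_vval]

noncomputable def Jf {k : ℕ} (p : ℕ) (v : VV k ℤ) : ℝ := if (p : ℤ) ∣ ∏ ω : Fin k → Bool, Lf ω v then 1 else 0

noncomputable def Jz {k : ℕ} (p : ℕ) (v : VV k (ZMod p)) : ℝ := if ∏ ω : Fin k → Bool, Lf ω v = 0 then 1 else 0

lemma Jf_eq {k p : ℕ} (v : VV k ℤ) : Jf p v = Jz p (vcast p v) := by
  unfold Jf Jz
  congr 1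
  rw [← ZMod.intCast_zmod_eq_zero_iff_dvd |> fun _ => ZMod.intCast_zmod_eq_zero_iff_dvd _ p]
  simp [Lf_vcast]

lemma Jf_per {k p : ℕ} : Per p (Jf (k := k) p) := by
  intro v w h
  rw [Jf_eq, Jf_eq, h]

lemma Jf_nonneg {k p : ℕ} (v : VV k ℤ) : 0 ≤ Jf p v := by unfold Jf; split_ifs <;> norm_num
lemma Jf_le_one {k p : ℕ} (v : VV k ℤ) : Jf p v ≤ 1 := by unfold Jf; split_ifs <;> norm_num

noncomputable def tz {k : ℕ} (p : ℕ) (v : VV k (ZMod p)) : ℝ := ∑ ω : Fin k → Bool, if Lf ω v = 0 then 1 else 0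

lemma Jz_le {k p : ℕ} [Fact p.Prime] (v : VV k (ZMod p)) : Jz p v ≤ tz p v := by
  unfold Jz tz
  split_ifs with h
  · obtain ⟨ω, _, hω⟩ := Finset.prod_eq_zero_iff.mp h
    have := Finset.single_le_sum (f := fun ω : Fin k → Bool => if Lf ω v = 0 then (1:ℝ) else 0)
      (fun i _ => by positivity) (Finset.mem_univ ω)
    simpa [hω] using this
  · exact Finset.sum_nonneg fun i _ => by positivity

lemma Jz_ge {k p : ℕ} [Fact p.Prime] (v : VV k (ZMod p)) : 2 * tz p v - tz p v ^ 2 ≤ Jz p v := by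
  have ht : tz p v = ((Finset.univ.filter fun ω : Fin k → Bool => Lf ω v = 0).card : ℝ) := by
    simp [tz]
  unfold Jz
  split_ifs with h
  · nlinarith [sq_nonneg (tz p v - 1)]
  · have : tz p v = 0 := by
      rw [ht]
      have h2 := fun ω => Finset.prod_ne_zero_iff.mp h ω (Finset.mem_univ _)
      simp [h2]
    rw [this]; norm_num

lemma sum_tz {k p : ℕ} [Fact p.Prime] : (p : ℝ) * ∑ v : VV k (ZMod p), tz p v = 2 ^ k * (p:ℝ) ^ (k+1) := by
  unfold tz
  rw [Finset.sum_comm, Finset.mul_sum]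
  have : ∀ ω : Fin k → Bool, (p : ℝ) * ∑ v : VV k (ZMod p), (if Lf ω v = 0 then (1:ℝ) else 0) = (p:ℝ) ^ (k+1) := by
    intro ω
    have := count_one (p := p) ω
    rw [Finset.sum_boole]
    exact_mod_cast this
  rw [Finset.sum_congr rfl fun ω _ => this ω]
  simp

lemma sum_tz2 {k p : ℕ} [Fact p.Prime] :
    (p : ℝ) ^ 2 * ∑ v : VV k (ZMod p), tz p v ^ 2 ≤ (2 ^ k * p + (2 ^ k) ^ 2) * (p:ℝ) ^ (k+1) := by
  have hp : (0:ℝ) < p := by exact_mod_cast (Fact.out : p.Prime).pos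
  have h1 : ∑ v : VV k (ZMod p), tz p v ^ 2 = ∑ ω : Fin k → Bool, ∑ ω' : Fin k → Bool,
      ∑ v : VV k (ZMod p), if Lf ω v = 0 ∧ Lf ω' v = 0 then (1:ℝ) else 0 := by
    unfold tz
    rw [Finset.sum_congr rfl fun ω _ => Finset.sum_comm, Finset.sum_comm]
    refine Finset.sum_congr rfl fun v _ => ?_
    rw [sq, Finset.sum_mul_sum]
    refine Finset.sum_congr rfl fun ω _ => Finset.sum_congr rfl fun ω' _ => ?_
    by_cases h1 : Lf ω v = 0 <;> by_cases h2 : Lf ω' v = 0 <;> simp [h1, h2]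
  have h2 : ∀ ω ω' : Fin k → Bool, (p:ℝ) ^ 2 * ∑ v : VV k (ZMod p), (if Lf ω v = 0 ∧ Lf ω' v = 0 then (1:ℝ) else 0)
      ≤ (if ω = ω' then p * (p:ℝ)^(k+1) else 0) + (p:ℝ)^(k+1) := by
    intro ω ω'
    rw [Finset.sum_boole]
    by_cases h : ω = ω'
    · subst h
      have := count_one (p := p) ω
      have h3 : (p : ℝ) * ((Finset.univ.filter fun v : VV k (ZMod p) => Lf ω v = 0).card : ℝ) = (p:ℝ) ^ (k+1) := by
        exact_mod_cast this
      simp only [and_self, if_true]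
      rw [sq, mul_assoc, h3]
      have : (0:ℝ) ≤ (p:ℝ)^(k+1) := by positivity
      linarith
    · have := count_two (p := p) ω ω' h
      simp only [h, if_false, zero_add]
      apply le_of_eq
      exact_mod_cast this
  rw [h1, Finset.mul_sum]
  calc _ ≤ ∑ ω : Fin k → Bool, ∑ ω' : Fin k → Bool, ((if ω = ω' then p * (p:ℝ)^(k+1) else 0) + (p:ℝ)^(k+1)) := by
        refine Finset.sum_le_sum fun ω _ => ?_
        rw [Finset.mul_sum]
        exact Finset.sum_le_sum fun ω' _ => h2 ω ω'
    _ = _ := by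
        simp [Finset.sum_add_distrib]
        ring

lemma mean_J_le {k p : ℕ} (hp : p.Prime) : mean p (Jf (k := k) p) ≤ 2 ^ k / p := by
  have : Fact p.Prime := ⟨hp⟩
  have h := mean_vcast (k := k) (m := p) (Jz p)
  simp only [← Jf_eq] at h
  change mean p (Jf (k := k) p) = _ at h
  have hp : (0:ℝ) < p := by exact_mod_cast (Fact.out : p.Prime).pos
  rw [h, div_le_div_iff₀ (by positivity) hp, ← sum_tz, mul_comm]
  gcongr with v
  exact Jz_le v

lemma mean_J_ge {k p : ℕ} (hp : p.Prime) : 2 ^ k / p - (2 ^ k) ^ 2 / p ^ 2 ≤ mean p (Jf (k := k) p) := by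
  have : Fact p.Prime := ⟨hp⟩
  have h := mean_vcast (k := k) (m := p) (Jz p)
  simp only [← Jf_eq] at h
  change mean p (Jf (k := k) p) = _ at h
  have hp : (0:ℝ) < p := by exact_mod_cast (Fact.out : p.Prime).pos
  have h1 : ∑ v : VV k (ZMod p), (2 * tz p v - tz p v ^ 2) ≤ ∑ v : VV k (ZMod p), Jz p v :=
    Finset.sum_le_sum fun v _ => Jz_ge v
  rw [Finset.sum_sub_distrib, ← Finset.mul_sum] at h1
  have h2 := sum_tz (k := k) (p := p)
  have h3 := sum_tz2 (k := k) (p := p)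
  rw [h, le_div_iff₀ (by positivity)]
  have h4 : (2 ^ k / (p:ℝ) - (2 ^ k) ^ 2 / p ^ 2) = (2 ^ k * p - (2 ^ k)^2) / p ^ 2 := by
    field_simp
  rw [h4, div_mul_eq_mul_div, div_le_iff₀ (by positivity)]
  have h5 : (p:ℝ)^2 * (2 * ∑ v : VV k (ZMod p), tz p v - ∑ v : VV k (ZMod p), tz p v ^ 2) ≤ (p:ℝ)^2 * ∑ v : VV k (ZMod p), Jz p v := by
    gcongr
  have h6 : (p:ℝ)^2 * (2 * ∑ v : VV k (ZMod p), tz p v) = 2 * p * (2 ^ k * (p:ℝ) ^ (k+1)) := by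
    rw [← h2]; ring
  nlinarith

lemma local_factor {k p : ℕ} (hp : p.Prime) :
    ((p:ℝ) / (p - 1)) ^ (2 ^ k) * (1 - mean p (Jf (k := k) p)) ≤ 1 + 2 ^ (2 ^ k) * (2 ^ k) ^ 2 / p ^ 2 := by
  have h2 : (2:ℝ) ≤ p := by exact_mod_cast hp.two_le
  have h := mean_J_ge (k := k) hp
  set K := 2 ^ k with hK
  have hKr : ((2:ℝ) ^ k) = (K : ℝ) := by simp [hK]
  rw [hKr] at h ⊢
  have hb : 1 - (K:ℝ) / p ≤ (1 - 1 / (p:ℝ)) ^ K := by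
    have hp1 : 1 / (p:ℝ) ≤ 1 := by rw [div_le_one (by linarith)]; linarith
    have := one_add_mul_le_pow (a := -(1/(p:ℝ))) (by linarith) K
    calc 1 - (K:ℝ) / p = 1 + K * (-(1/(p:ℝ))) := by ring
      _ ≤ _ := this
      _ = _ := by ring
  have hx : ((p:ℝ) / (p - 1)) * (1 - 1 / p) = 1 := by
    have : (p:ℝ) - 1 ≠ 0 := by linarith
    have : (p:ℝ) ≠ 0 := by linarith
    field_simp
  have hle : (p:ℝ) / (p - 1) ≤ 2 := by
    rw [div_le_iff₀ (by linarith)]; linarith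
  have h0 : 0 ≤ (p:ℝ) / (p - 1) := div_nonneg (by linarith) (by linarith)
  calc ((p:ℝ) / (p - 1)) ^ K * (1 - mean p (Jf (k := k) p))
      ≤ ((p:ℝ) / (p - 1)) ^ K * ((1 - 1 / (p:ℝ)) ^ K + (K:ℝ)^2 / p^2) := by
        gcongr; linarith
    _ = 1 + ((p:ℝ) / (p - 1)) ^ K * ((K:ℝ)^2 / p^2) := by
        rw [mul_add, ← mul_pow, hx, one_pow]
    _ ≤ 1 + 2 ^ K * ((K:ℝ)^2 / p^2) := by gcongr
    _ = _ := by ring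

noncomputable def bf {k p : ℕ} (h : Fin k → ZMod p) (ω : Fin k → Bool) : ZMod p := ∑ i, if ω i then h i else 0

lemma count_bad {k p : ℕ} [Fact p.Prime] (ω ω' : Fin k → Bool) (hne : ω ≠ ω') :
    p * (Finset.univ.filter fun h : Fin k → ZMod p => bf h ω - bf h ω' = 0).card = p ^ k := by
  obtain ⟨i, hi⟩ := Function.ne_iff.mp hne
  have hb : ∀ (ω : Fin k → Bool) (h : Fin k → ZMod p) s, bf (h + Pi.single i s) ω = bf h ω + if ω i then s else 0 := by
    intro ω h s
    have := Lf_shift2 ω ((0 : ZMod p), h) i s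
    simpa [Lf, bf] using this
  have := count_shift (p := p) (V := Fin k → ZMod p) (fun _ => True) (fun h => bf h ω - bf h ω') (fun s => Pi.single i s)
    (if ω i then 1 else -1) (by split_ifs <;> simp)
    (fun _ _ => Iff.rfl) (fun v s => by
      rw [hb, hb]
      cases h1 : ω i <;> cases h2 : ω' i
      · simp_all
      · simp; ring
      · simp; ring
      · simp_all)
  simp only [true_and] at this
  rw [this, Finset.filter_true, Finset.card_univ]
  simp [ZMod.card]

lemma quad_mean {k p : ℕ} [Fact p.Prime] (hp2 : p ≠ 2) :
    |mean p (fun v : VV k ℤ => ∏ ω : Fin k → Bool, ((quadraticChar (ZMod p) ((Lf ω v : ℤ) : ZMod p) : ℤ) : ℝ))| ≤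
      (21 * (2 ^ k + 1) + (2 ^ k) ^ 2) / Real.sqrt p := by
  classical
  have h := mean_vcast (k := k) (m := p) (fun v => ∏ ω : Fin k → Bool, ((quadraticChar (ZMod p) (Lf ω v) : ℤ) : ℝ))
  simp only [Lf_vcast] at h
  have hp : (0:ℝ) < p := by exact_mod_cast (Fact.out : p.Prime).pos
  have hsp : Real.sqrt p * Real.sqrt p = p := Real.mul_self_sqrt hp.le
  have hs0 : 0 < Real.sqrt p := Real.sqrt_pos.mpr hp
  rw [h, abs_div, abs_of_pos (by positivity : (0:ℝ) < (p:ℝ)^(k+1)), div_le_div_iff₀ (by positivity) hs0]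
  rw [← Finset.univ_product_univ, Finset.sum_product_right]
  let Bd : Finset (Fin k → ZMod p) := Finset.univ.filter fun h => ¬ Function.Injective (bf h)
  have hBd : (p:ℝ) * Bd.card ≤ (2 ^ k) ^ 2 * (p:ℝ) ^ k := by
    have hsub : Bd ⊆ (Finset.univ.filter fun w : (Fin k → Bool) × (Fin k → Bool) => w.1 ≠ w.2).biUnion
        fun w => Finset.univ.filter fun h : Fin k → ZMod p => bf h w.1 - bf h w.2 = 0 := by
      intro h hh
      have := (Finset.mem_filter.mp hh).2
      rw [Function.Injective] at this
      push Not at this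
      obtain ⟨ω, ω', h1, h2⟩ := this
      rw [Finset.mem_biUnion]
      exact ⟨(ω, ω'), by simpa using h2, by simp [h1]⟩
    have h1 : Bd.card ≤ _ := (Finset.card_le_card hsub).trans Finset.card_biUnion_le
    have h2 : p * Bd.card ≤ ∑ w ∈ (Finset.univ.filter fun w : (Fin k → Bool) × (Fin k → Bool) => w.1 ≠ w.2), p ^ k := by
      refine (Nat.mul_le_mul le_rfl h1).trans ?_
      rw [Finset.mul_sum]
      refine Finset.sum_le_sum fun w hw => ?_
      rw [count_bad w.1 w.2 (Finset.mem_filter.mp hw).2]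
    have h3 : p * Bd.card ≤ (2 ^ k) ^ 2 * p ^ k := by
      refine h2.trans ?_
      rw [Finset.sum_const, smul_eq_mul]
      gcongr
      refine (Finset.card_filter_le _ _).trans ?_
      simp [sq]
    exact_mod_cast h3
  have hinner : ∀ hh : Fin k → ZMod p, |∑ x : ZMod p, ∏ ω : Fin k → Bool, ((quadraticChar (ZMod p) (Lf ω (x, hh)) : ℤ) : ℝ)| ≤
      21 * (2 ^ k + 1) * Real.sqrt p + if hh ∈ Bd then (p:ℝ) else 0 := by
    intro hh
    by_cases hb : Function.Injective (bf hh)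
    · have h1 := charsum hp2 (bf hh) hb
      have h2 : ∀ x : ZMod p, ∏ ω : Fin k → Bool, ((quadraticChar (ZMod p) (Lf ω (x, hh)) : ℤ) : ℝ) =
          ((quadraticChar (ZMod p) (∏ ω, (x + bf hh ω)) : ℤ) : ℝ) := by
        intro x
        rw [map_prod]; push_cast; rfl
      rw [Finset.sum_congr rfl fun x _ => h2 x]
      have h3 : hh ∉ Bd := by simp [Bd, hb]
      rw [if_neg h3, add_zero]
      push_cast at h1
      simpa using h1
    · have h3 : hh ∈ Bd := by simp [Bd, hb]
      rw [if_pos h3]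
      have : |∑ x : ZMod p, ∏ ω : Fin k → Bool, ((quadraticChar (ZMod p) (Lf ω (x, hh)) : ℤ) : ℝ)| ≤ p := by
        refine (Finset.abs_sum_le_sum_abs _ _).trans ?_
        have h5 : (p : ℝ) = ∑ x : ZMod p, 1 := by
          rw [Finset.sum_const, Finset.card_univ, ZMod.card]; simp
        rw [h5]
        refine Finset.sum_le_sum fun x _ => ?_
        rw [Finset.abs_prod]
        refine Finset.prod_le_one (fun _ _ => abs_nonneg _) fun ω _ => ?_
        by_cases hx : (Lf ω (x, hh)) = 0
        · simp [hx]
        · rcases quadraticChar_dichotomy hx with h | h <;> simp [h]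
      have : 0 ≤ 21 * (2 ^ k + 1) * Real.sqrt p := by positivity
      linarith
  have hsum : |∑ hh : Fin k → ZMod p, ∑ x : ZMod p, ∏ ω : Fin k → Bool, ((quadraticChar (ZMod p) (Lf ω (x, hh)) : ℤ) : ℝ)| ≤
      (p:ℝ)^k * (21 * (2 ^ k + 1) * Real.sqrt p) + p * Bd.card := by
    refine (Finset.abs_sum_le_sum_abs _ _).trans ((Finset.sum_le_sum fun hh _ => hinner hh).trans ?_)
    rw [Finset.sum_add_distrib]
    simp [ZMod.card]
    linarith
  have hs1 : (1 : ℝ) ≤ Real.sqrt p := by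
    rw [Real.one_le_sqrt]; exact_mod_cast (Fact.out : p.Prime).one_le
  have hsle : Real.sqrt p ≤ p := by nlinarith
  calc _ ≤ ((p:ℝ)^k * (21 * (2 ^ k + 1) * Real.sqrt p) + (2 ^ k) ^ 2 * (p:ℝ) ^ k) * Real.sqrt p := by
        gcongr; linarith
    _ = (p:ℝ)^k * (21 * (2 ^ k + 1) * p) + (2 ^ k) ^ 2 * (p:ℝ) ^ k * Real.sqrt p := by
        rw [← hsp]; ring_nf; simp; ring
    _ ≤ (p:ℝ)^k * (21 * (2 ^ k + 1) * p) + (2 ^ k) ^ 2 * (p:ℝ) ^ k * p := by gcongr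
    _ = _ := by ring

end

section

structure RC (q : ℕ) (g : ℤ → ℝ) : Prop where
  one : g 1 = 1
  mul : ∀ x y, g (x * y) = g x * g y
  per : ∀ x y, (q : ℤ) ∣ x - y → g x = g y
  zero : ∀ x, ¬ IsCoprime x (q : ℤ) → g x = 0
  sq : ∀ x, IsCoprime x (q : ℤ) → g x * g x = 1
  prim : ∀ d : ℕ, d ∣ q → d < q → ∃ x, IsCoprime x (q : ℤ) ∧ (d : ℤ) ∣ x - 1 ∧ g x ≠ 1

lemma RC.abs_le {q : ℕ} {g : ℤ → ℝ} (h : RC q g) (x : ℤ) : |g x| ≤ 1 := by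
  by_cases hx : IsCoprime x (q : ℤ)
  · have := h.sq x hx
    rw [_root_.abs_le]; constructor <;> nlinarith
  · rw [h.zero x hx]; simp

lemma RC.split1 {a b : ℕ} {g : ℤ → ℝ} (h : RC (a * b) g) (hb0 : 0 < b) {s t : ℤ}
    (hst : s * a + t * b = 1) : RC a (fun x => g (x * (t * b) + s * a)) := by
  have hcop : ∀ x : ℤ, IsCoprime (x * (t * b) + s * a) ((a * b : ℕ) : ℤ) ↔ IsCoprime x (a : ℤ) := by
    intro x
    push_cast
    rw [IsCoprime.mul_right_iff]
    have e1 : x * (t * b) + s * a = x + (a : ℤ) * (s - x * s) := by linear_combination x * hst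
    have e2 : x * (t * b) + s * a = 1 + (b : ℤ) * (x * t - t) := by linear_combination hst
    constructor
    · rintro ⟨h1, -⟩
      rw [e1] at h1
      exact (IsCoprime.add_mul_left_left_iff).mp h1
    · intro h1
      constructor
      · rw [e1]; exact (IsCoprime.add_mul_left_left_iff).mpr h1
      · rw [e2]; exact (IsCoprime.add_mul_left_left_iff).mpr isCoprime_one_left
  refine ⟨?_, ?_, ?_, ?_, ?_, ?_⟩
  · have : (1 : ℤ) * (t * b) + s * a = 1 := by linarith
    simp only [this, h.one]
  · intro x y
    rw [← h.mul]
    apply h.per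
    push_cast
    refine ⟨s * t * (x * y - x - y + 1), ?_⟩
    linear_combination (x * y * t * b + s * a) * (-hst)
  · intro x y hxy
    apply h.per
    obtain ⟨c, hc⟩ := hxy
    refine ⟨c * t, ?_⟩
    push_cast
    linear_combination (t * b) * hc
  · intro x hx
    exact h.zero _ (fun hh => hx ((hcop x).mp hh))
  · intro x hx
    exact h.sq _ ((hcop x).mpr hx)
  · intro d hd hda
    obtain ⟨x, hx1, hx2, hx3⟩ := h.prim (d * b) (Nat.mul_dvd_mul hd dvd_rfl) (Nat.mul_lt_mul_of_pos_right hda hb0)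
    push_cast at hx2 hx1
    refine ⟨x, (IsCoprime.mul_right_iff.mp hx1).1, (dvd_mul_right _ _).trans hx2, ?_⟩
    have : g (x * (t * b) + s * a) = g x := by
      apply h.per
      obtain ⟨c, hc⟩ := (dvd_mul_left (b:ℤ) d).trans hx2
      refine ⟨-s * c, ?_⟩
      push_cast
      linear_combination x * hst - s * a * hc
    simpa [this] using hx3

lemma RC.split {a b : ℕ} {g : ℤ → ℝ} (h : RC (a * b) g) (ha0 : 0 < a) (hb0 : 0 < b) (hab : a.Coprime b) :
    ∃ g1 g2, RC a g1 ∧ RC b g2 ∧ ∀ x, g x = g1 x * g2 x := by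
  obtain ⟨s, t, hst⟩ : IsCoprime (a : ℤ) (b : ℤ) := Nat.isCoprime_iff_coprime.mpr hab
  refine ⟨_, _, h.split1 hb0 hst, RC.split1 (a := b) (b := a) (by rwa [mul_comm]) ha0 (s := t) (t := s) (by linarith), ?_⟩
  intro x
  rw [← h.mul]
  apply h.per
  push_cast
  refine ⟨-(s * t * (x ^ 2 + 1 - 2 * x)), ?_⟩
  linear_combination -x * (s * a + t * b + 1) * hst

lemma RC.odd {p a : ℕ} {g : ℤ → ℝ} (hp : p.Prime) (hp2 : p ≠ 2) (h : RC (p ^ a) g) (ha : 0 < a) : a = 1 := by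
  by_contra hne
  obtain ⟨n, rfl⟩ : ∃ n, a = n + 2 := ⟨a - 2, by omega⟩
  obtain ⟨x, hx1, ⟨t, ht⟩, hx3⟩ := h.prim (p ^ (n + 1)) (pow_dvd_pow _ (by omega)) (Nat.pow_lt_pow_right hp.one_lt (by omega))
  have hodd : Odd (p ^ (n+2)) := (hp.odd_of_ne_two hp2).pow
  obtain ⟨r, hr⟩ := hodd
  have hr' : (p:ℤ) ^ (n + 2) = 2 * r + 1 := by exact_mod_cast hr
  push_cast at ht
  set w : ℤ := 1 + (p:ℤ) ^ (n+1) * t * (r + 1)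
  have hw : g x = g (w * w) := by
    apply h.per
    push_cast
    refine ⟨-((p:ℤ)^(n+1) * t) - (p:ℤ)^n * t^2 * (r+1)^2, ?_⟩
    simp only [w]
    have e : (p:ℤ)^(n+2) = p^n * p^2 := by ring
    have : x = 1 + (p:ℤ)^(n+1)*t := by linarith
    rw [this]
    have e2 : (p:ℤ)^(n+1) = p^n * p := by ring
    rw [e2]
    rw [e] at hr' ⊢
    linear_combination (p^n * p * t) * hr'
  rw [h.mul] at hw
  have h1 := h.sq x hx1
  by_cases hwc : IsCoprime w ((p ^ (n+2) : ℕ) : ℤ)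
  · exact hx3 (by rw [hw, h.sq w hwc])
  · rw [h.zero w hwc] at hw; rw [hw] at h1; simp at h1

lemma RC.two {a : ℕ} {g : ℤ → ℝ} (h : RC (2 ^ a) g) : a ≤ 3 := by
  by_contra hne
  obtain ⟨n, rfl⟩ : ∃ n, a = n + 4 := ⟨a - 4, by omega⟩
  obtain ⟨x, hx1, ⟨t, ht⟩, hx3⟩ := h.prim (2 ^ (n + 3)) (pow_dvd_pow _ (by omega)) (Nat.pow_lt_pow_right one_lt_two (by omega))
  push_cast at ht
  set w : ℤ := 1 + (2:ℤ) ^ (n+2) * t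
  have hw : g x = g (w * w) := by
    apply h.per
    push_cast
    refine ⟨-(2:ℤ)^n * t^2, ?_⟩
    simp only [w]
    have : x = 1 + (2:ℤ)^(n+3)*t := by linarith
    rw [this]
    ring
  rw [h.mul] at hw
  have h1 := h.sq x hx1
  by_cases hwc : IsCoprime w ((2 ^ (n+4) : ℕ) : ℤ)
  · exact hx3 (by rw [hw, h.sq w hwc])
  · rw [h.zero w hwc] at hw; rw [hw] at h1; simp at h1

lemma RC.quad {p : ℕ} [Fact p.Prime] {g : ℤ → ℝ} (hp2 : p ≠ 2) (h : RC p g) (x : ℤ) :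
    g x = ((quadraticChar (ZMod p) (x : ZMod p) : ℤ) : ℝ) := by
  have hp : p.Prime := Fact.out
  have hcop : ∀ y : ℤ, IsCoprime y (p:ℤ) ↔ (y : ZMod p) ≠ 0 := by
    intro y
    rw [Ne, ZMod.intCast_zmod_eq_zero_iff_dvd, isCoprime_comm]
    exact Prime.coprime_iff_not_dvd (Nat.prime_iff_prime_int.mp hp)
  have hsq : ∀ y : ℤ, (y : ZMod p) ≠ 0 → quadraticChar (ZMod p) (y : ZMod p) = 1 → g y = 1 := by
    intro y hy hq
    obtain ⟨r, hr⟩ := (quadraticChar_one_iff_isSquare hy).mp hq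
    obtain ⟨z, rfl⟩ := ZMod.intCast_surjective r
    have : g y = g (z * z) := by
      apply h.per
      rw [← ZMod.intCast_zmod_eq_zero_iff_dvd]
      push_cast
      rw [hr, sub_self]
    rw [this, h.mul]
    apply h.sq
    rw [hcop]
    rintro hz
    rw [hz] at hr; simp at hr; exact hy hr
  have hmul0 : ∀ y : ℤ, (y : ZMod p) ≠ 0 → g y = 1 ∨ g y = -1 := fun y hy =>
    mul_self_eq_one_iff.mp (h.sq y ((hcop y).mpr hy))
  by_cases hx : (x : ZMod p) = 0
  · rw [hx, h.zero x (by rw [hcop]; simp [hx])]; simp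
  · obtain ⟨u, hu1, -, hu3⟩ := h.prim 1 (one_dvd _) hp.one_lt
    have hu0 := (hcop u).mp hu1
    have huq : quadraticChar (ZMod p) (u : ZMod p) = -1 := by
      rcases quadraticChar_dichotomy hu0 with h1 | h1
      · exact absurd (hsq u hu0 h1) hu3
      · exact h1
    have hgu : g u = -1 := (hmul0 u hu0).resolve_left hu3
    rcases quadraticChar_dichotomy hx with h1 | h1
    · rw [h1, hsq x hx h1]; simp
    · have h2 : g (x * u) = 1 := by
        apply hsq
        · push_cast; exact mul_ne_zero hx hu0
        · push_cast; rw [map_mul, h1, huq]; simp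
      rw [h.mul, hgu] at h2
      rw [h1]; push_cast; linarith

noncomputable def chG (k : ℕ) (g : ℤ → ℝ) (v : VV k ℤ) : ℝ := ∏ ω : Fin k → Bool, g (Lf ω v)

lemma RC.chG_abs {k q : ℕ} {g : ℤ → ℝ} (h : RC q g) (v : VV k ℤ) : |chG k g v| ≤ 1 := by
  rw [chG, Finset.abs_prod]
  exact Finset.prod_le_one (fun _ _ => abs_nonneg _) fun ω _ => h.abs_le _

lemma RC.chG_per {k q : ℕ} {g : ℤ → ℝ} (h : RC q g) : Per q (chG k g) := by
  intro v w hvw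
  unfold chG
  refine Finset.prod_congr rfl fun ω _ => ?_
  apply h.per
  rw [← ZMod.intCast_zmod_eq_zero_iff_dvd]
  push_cast
  rw [← Lf_vcast, ← Lf_vcast, hvw, sub_self]

noncomputable def EE (k : ℕ) : ℝ := 2 ^ (2 ^ k) * (21 * (2 ^ k + 1) + (2 ^ k) ^ 2)

lemma EE_ge (k : ℕ) : 2 ^ (2^k) * 2 ≤ EE k ∧ 2 ≤ EE k := by
  have h2 : (1:ℝ) ≤ 2 ^ (2 ^ k) := one_le_pow₀ (by norm_num)
  have h1 : (1:ℝ) ≤ 2 ^ k := one_le_pow₀ (by norm_num)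
  unfold EE
  constructor <;> nlinarith [mul_le_mul h2 h1 (by norm_num) (by positivity), sq_nonneg ((2:ℝ)^k)]

noncomputable def DD (k : ℕ) (p : ℕ) : ℝ := if (p : ℝ) < EE k ^ 4 then EE k else 1

lemma local_bound {k p a : ℕ} (hp : p.Prime) (ha : 0 < a) {g : ℤ → ℝ} (h : RC (p ^ a) g) :
    |mean (p ^ a) (chG k g)| * 2 ^ (2 ^ k) * ((p ^ a : ℕ) : ℝ) ^ (1/4 : ℝ) ≤ DD k p := by
  obtain ⟨hE1, hE2⟩ := EE_ge k
  by_cases hp2 : p = 2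
  · subst hp2
    have ha3 := h.two
    have h1 : |mean (2 ^ a) (chG k g)| ≤ 1 := abs_mean_le (by positivity) fun v => h.chG_abs v
    have h2 : ((2 ^ a : ℕ) : ℝ) ^ (1/4 : ℝ) ≤ 2 := by
      have : ((2 ^ a : ℕ) : ℝ) ≤ 2 ^ (4 : ℝ) := by
        norm_cast
        exact Nat.pow_le_pow_right (by norm_num) (by omega)
      calc ((2 ^ a : ℕ) : ℝ) ^ (1/4 : ℝ) ≤ (2 ^ (4 : ℝ)) ^ (1/4 : ℝ) := by gcongr
        _ = 2 := by rw [← Real.rpow_mul (by norm_num)]; norm_num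
    have h3 : ((2:ℕ):ℝ) < EE k ^ 4 := by
      have : (2:ℝ)^4 ≤ EE k ^ 4 := by gcongr
      push_cast; linarith
    rw [DD, if_pos h3]
    refine le_trans ?_ hE1
    have h4 : |mean (2 ^ a) (chG k g)| * 2 ^ (2 ^ k) ≤ 1 * 2 ^ (2^k) := by gcongr
    rw [one_mul] at h4
    gcongr
  · obtain rfl := h.odd hp hp2 ha
    simp only [pow_one] at *
    haveI : Fact p.Prime := ⟨hp⟩
    have h1 := quad_mean (k := k) hp2
    have h2 : chG k g = (fun v : VV k ℤ => ∏ ω : Fin k → Bool, ((quadraticChar (ZMod p) ((Lf ω v : ℤ) : ZMod p) : ℤ) : ℝ)) := by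
      funext v
      exact Finset.prod_congr rfl fun ω _ => h.quad hp2 _
    rw [← h2] at h1
    have hp0 : (1:ℝ) ≤ p := by exact_mod_cast hp.one_le
    set y := (p:ℝ) ^ (1/4:ℝ) with hy
    have hy1 : 1 ≤ y := Real.one_le_rpow hp0 (by norm_num)
    have hy2 : Real.sqrt p = y * y := by
      rw [hy, ← Real.rpow_add (by linarith), Real.sqrt_eq_rpow]; norm_num
    have hy4 : y ^ 4 = p := by
      rw [hy, ← Real.rpow_natCast, ← Real.rpow_mul (by linarith)]; norm_num
    have h3 : |mean p (chG k g)| * 2 ^ (2 ^ k) * y ≤ EE k / y := by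
      rw [hy2] at h1
      rw [le_div_iff₀ (by positivity)] at h1 ⊢
      unfold EE
      calc _ = 2 ^ (2^k) * (|mean p (chG k g)| * (y * y)) := by ring
        _ ≤ _ := by gcongr
    refine h3.trans ?_
    unfold DD
    split_ifs with hlt
    · exact div_le_self (by linarith) hy1
    · rw [div_le_one (by linarith)]
      by_contra hcon
      push Not at hcon hlt
      have : y ^ 4 < EE k ^ 4 := by gcongr
      linarith

lemma char_bound0 {k : ℕ} (q : ℕ) : q ≠ 0 → ∀ g : ℤ → ℝ, RC q g →
    |mean q (chG k g)| * (2 ^ (2 ^ k)) ^ q.primeFactors.card * (q : ℝ) ^ (1/4 : ℝ) ≤ ∏ p ∈ q.primeFactors, DD k p := by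
  induction q using Nat.recOnPosPrimePosCoprime with
  | zero => intro h; exact absurd rfl h
  | one =>
    intro _ g h
    simp
    exact abs_mean_le (by norm_num) fun v => h.chG_abs v
  | prime_pow p n hp hn =>
    intro _ g h
    rw [Nat.primeFactors_prime_pow hn.ne' hp]
    simpa using local_bound (k := k) hp hn h
  | coprime a b ha hb hab iha ihb =>
    intro _ g h
    obtain ⟨g1, g2, h1, h2, h12⟩ := h.split (by omega) (by omega) hab
    have hm : mean (a * b) (chG k g) = mean a (chG k g1) * mean b (chG k g2) := by
      rw [← mean_mul (by omega) (by omega) hab h1.chG_per h2.chG_per]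
      congr 1
      funext v
      unfold chG
      rw [← Finset.prod_mul_distrib]
      exact Finset.prod_congr rfl fun ω _ => h12 _
    rw [hab.primeFactors_mul, Finset.prod_union hab.disjoint_primeFactors, Finset.card_union_of_disjoint hab.disjoint_primeFactors,
      hm, abs_mul, pow_add]
    push_cast
    rw [Real.mul_rpow (by positivity) (by positivity)]
    have i1 := iha (by omega) g1 h1
    have i2 := ihb (by omega) g2 h2
    calc _ = (|mean a (chG k g1)| * (2 ^ (2 ^ k)) ^ a.primeFactors.card * (a : ℝ) ^ (1/4 : ℝ)) *
       (|mean b (chG k g2)| * (2 ^ (2 ^ k)) ^ b.primeFactors.card * (b : ℝ) ^ (1/4 : ℝ)) := by ring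
      _ ≤ _ := mul_le_mul i1 i2 (by positivity) (le_trans (by positivity) i1)

lemma char_bound (k : ℕ) : ∃ C : ℝ, 0 < C ∧ ∀ q : ℕ, q ≠ 0 → ∀ g : ℤ → ℝ, RC q g →
    |mean q (chG k g)| * (2 ^ (2 ^ k)) ^ q.primeFactors.card * (q : ℝ) ^ (1/4 : ℝ) ≤ C := by
  have hE2 := (EE_ge k).2
  refine ⟨EE k ^ ⌈EE k ^ 4⌉₊, by positivity, fun q hq g h => (char_bound0 q hq g h).trans ?_⟩
  unfold DD
  rw [Finset.prod_ite, Finset.prod_const, Finset.prod_const_one, mul_one]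
  refine pow_le_pow_right₀ (by linarith) ?_
  calc _ ≤ (Finset.range ⌈EE k ^ 4⌉₊).card := by
        apply Finset.card_le_card
        intro p hp
        rw [Finset.mem_filter] at hp
        rw [Finset.mem_range]
        exact Nat.lt_ceil.mpr hp.2
    _ = _ := Finset.card_range _

lemma RC_of_char {q : ℕ} [NeZero q] (χ : DirichletCharacter ℂ q) (hprim : χ.IsPrimitive)
    (hreal : ∀ n : ZMod q, (starRingEnd ℂ) (χ n) = χ n) : RC q (fun x : ℤ => (χ (x : ZMod q)).re) := by
  have hre : ∀ n : ZMod q, ((χ n).re : ℂ) = χ n := fun n => Complex.conj_eq_iff_re.mp (hreal n)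
  have hmul : ∀ n m : ZMod q, (χ (n * m)).re = (χ n).re * (χ m).re := by
    intro n m
    have : ((χ (n * m)).re : ℂ) = (χ n).re * (χ m).re := by rw [hre, hre, hre, map_mul]
    exact_mod_cast this
  have hunit : ∀ x : ℤ, IsUnit (x : ZMod q) ↔ IsCoprime x (q : ℤ) := fun x => by
    rw [ZMod.coe_int_isUnit_iff_isCoprime, isCoprime_comm]
  refine ⟨by simp, fun x y => by push_cast; exact hmul _ _, ?_, ?_, ?_, ?_⟩
  · intro x y hxy
    have : (x : ZMod q) = y := by
      rw [← ZMod.intCast_zmod_eq_zero_iff_dvd] at hxy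
      push_cast at hxy
      exact sub_eq_zero.mp hxy
    simp [this]
  · intro x hx
    rw [← hunit] at hx
    simp [MulChar.map_nonunit χ hx]
  · intro x hx
    rw [← hunit] at hx
    have h1 : ‖χ (x : ZMod q)‖ = 1 := by
      obtain ⟨u, hu⟩ := hx
      rw [← hu]; exact χ.unit_norm_eq_one u
    rw [← hre, Complex.norm_real, Real.norm_eq_abs] at h1
    have := abs_mul_abs_self (χ (x : ZMod q)).re
    rw [← this, h1, one_mul]
  · intro d hd hdq
    by_contra hcon
    push Not at hcon
    have hft : χ.FactorsThrough d := by
      rw [DirichletCharacter.factorsThrough_iff_ker_unitsMap hd]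
      intro u hu
      rw [MonoidHom.mem_ker] at hu ⊢
      obtain ⟨x, hx⟩ := ZMod.intCast_surjective (u : ZMod q)
      have h1 := hcon x ((hunit x).mp (by rw [hx]; exact u.isUnit)) (by
        rw [← ZMod.intCast_zmod_eq_zero_iff_dvd]
        push_cast
        rw [sub_eq_zero]
        have h2 := congrArg Units.val hu
        rw [ZMod.unitsMap_val, ← hx] at h2
        simpa [ZMod.cast_intCast hd] using h2)
      apply Units.ext
      rw [MulChar.coe_toUnitHom, ← hx, ← hre, h1]
      simp
    have h4 : χ.conductor ≤ d := Nat.sInf_le hft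
    have h3 : χ.conductor = q := hprim
    rw [h3] at h4
    omega

end

section

structure Wt (M : ℕ) (F : ℤ → ℝ) : Prop where
  nn : ∀ x, 0 ≤ F x
  le1 : ∀ x, F x ≤ 1
  supp : ∀ x, F x ≠ 0 → 1 ≤ x ∧ x ≤ M
  anti : ∀ x y, 1 ≤ x → x ≤ y → F y ≤ F x

lemma Wt.summable {M : ℕ} {F : ℤ → ℝ} (h : Wt M F) : Summable F := by
  apply summable_of_hasFiniteSupport
  exact (Set.finite_Icc (1:ℤ) M).subset fun x hx => h.supp x hx

lemma Wt.diff {M : ℕ} {F : ℤ → ℝ} (h : Wt M F) (σ : ℕ) (I : Finset ℤ) :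
    ∑ x ∈ I, |F (x + σ) - F x| ≤ 2 * σ := by
  obtain ⟨u, hu⟩ : ∃ u : ℤ → ℝ, ∀ x, u x = if x ∈ Finset.Icc (1:ℤ) σ then 1 else 0 := ⟨_, fun _ => rfl⟩
  have hpt : ∀ x, |F (x + σ) - F x| ≤ F x - F (x + σ) + 2 * u (x + σ) := by
    intro x
    rw [hu]
    by_cases hx : 1 ≤ x
    · have h1 := h.anti x (x + σ) hx (by omega)
      rw [abs_of_nonpos (by linarith)]
      split_ifs <;> linarith
    · have h0 : F x = 0 := by
        by_contra hne; exact hx (h.supp x hne).1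
      rw [h0, sub_zero, abs_of_nonneg (h.nn _)]
      by_cases h2 : F (x + σ) = 0
      · rw [h2]; split_ifs <;> norm_num
      · have h3 := h.supp _ h2
        rw [if_pos (by rw [Finset.mem_Icc]; omega)]
        have := h.le1 (x + σ)
        linarith
  have hs1 := h.summable
  have hs2 : Summable fun x => F (x + σ) := (Equiv.addRight (σ:ℤ)).summable_iff.mpr hs1
  have hu0 : ∀ b, b ∉ Finset.Icc (1:ℤ) σ → u b = 0 := by
    intro b hb; rw [hu, if_neg hb]
  have hs30 : Summable u := summable_of_ne_finset_zero (s := Finset.Icc (1:ℤ) σ) hu0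
  have hs3 : Summable fun x : ℤ => u (x + σ) := (Equiv.addRight (σ:ℤ)).summable_iff.mpr hs30
  have hs4 := (hs1.sub hs2).add (hs3.mul_left 2)
  refine (Finset.sum_le_sum fun x _ => hpt x).trans ((hs4.sum_le_tsum I fun x _ => (abs_nonneg _).trans (hpt x)).trans ?_)
  rw [(hs1.sub hs2).tsum_add (hs3.mul_left 2), hs1.tsum_sub hs2, tsum_mul_left]
  have e1 : ∑' x, F (x + σ) = ∑' x, F x := (Equiv.addRight (σ:ℤ)).tsum_eq F
  have e2 : ∑' x : ℤ, u (x + σ) = ∑' x : ℤ, u x := (Equiv.addRight (σ:ℤ)).tsum_eq u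
  have e3 : ∑' x : ℤ, u x = σ := by
    rw [tsum_eq_sum hu0, Finset.sum_congr rfl fun x hx => (hu x).trans (if_pos hx)]
    simp
  rw [e1, e2, e3]
  linarith

noncomputable def bx (k R : ℕ) : Finset (VV k ℤ) :=
  (Finset.Icc (-(R:ℤ)) R) ×ˢ Fintype.piFinset fun _ => Finset.Icc (-(R:ℤ)) R

lemma mem_bx {k R : ℕ} {v : VV k ℤ} : v ∈ bx k R ↔ (-(R:ℤ) ≤ v.1 ∧ v.1 ≤ R) ∧ ∀ i, -(R:ℤ) ≤ v.2 i ∧ v.2 i ≤ R := by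
  simp [bx, Fintype.mem_piFinset]

lemma Lf_zero {k : ℕ} (v : VV k ℤ) : Lf (fun _ => false) v = v.1 := by simp [Lf]
lemma Lf_single {k : ℕ} (v : VV k ℤ) (i : Fin k) : Lf (fun j => decide (j = i)) v = v.1 + v.2 i := by
  simp [Lf]

lemma Wt.bx {M k : ℕ} {F : ℤ → ℝ} (h : Wt M F) {v : VV k ℤ} (hv : chG k F v ≠ 0) : v ∈ bx k M := by
  unfold chG at hv
  rw [Finset.prod_ne_zero_iff] at hv
  have h1 := h.supp _ (hv (fun _ => false) (Finset.mem_univ _))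
  rw [Lf_zero] at h1
  rw [mem_bx]
  refine ⟨by omega, fun i => ?_⟩
  have h2 := h.supp _ (hv (fun j => decide (j = i)) (Finset.mem_univ _))
  rw [Lf_single] at h2
  omega

lemma prod_diff {ι : Type*} [DecidableEq ι] (s : Finset ι) (a b : ι → ℝ) (ha : ∀ i, 0 ≤ a i ∧ a i ≤ 1) (hb : ∀ i, 0 ≤ b i ∧ b i ≤ 1) :
    |∏ i ∈ s, a i - ∏ i ∈ s, b i| ≤ ∑ i ∈ s, |a i - b i| := by
  induction s using Finset.induction_on with
  | empty => simp
  | insert i s hi ih =>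
    rw [Finset.prod_insert hi, Finset.prod_insert hi, Finset.sum_insert hi]
    have e : a i * ∏ j ∈ s, a j - b i * ∏ j ∈ s, b j = (a i - b i) * ∏ j ∈ s, a j + b i * (∏ j ∈ s, a j - ∏ j ∈ s, b j) := by ring
    rw [e]
    refine (abs_add_le _ _).trans ?_
    rw [abs_mul, abs_mul]
    have h1 : |∏ j ∈ s, a j| ≤ 1 := by
      rw [abs_of_nonneg (Finset.prod_nonneg fun j _ => (ha j).1)]
      exact Finset.prod_le_one (fun j _ => (ha j).1) fun j _ => (ha j).2
    have h2 : |b i| ≤ 1 := by rw [abs_of_nonneg (hb i).1]; exact (hb i).2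
    have := mul_le_mul_of_nonneg_left h1 (abs_nonneg (a i - b i))
    have := mul_le_mul_of_nonneg_right h2 (abs_nonneg (∏ j ∈ s, a j - ∏ j ∈ s, b j))
    linarith

lemma Wt.chG01 {M k : ℕ} {F : ℤ → ℝ} (h : Wt M F) (v : VV k ℤ) : 0 ≤ chG k F v ∧ chG k F v ≤ 1 :=
  ⟨Finset.prod_nonneg fun _ _ => h.nn _, Finset.prod_le_one (fun _ _ => h.nn _) fun _ _ => h.le1 _⟩

lemma Wt.summ {M k : ℕ} {F : ℤ → ℝ} (h : Wt M F) (G : VV k ℤ → ℝ) : Summable fun v => chG k F v * G v := by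
  apply summable_of_ne_finset_zero (s := _root_.bx k M)
  intro v hv
  by_contra hne
  exact hv (h.bx (left_ne_zero_of_mul hne))

lemma Wt.shift {M k m : ℕ} {F : ℤ → ℝ} (h : Wt M F) (hmM : m ≤ M) (s : VV k ℤ) (hs : s ∈ ibox k m) :
    ∑ v ∈ _root_.bx k (2 * M), |chG k F (v + s) - chG k F v| ≤ 2 ^ k * ((4 * M + 1) ^ k * (2 * ((k + 1) * m))) := by
  classical
  have hpt : ∀ v, |chG k F (v + s) - chG k F v| ≤ ∑ ω : Fin k → Bool, |F (Lf ω v + Lf ω s) - F (Lf ω v)| := by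
    intro v
    unfold chG
    refine (prod_diff _ _ _ (fun _ => ⟨h.nn _, h.le1 _⟩) (fun _ => ⟨h.nn _, h.le1 _⟩)).trans (le_of_eq ?_)
    simp only [Lf_add]
  refine (Finset.sum_le_sum fun v _ => hpt v).trans ?_
  rw [Finset.sum_comm]
  have hω : ∀ ω : Fin k → Bool, ∑ v ∈ _root_.bx k (2 * M), |F (Lf ω v + Lf ω s) - F (Lf ω v)| ≤ (4 * M + 1) ^ k * (2 * ((k + 1) * m)) := by
    intro ω
    rw [mem_ibox] at hs
    have hσ0 : 0 ≤ Lf ω s := by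
      unfold Lf
      refine add_nonneg hs.1.1 (Finset.sum_nonneg fun i _ => ?_)
      split_ifs
      · exact (hs.2 i).1
      · exact le_rfl
    have hσ1 : Lf ω s ≤ (k + 1) * m := by
      unfold Lf
      have : ∑ i, (if ω i then s.2 i else 0) ≤ ∑ i : Fin k, (m : ℤ) := by
        refine Finset.sum_le_sum fun i _ => ?_
        split_ifs
        · exact (hs.2 i).2.le
        · positivity
      simp at this
      linarith [hs.1.2]
    obtain ⟨σ, hσ⟩ := Int.eq_ofNat_of_zero_le hσ0
    rw [hσ] at hσ1 ⊢
    have hσ2 : (σ : ℝ) ≤ (k + 1) * m := by exact_mod_cast hσ1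
    rw [_root_.bx, Finset.sum_product_right]
    have hin : ∀ hh ∈ Fintype.piFinset (fun _ : Fin k => Finset.Icc (-((2 * M : ℕ):ℤ)) (2 * M : ℕ)),
        ∑ x ∈ Finset.Icc (-((2 * M : ℕ):ℤ)) (2 * M : ℕ), |F (Lf ω (x, hh) + σ) - F (Lf ω (x, hh))| ≤ 2 * ((k + 1) * m) := by
      intro hh _
      set c : ℤ := ∑ i, if ω i then hh i else 0 with hc
      have : ∀ x : ℤ, Lf ω (x, hh) = x + c := fun x => rfl
      simp only [this]
      have := Finset.sum_map (Finset.Icc (-((2 * M : ℕ):ℤ)) (2 * M : ℕ)) (addRightEmbedding c) (fun y => |F (y + σ) - F y|)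
      simp only [addRightEmbedding_apply] at this
      rw [← this]
      refine (h.diff σ _).trans (by linarith)
    refine (Finset.sum_le_sum hin).trans ?_
    rw [Finset.sum_const, nsmul_eq_mul]
    gcongr
    rw [Fintype.card_piFinset]
    simp
    gcongr
    have : ((2 * (M:ℤ) + 1 + 2 * M).toNat) = 4 * M + 1 := by omega
    rw [this]; push_cast; linarith
  refine (Finset.sum_le_sum fun ω _ => hω ω).trans ?_
  rw [Finset.sum_const, nsmul_eq_mul]
  simp

lemma equidist {M k m : ℕ} {F : ℤ → ℝ} (h : Wt M F) (hm : m ≠ 0) (hmM : m ≤ M) {G : VV k ℤ → ℝ} (hG : Per m G)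
    (hG1 : ∀ v, |G v| ≤ 1) :
    |∑' v, chG k F v * G v - (∑' v, chG k F v) * mean m G| ≤ 2 ^ k * ((4 * M + 1) ^ k * (2 * ((k + 1) * m))) := by
  have hpos : (0:ℝ) < (m:ℝ) ^ (k+1) := by positivity
  have e1 : ∀ s, ∑' v, chG k F v * G v = ∑' v, chG k F (v + s) * G (v + s) := fun s =>
    ((Equiv.addRight s).tsum_eq fun v => chG k F v * G v).symm
  have e2 : (m:ℝ)^(k+1) * ((∑' v, chG k F v) * mean m G) = ∑ s ∈ ibox k m, ∑' v, chG k F v * G (v + s) := by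
    rw [← Summable.tsum_finsetSum fun s _ => h.summ _]
    rw [mul_left_comm, ← tsum_mul_right]
    refine tsum_congr fun v => ?_
    rw [← Finset.mul_sum, sum_shift hm hG v]
  have e3 : (m:ℝ)^(k+1) * ∑' v, chG k F v * G v = ∑ s ∈ ibox k m, ∑' v, chG k F (v + s) * G (v + s) := by
    rw [← Finset.sum_congr rfl fun s _ => e1 s, Finset.sum_const, card_ibox, nsmul_eq_mul]
    push_cast; rfl
  have key : ∀ s ∈ ibox k m, |∑' v, chG k F (v + s) * G (v + s) - ∑' v, chG k F v * G (v + s)| ≤ 2 ^ k * ((4 * M + 1) ^ k * (2 * ((k + 1) * m))) := by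
    intro s hs
    refine le_trans ?_ (h.shift hmM s hs)
    have hs1 : Summable fun v => chG k F (v + s) * G (v + s) :=
      (Equiv.addRight s).summable_iff.mpr (h.summ G)
    rw [← hs1.tsum_sub (h.summ _)]
    rw [tsum_eq_sum (s := bx k (2 * M))]
    · refine (Finset.abs_sum_le_sum_abs _ _).trans (Finset.sum_le_sum fun v _ => ?_)
      rw [← sub_mul, abs_mul]
      exact mul_le_of_le_one_right (abs_nonneg _) (hG1 _)
    · intro v hv
      have h1 : chG k F v = 0 := by
        by_contra hne
        have := h.bx hne
        rw [mem_bx] at this hv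
        apply hv
        refine ⟨by omega, fun i => ?_⟩
        have := this.2 i
        omega
      have h2 : chG k F (v + s) = 0 := by
        by_contra hne
        have := h.bx hne
        rw [mem_bx] at this hv
        rw [mem_ibox] at hs
        apply hv
        simp only [Prod.fst_add, Prod.snd_add, Pi.add_apply] at this
        refine ⟨by omega, fun i => ?_⟩
        have := this.2 i
        have := hs.2 i
        omega
      rw [h1, h2]; ring
  have : |(m:ℝ)^(k+1) * (∑' v, chG k F v * G v - (∑' v, chG k F v) * mean m G)| ≤ (m:ℝ)^(k+1) * (2 ^ k * ((4 * M + 1) ^ k * (2 * ((k + 1) * m)))) := by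
    rw [mul_sub, e2, e3, ← Finset.sum_sub_distrib]
    refine (Finset.abs_sum_le_sum_abs _ _).trans ((Finset.sum_le_sum key).trans ?_)
    rw [Finset.sum_const, card_ibox, nsmul_eq_mul]
    push_cast; exact le_rfl
  rw [abs_mul, abs_of_pos hpos] at this
  exact le_of_mul_le_mul_left this hpos

end

section

noncomputable def es (P : Finset ℕ) (J : ℕ → ℝ) (j : ℕ) : ℝ := ∑ S ∈ P.powersetCard j, ∏ p ∈ S, J p

lemma es_zero (P : Finset ℕ) (J : ℕ → ℝ) : es P J 0 = 1 := by simp [es]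

lemma es_insert {P : Finset ℕ} {a : ℕ} (ha : a ∉ P) (J : ℕ → ℝ) (j : ℕ) :
    es (insert a P) J (j+1) = es P J (j+1) + J a * es P J j := by
  unfold es
  rw [Finset.powersetCard_succ_insert ha, Finset.sum_union]
  · congr 1
    rw [Finset.sum_image, Finset.mul_sum]
    · refine Finset.sum_congr rfl fun S hS => ?_
      rw [Finset.prod_insert]
      exact fun h => ha ((Finset.mem_powersetCard.mp hS).1 h)
    · intro S hS T hT hST
      have hS' : a ∉ S := fun h => ha ((Finset.mem_powersetCard.mp hS).1 h)
      have hT' : a ∉ T := fun h => ha ((Finset.mem_powersetCard.mp hT).1 h)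
      rw [← Finset.erase_insert hS', ← Finset.erase_insert hT']
      rw [hST]
  · rw [Finset.disjoint_left]
    intro S hS hS2
    obtain ⟨T, _, rfl⟩ := Finset.mem_image.mp hS2
    exact ha ((Finset.mem_powersetCard.mp hS).1 (Finset.mem_insert_self _ _))

lemma bonf0 (P : Finset ℕ) (J : ℕ → ℝ) (hJ : ∀ p ∈ P, 0 ≤ J p ∧ J p ≤ 1) : ∀ r : ℕ,
    0 ≤ (-1) ^ r * (∏ p ∈ P, (1 - J p) - ∑ j ∈ Finset.range r, (-1) ^ j * es P J j) ∧
    (-1) ^ r * (∏ p ∈ P, (1 - J p) - ∑ j ∈ Finset.range r, (-1) ^ j * es P J j) ≤ es P J r := by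
  induction P using Finset.induction_on with
  | empty =>
    intro r
    cases r with
    | zero => simp [es]
    | succ r =>
      rw [Finset.sum_range_succ']
      have h0 : ∀ j, Finset.powersetCard (j+1) (∅ : Finset ℕ) = ∅ := fun j => Finset.powersetCard_eq_empty.mpr (by simp)
      simp [es, h0]
  | insert a P ha ih =>
    intro r
    have ih' := ih fun p hp => hJ p (Finset.mem_insert_of_mem hp)
    obtain ⟨hJ0, hJ1⟩ := hJ a (Finset.mem_insert_self _ _)
    cases r with
    | zero =>
      rw [es_zero]
      simp only [Finset.range_zero, Finset.sum_empty, sub_zero, pow_zero, one_mul]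
      exact ⟨Finset.prod_nonneg fun p hp => by linarith [(hJ p hp).2], Finset.prod_le_one (fun p hp => by linarith [(hJ p hp).2]) fun p hp => by linarith [(hJ p hp).1]⟩
    | succ r =>
      have e : (-1) ^ (r+1) * (∏ p ∈ insert a P, (1 - J p) - ∑ j ∈ Finset.range (r+1), (-1) ^ j * es (insert a P) J j) =
          (-1) ^ (r+1) * (∏ p ∈ P, (1 - J p) - ∑ j ∈ Finset.range (r+1), (-1) ^ j * es P J j) +
          J a * ((-1) ^ r * (∏ p ∈ P, (1 - J p) - ∑ j ∈ Finset.range r, (-1) ^ j * es P J j)) := by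
        rw [Finset.prod_insert ha, Finset.sum_range_succ', Finset.sum_range_succ' (fun j => (-1) ^ j * es P J j)]
        rw [es_zero, es_zero, Finset.sum_congr rfl fun j _ => by rw [es_insert ha, mul_add, ← mul_assoc _ (J a)], Finset.sum_add_distrib]
        have : ∑ x ∈ Finset.range r, (-1:ℝ) ^ (x + 1) * J a * es P J x = - J a * ∑ j ∈ Finset.range r, (-1) ^ j * es P J j := by
          rw [Finset.mul_sum]
          refine Finset.sum_congr rfl fun j _ => by ring
        rw [this]
        ring
      rw [e, es_insert ha]
      obtain ⟨h1, h2⟩ := ih' (r+1)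
      obtain ⟨h3, h4⟩ := ih' r
      exact ⟨by positivity, add_le_add h2 (mul_le_mul_of_nonneg_left h4 hJ0)⟩

lemma bonf (P : Finset ℕ) (J : ℕ → ℝ) (hJ : ∀ p ∈ P, 0 ≤ J p ∧ J p ≤ 1) (r : ℕ) :
    |∏ p ∈ P, (1 - J p) - ∑ j ∈ Finset.range r, (-1) ^ j * es P J j| ≤ es P J r := by
  obtain ⟨h1, h2⟩ := bonf0 P J hJ r
  rw [← abs_of_nonneg h1, abs_mul, abs_pow, abs_neg, abs_one, one_pow, one_mul] at h2
  exact h2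

lemma es_bound {k Qn : ℕ} (hQ : 1 ≤ Qn) (P : Finset ℕ) (J : ℕ → ℝ) (hP : ∀ p ∈ P, 1 ≤ p ∧ p ≤ Qn)
    (hJ : ∀ p ∈ P, 0 ≤ J p ∧ J p ≤ 2 ^ k / p) (r : ℕ) :
    es P J r ≤ Real.exp (-r + 3 * 2 ^ k * (1 + Real.log Qn)) := by
  have h1 : es P J r * Real.exp 1 ^ r ≤ ∏ p ∈ P, (1 + Real.exp 1 * J p) := by
    rw [Finset.prod_one_add, es, Finset.sum_mul]
    calc _ = ∑ S ∈ P.powersetCard r, ∏ p ∈ S, Real.exp 1 * J p := by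
          refine Finset.sum_congr rfl fun S hS => ?_
          rw [Finset.prod_mul_distrib, Finset.prod_const, (Finset.mem_powersetCard.mp hS).2, mul_comm]
      _ ≤ _ := by
          apply Finset.sum_le_sum_of_subset_of_nonneg
          · intro S hS; exact Finset.mem_powerset.mpr (Finset.mem_powersetCard.mp hS).1
          · intro S hS _
            refine Finset.prod_nonneg fun p hp => mul_nonneg (Real.exp_pos _).le (hJ p (Finset.mem_powerset.mp hS hp)).1
  have h2 : ∏ p ∈ P, (1 + Real.exp 1 * J p) ≤ Real.exp (∑ p ∈ P, Real.exp 1 * J p) := by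
    rw [Real.exp_sum]
    refine Finset.prod_le_prod (fun p hp => ?_) fun p hp => ?_
    · have := mul_nonneg (Real.exp_pos 1).le (hJ p hp).1; linarith
    · have := Real.add_one_le_exp (Real.exp 1 * J p); linarith
  have h3 : ∑ p ∈ P, Real.exp 1 * J p ≤ 3 * 2 ^ k * (1 + Real.log Qn) := by
    calc _ ≤ ∑ p ∈ P, 3 * 2 ^ k * ((p:ℝ))⁻¹ := by
          refine Finset.sum_le_sum fun p hp => ?_
          rw [mul_assoc, ← div_eq_mul_inv]
          have := Real.exp_one_lt_d9
          exact mul_le_mul (by linarith) (hJ p hp).2 (hJ p hp).1 (by norm_num)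
      _ = 3 * 2 ^ k * ∑ p ∈ P, ((p:ℝ))⁻¹ := by rw [Finset.mul_sum]
      _ ≤ 3 * 2 ^ k * ∑ p ∈ Finset.Icc 1 Qn, ((p:ℝ))⁻¹ := by
          gcongr
          · intro p hp; exact Finset.mem_Icc.mpr (hP p hp)
      _ ≤ _ := by
          gcongr
          have := harmonic_le_one_add_log Qn
          rw [harmonic_eq_sum_Icc] at this
          push_cast at this
          exact this
  have h4 : es P J r * Real.exp 1 ^ r ≤ Real.exp (3 * 2 ^ k * (1 + Real.log Qn)) :=
    h1.trans (h2.trans (Real.exp_le_exp.mpr h3))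
  rw [Real.exp_add, Real.exp_neg]
  rw [← Real.exp_nat_mul, mul_one] at h4
  rw [inv_mul_eq_div, le_div_iff₀ (Real.exp_pos _)]
  exact h4

lemma JS_abs {k : ℕ} (S : Finset ℕ) (v : VV k ℤ) : 0 ≤ ∏ p ∈ S, Jf p v ∧ ∏ p ∈ S, Jf p v ≤ 1 :=
  ⟨Finset.prod_nonneg fun _ _ => Jf_nonneg _, Finset.prod_le_one (fun _ _ => Jf_nonneg _) fun _ _ => Jf_le_one _⟩

lemma sieve_term {M k q Qn r : ℕ} {F : ℤ → ℝ} (h : Wt M F) {S : Finset ℕ} (hq : q ≠ 0) (hqQ : q ≤ Qn)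
    (hS : ∀ p ∈ S, p.Prime ∧ p ≤ Qn ∧ ¬ p ∣ q) (hSr : S.card ≤ r) (hM : Qn ^ (r+1) ≤ M) {G0 : VV k ℤ → ℝ} (hG : Per q G0)
    (hG1 : ∀ v, |G0 v| ≤ 1) :
    |∑' v, chG k F v * (G0 v * ∏ p ∈ S, Jf p v) - (∑' v, chG k F v) * (mean q G0 * ∏ p ∈ S, mean p (Jf (k := k) p))| ≤
      2 ^ k * ((4 * M + 1) ^ k * (2 * ((k + 1) * Qn ^ (r+1)))) := by
  have hpos : ∏ p ∈ S, p ≠ 0 := Finset.prod_ne_zero_iff.mpr fun p hp => (hS p hp).1.ne_zero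
  have hcop : q.Coprime (∏ p ∈ S, p) := Nat.Coprime.prod_right fun p hp =>
    (((hS p hp).1.coprime_iff_not_dvd).mpr (hS p hp).2.2).symm
  have hle : q * ∏ p ∈ S, p ≤ Qn ^ (r+1) := by
    rw [pow_succ, mul_comm]
    refine Nat.mul_le_mul ?_ hqQ
    calc ∏ p ∈ S, p ≤ ∏ p ∈ S, Qn := Finset.prod_le_prod' fun p hp => (hS p hp).2.1
      _ = Qn ^ S.card := by simp
      _ ≤ Qn ^ r := Nat.pow_le_pow_right (by omega) hSr
  have hPer : Per (∏ p ∈ S, p) (fun v : VV k ℤ => ∏ p ∈ S, Jf p v) := Per_prod S (fun p => Jf p) fun p _ => Jf_per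
  have := equidist h (mul_ne_zero hq hpos) (hle.trans hM) (Per_mul hG hPer) (fun v => by
    rw [abs_mul, abs_of_nonneg (JS_abs S v).1]
    exact mul_le_one₀ (hG1 v) (JS_abs S v).1 (JS_abs S v).2)
  rw [mean_mul hq hpos hcop hG hPer, mean_prod S (fun p => Jf p) (fun p _ => Jf_per) (fun p hp => (hS p hp).1)] at this
  refine this.trans ?_
  have h2 : ((q * ∏ p ∈ S, p : ℕ) : ℝ) ≤ (Qn:ℝ) ^ (r+1) := by exact_mod_cast hle
  gcongr

lemma sieve {M k q Qn r : ℕ} {F : ℤ → ℝ} (h : Wt M F) {P : Finset ℕ} (hq : q ≠ 0) (hqQ : q ≤ Qn)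
    (hP : ∀ p ∈ P, p.Prime ∧ p ≤ Qn ∧ ¬ p ∣ q) (hM : Qn ^ (r+1) ≤ M) {G0 : VV k ℤ → ℝ} (hG : Per q G0)
    (hG1 : ∀ v, |G0 v| ≤ 1) :
    |∑' v, chG k F v * (G0 v * ∏ p ∈ P, (1 - Jf p v))| ≤
      (∑' v, chG k F v) * (|mean q G0| * ∏ p ∈ P, (1 - mean p (Jf (k := k) p)) + 2 * Real.exp (-r + 3 * 2 ^ k * (1 + Real.log Qn))) +
      (r + 1) * Qn ^ r * (2 ^ k * ((4 * M + 1) ^ k * (2 * ((k + 1) * Qn ^ (r+1))))) := by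
  have hQ1 : 1 ≤ Qn := by omega
  set SA := ∑' v, chG k F v with hSA
  have hSA0 : 0 ≤ SA := tsum_nonneg fun v => (h.chG01 v).1
  set Er : ℝ := 2 ^ k * ((4 * M + 1) ^ k * (2 * ((k + 1) * Qn ^ (r+1)))) with hEr
  have hEr0 : 0 ≤ Er := by positivity
  set jj : ℕ → ℝ := fun p => mean p (Jf (k := k) p) with hjj
  have hj : ∀ p ∈ P, 0 ≤ jj p ∧ jj p ≤ 1 := fun p hp => by
    have h1 : 0 ≤ jj p := mean_nonneg fun v => Jf_nonneg v
    refine ⟨h1, ?_⟩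
    have := abs_mean_le (k := k) (hP p hp).1.ne_zero (G := Jf p) (fun v => by rw [abs_of_nonneg (Jf_nonneg v)]; exact Jf_le_one v)
    rwa [abs_of_nonneg h1] at this
  have hcard : P.card ≤ Qn := by
    calc P.card ≤ (Finset.Icc 1 Qn).card := Finset.card_le_card fun p hp => Finset.mem_Icc.mpr ⟨(hP p hp).1.one_le, (hP p hp).2.1⟩
      _ = Qn := by simp
  have hcj : ∀ j ≤ r, ((P.powersetCard j).card : ℝ) ≤ (Qn:ℝ) ^ r := by
    intro j hj
    have : (P.powersetCard j).card ≤ Qn ^ r := by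
      rw [Finset.card_powersetCard]
      exact (Nat.choose_le_pow _ _).trans ((Nat.pow_le_pow_left hcard _).trans (Nat.pow_le_pow_right hQ1 hj))
    exact_mod_cast this
  have hblock : ∀ j ≤ r, ∀ G : VV k ℤ → ℝ, Per q G → (∀ v, |G v| ≤ 1) →
      |∑' v, chG k F v * (G v * es P (fun p => Jf p v) j) - SA * (mean q G * es P jj j)| ≤ Qn ^ r * Er := by
    intro j hjr G hG hG1
    have e1 : ∑' v, chG k F v * (G v * es P (fun p => Jf p v) j) =
        ∑ S ∈ P.powersetCard j, ∑' v, chG k F v * (G v * ∏ p ∈ S, Jf p v) := by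
      rw [← Summable.tsum_finsetSum fun s _ => h.summ _]
      refine tsum_congr fun v => ?_
      rw [es, Finset.mul_sum, Finset.mul_sum]
    rw [e1, es, Finset.mul_sum, Finset.mul_sum, ← Finset.sum_sub_distrib]
    refine (Finset.abs_sum_le_sum_abs _ _).trans ?_
    calc _ ≤ ∑ S ∈ P.powersetCard j, Er := by
          refine Finset.sum_le_sum fun S hS => ?_
          obtain ⟨hS1, hS2⟩ := Finset.mem_powersetCard.mp hS
          exact sieve_term h hq hqQ (fun p hp => hP p (hS1 hp)) (hS2.le.trans hjr) hM hG hG1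
      _ = (P.powersetCard j).card * Er := by simp
      _ ≤ _ := mul_le_mul_of_nonneg_right (hcj j hjr) hEr0
  set T := ∑ j ∈ Finset.range r, (-1) ^ j * ∑' v, chG k F v * (G0 v * es P (fun p => Jf p v) j) with hT
  have hT1 : |T - SA * (mean q G0 * ∑ j ∈ Finset.range r, (-1) ^ j * es P jj j)| ≤ r * (Qn ^ r * Er) := by
    rw [hT, Finset.mul_sum, Finset.mul_sum, ← Finset.sum_sub_distrib]
    refine (Finset.abs_sum_le_sum_abs _ _).trans ?_
    calc _ ≤ ∑ j ∈ Finset.range r, (Qn:ℝ) ^ r * Er := by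
          refine Finset.sum_le_sum fun j hj => ?_
          have := hblock j (Finset.mem_range.mp hj).le G0 hG hG1
          rw [show (-1) ^ j * ∑' v, chG k F v * (G0 v * es P (fun p => Jf p v) j) - SA * (mean q G0 * ((-1) ^ j * es P jj j)) =
            (-1) ^ j * (∑' v, chG k F v * (G0 v * es P (fun p => Jf p v) j) - SA * (mean q G0 * es P jj j)) by ring,
            abs_mul, abs_pow, abs_neg, abs_one, one_pow, one_mul]
          exact this
      _ = _ := by simp
  have hT2 : |∑' v, chG k F v * (G0 v * ∏ p ∈ P, (1 - Jf p v)) - T| ≤ SA * es P jj r + Qn ^ r * Er := by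
    have e2 : T = ∑' v, chG k F v * (G0 v * ∑ j ∈ Finset.range r, (-1) ^ j * es P (fun p => Jf p v) j) := by
      rw [hT, Finset.sum_congr rfl fun j _ => tsum_mul_left.symm]
      rw [← Summable.tsum_finsetSum fun s _ => (h.summ _).mul_left _]
      refine tsum_congr fun v => ?_
      rw [Finset.mul_sum, Finset.mul_sum]
      refine Finset.sum_congr rfl fun j _ => by ring
    rw [e2, ← (h.summ _).tsum_sub (h.summ _)]
    have e3 : ∀ v, |chG k F v * (G0 v * ∏ p ∈ P, (1 - Jf p v)) - chG k F v * (G0 v * ∑ j ∈ Finset.range r, (-1) ^ j * es P (fun p => Jf p v) j)| ≤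
        chG k F v * (1 * es P (fun p => Jf p v) r) := by
      intro v
      rw [← mul_sub, ← mul_sub, abs_mul, abs_of_nonneg (h.chG01 v).1, abs_mul]
      refine mul_le_mul_of_nonneg_left ?_ (h.chG01 v).1
      exact mul_le_mul (hG1 v) (bonf P _ (fun p _ => ⟨Jf_nonneg v, Jf_le_one v⟩) r) (abs_nonneg _) (by norm_num)
    have e4 : |∑' v, (chG k F v * (G0 v * ∏ p ∈ P, (1 - Jf p v)) - chG k F v * (G0 v * ∑ j ∈ Finset.range r, (-1) ^ j * es P (fun p => Jf p v) j))| ≤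
        ∑' v, chG k F v * (1 * es P (fun p => Jf p v) r) := by
      have hsb := h.summ (k := k) (fun v => 1 * es P (fun p => Jf p v) r)
      have := tsum_of_norm_bounded hsb.hasSum (f := fun v => (chG k F v * (G0 v * ∏ p ∈ P, (1 - Jf p v)) - chG k F v * (G0 v * ∑ j ∈ Finset.range r, (-1) ^ j * es P (fun p => Jf p v) j))) e3
      exact this
    refine e4.trans ?_
    have h5 := hblock r le_rfl (fun _ => 1) (fun _ _ _ => rfl) (fun _ => by simp)
    have hm1 : mean (k := k) q (fun _ => 1) = 1 := by
      unfold mean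
      rw [Finset.sum_const, card_ibox, nsmul_eq_mul, mul_one]
      push_cast
      exact div_self (by positivity)
    rw [hm1, one_mul] at h5
    have := (abs_le.mp h5).2
    linarith
  have hes := es_bound (k := k) hQ1 P jj (fun p hp => ⟨(hP p hp).1.one_le, (hP p hp).2.1⟩) (fun p hp => ⟨(hj p hp).1, mean_J_le (hP p hp).1⟩) r
  have hb := bonf P jj hj r
  have hmu : |mean q G0| ≤ 1 := abs_mean_le hq hG1
  have hprod0 : 0 ≤ ∏ p ∈ P, (1 - jj p) := Finset.prod_nonneg fun p hp => by linarith [(hj p hp).2]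
  have hT3 : |SA * (mean q G0 * ∑ j ∈ Finset.range r, (-1) ^ j * es P jj j)| ≤ SA * (|mean q G0| * ∏ p ∈ P, (1 - jj p) + es P jj r) := by
    rw [abs_mul, abs_of_nonneg hSA0, abs_mul]
    refine mul_le_mul_of_nonneg_left ?_ hSA0
    have h6 : |∑ j ∈ Finset.range r, (-1) ^ j * es P jj j| ≤ ∏ p ∈ P, (1 - jj p) + es P jj r := by
      have := abs_le.mp hb
      rw [abs_le]; constructor <;> linarith
    calc _ ≤ |mean q G0| * (∏ p ∈ P, (1 - jj p) + es P jj r) := by gcongr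
      _ = |mean q G0| * ∏ p ∈ P, (1 - jj p) + |mean q G0| * es P jj r := by ring
      _ ≤ _ := by
        have : 0 ≤ es P jj r := (abs_nonneg _).trans hb
        nlinarith
  have hfin : |∑' v, chG k F v * (G0 v * ∏ p ∈ P, (1 - Jf p v))| ≤ (SA * es P jj r + Qn ^ r * Er) + r * (Qn ^ r * Er) +
      SA * (|mean q G0| * ∏ p ∈ P, (1 - jj p) + es P jj r) := by
    have h1 := abs_le.mp hT1
    have h2 := abs_le.mp hT2
    have h3 := abs_le.mp hT3
    rw [abs_le]; constructor <;> linarith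
  refine hfin.trans ?_
  have := mul_le_mul_of_nonneg_left hes hSA0
  linarith

end

section


lemma Wt.summ0 {M k : ℕ} {F : ℤ → ℝ} (h : Wt M F) : Summable fun v => chG k F v := by
  simpa using h.summ (k := k) (fun _ => 1)

lemma conj_iter (n : ℕ) (x : ℝ) : (⇑(starRingEnd ℂ))^[n] (x : ℂ) = x :=
  Function.iterate_fixed (Complex.conj_ofReal x) n

lemma gowersProd_real {k : ℕ} (f : ℤ → ℂ) (φ : ℤ → ℝ) (hf : ∀ n, f n = φ n) (v : VV k ℤ) :
    gowersProd k f v.1 v.2 = ((chG k φ v : ℝ) : ℂ) := by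
  unfold gowersProd chG
  push_cast
  refine Finset.prod_congr rfl fun ω _ => ?_
  rw [hf, conj_iter]
  rfl

lemma gowersTilde_real {k : ℕ} (f : ℤ → ℂ) (φ : ℤ → ℝ) (hf : ∀ n, f n = φ n) :
    gowersTildeU k f = (∑' v, chG k φ v) ^ ((1:ℝ) / 2 ^ k) := by
  unfold gowersTildeU
  congr 1
  rw [tsum_congr fun v => gowersProd_real f φ hf v, ← Complex.ofReal_tsum, Complex.ofReal_re]

lemma gowersUN_le {k : ℕ} {N : ℝ} (f : ℤ → ℂ) (φ ψ : ℤ → ℝ) (hφ : ∀ n, truncN N f n = φ n)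
    (hψ : ∀ n, truncN N (fun _ => 1) n = ψ n) (hD : 0 < ∑' v, chG k ψ v) :
    gowersUN k N f ≤ (|∑' v, chG k φ v| / ∑' v, chG k ψ v) ^ ((1:ℝ) / 2 ^ k) := by
  unfold gowersUN
  rw [gowersTilde_real _ φ hφ, gowersTilde_real _ ψ hψ, Real.div_rpow (abs_nonneg _) hD.le]
  exact div_le_div_of_nonneg_right ((le_abs_self _).trans (Real.abs_rpow_le_abs_rpow _ _)) (Real.rpow_nonneg hD.le _)

lemma chG_mul {k : ℕ} (f g : ℤ → ℝ) (v : VV k ℤ) : chG k (fun x => f x * g x) v = chG k f v * chG k g v := by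
  unfold chG; rw [Finset.prod_mul_distrib]

noncomputable def PS (w : ℝ) : Finset ℕ := (Finset.range (⌈w⌉₊ + 1)).filter fun p => Nat.Prime p ∧ (p : ℝ) < w

lemma mem_PS {w : ℝ} {p : ℕ} (h : p ∈ PS w) : p.Prime ∧ p ≤ ⌈w⌉₊ := by
  unfold PS at h
  rw [Finset.mem_filter, Finset.mem_range] at h
  exact ⟨h.2.1, by omega⟩

lemma chG_cramer {k : ℕ} (w : ℝ) (v : VV k ℤ) :
    chG k (cramer w) v = ∏ p ∈ PS w, (((p:ℝ) / (p - 1)) ^ (2 ^ k) * (1 - Jf p v)) := by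
  unfold chG cramer
  rw [Finset.prod_comm]
  refine Finset.prod_congr rfl fun p hp => ?_
  have hpp := (mem_PS hp).1
  unfold Jf
  have hd : (p:ℤ) ∣ ∏ ω : Fin k → Bool, Lf ω v ↔ ∃ ω, (p:ℤ) ∣ Lf ω v := by
    rw [Prime.dvd_finsetProd_iff (Nat.prime_iff_prime_int.mp hpp)]
    simp
  by_cases h : ∃ ω, (p:ℤ) ∣ Lf ω v
  · rw [if_pos (hd.mpr h)]
    obtain ⟨ω, hω⟩ := h
    rw [sub_self, mul_zero]
    exact Finset.prod_eq_zero (Finset.mem_univ ω) (if_pos hω)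
  · rw [if_neg (fun h' => h (hd.mp h'))]
    push Not at h
    rw [Finset.prod_congr rfl fun ω _ => if_neg (h ω)]
    rw [sub_zero, mul_one, Finset.prod_const, Finset.card_univ]
    congr 1
    simp

lemma chG_main {k q : ℕ} (w : ℝ) {g : ℤ → ℝ} (h : RC q g) (v : VV k ℤ) :
    chG k (cramer w) v * chG k g v = (∏ p ∈ PS w, ((p:ℝ) / (p - 1)) ^ (2 ^ k)) *
      (chG k g v * ∏ p ∈ (PS w).filter (fun p => ¬ p ∣ q), (1 - Jf p v)) := by
  rw [chG_cramer, Finset.prod_mul_distrib]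
  by_cases h0 : chG k g v = 0
  · rw [h0]; ring
  · have : ∏ p ∈ (PS w).filter (fun p => ¬ p ∣ q), (1 - Jf p v) = ∏ p ∈ PS w, (1 - Jf p v) := by
      rw [← Finset.prod_filter_mul_prod_filter_not (PS w) (fun p => ¬ p ∣ q)]
      rw [Finset.prod_congr (s₁ := (PS w).filter (fun p => ¬ ¬ p ∣ q)) rfl (g := fun _ => (1:ℝ)), Finset.prod_const_one, mul_one]
      intro p hp
      rw [Finset.mem_filter, not_not] at hp
      have hpp := (mem_PS hp.1).1
      unfold Jf
      rw [if_neg, sub_zero]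
      rw [Prime.dvd_finsetProd_iff (Nat.prime_iff_prime_int.mp hpp)]
      rintro ⟨ω, -, hω⟩
      apply h0
      apply Finset.prod_eq_zero (Finset.mem_univ ω)
      apply h.zero
      intro hc
      have := hc.isUnit_of_dvd' hω (Int.natCast_dvd_natCast.mpr hp.2)
      exact (Nat.prime_iff_prime_int.mp hpp).not_isUnit this
    rw [this]; ring

lemma den_lower {k M : ℕ} {F : ℤ → ℝ} (h : Wt M F) (hF : ∀ x : ℤ, 1 ≤ x → x ≤ M → F x = 1) (hM : 2 * (k + 1) ≤ M) :
    ((M:ℝ) / (2 * (k + 1))) ^ (k+1) ≤ ∑' v, chG k F v := by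
  set t := M / (k + 1) with ht
  have ht1 : (k + 1) * t ≤ M := Nat.mul_div_le M (k+1)
  have ht2 : (M:ℝ) / (2 * (k+1)) ≤ t := by
    have h1 : M < (k + 1) * (t + 1) := Nat.lt_mul_div_succ M (by omega)
    have h2 : (M:ℝ) ≤ (k+1) * (t + 1) := by exact_mod_cast h1.le
    have h3 : (2:ℝ) * (k+1) ≤ M := by exact_mod_cast hM
    rw [div_le_iff₀ (by positivity)]
    nlinarith
  let B : Finset (VV k ℤ) := (Finset.Icc (1:ℤ) t) ×ˢ Fintype.piFinset fun _ => Finset.Icc (1:ℤ) t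
  have hB : ∀ v ∈ B, chG k F v = 1 := by
    intro v hv
    simp only [B, Finset.mem_product, Fintype.mem_piFinset, Finset.mem_Icc] at hv
    unfold chG
    refine Finset.prod_eq_one fun ω _ => ?_
    have h0 : 0 ≤ ∑ i, (if ω i then v.2 i else 0) := Finset.sum_nonneg fun i _ => by
      have := hv.2 i
      split_ifs <;> omega
    have h1 : ∑ i, (if ω i then v.2 i else 0) ≤ ∑ i : Fin k, (t:ℤ) := Finset.sum_le_sum fun i _ => by
      have := hv.2 i
      split_ifs <;> omega
    simp at h1
    have h2 : ((k:ℤ) + 1) * t ≤ M := by exact_mod_cast ht1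
    apply hF
    · unfold Lf; linarith [hv.1.1]
    · unfold Lf; linarith [hv.1.2]
  calc ((M:ℝ) / (2 * (k + 1))) ^ (k+1) ≤ (t:ℝ) ^ (k+1) := by gcongr
    _ = ∑ v ∈ B, chG k F v := by
      rw [Finset.sum_congr rfl hB]
      simp [B, Fintype.card_piFinset]
      ring
    _ ≤ _ := h.summ0.sum_le_tsum _ fun v _ => (h.chG01 v).1

lemma cW_bound (w : ℝ) : ∏ p ∈ PS w, ((p:ℝ) / (p - 1)) ≤ Real.exp (2 * (1 + Real.log ⌈w⌉₊)) := by
  have h1 : ∏ p ∈ PS w, ((p:ℝ) / (p - 1)) ≤ ∏ p ∈ PS w, Real.exp (2 * (p:ℝ)⁻¹) := by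
    refine Finset.prod_le_prod (fun p hp => ?_) fun p hp => ?_
    · have : (2:ℝ) ≤ p := by exact_mod_cast (mem_PS hp).1.two_le
      exact div_nonneg (by linarith) (by linarith)
    · have : (2:ℝ) ≤ p := by exact_mod_cast (mem_PS hp).1.two_le
      have h2 := Real.add_one_le_exp (2 * (p:ℝ)⁻¹)
      refine le_trans ?_ h2
      rw [div_le_iff₀ (by linarith)]
      have h3 : (p:ℝ) * (p:ℝ)⁻¹ = 1 := mul_inv_cancel₀ (by linarith)
      have h4 : (p:ℝ)⁻¹ ≤ 1/2 := by rw [inv_le_comm₀ (by linarith) (by norm_num)]; linarith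
      nlinarith
  refine h1.trans ?_
  rw [← Real.exp_sum, ← Finset.mul_sum]
  apply Real.exp_le_exp.mpr
  gcongr
  calc ∑ p ∈ PS w, ((p:ℝ))⁻¹ ≤ ∑ p ∈ Finset.Icc 1 ⌈w⌉₊, ((p:ℝ))⁻¹ := by
          apply Finset.sum_le_sum_of_subset_of_nonneg
          · intro p hp; exact Finset.mem_Icc.mpr ⟨(mem_PS hp).1.one_le, (mem_PS hp).2⟩
          · intros; positivity
      _ ≤ _ := by
          have := harmonic_le_one_add_log ⌈w⌉₊
          rw [harmonic_eq_sum_Icc] at this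
          push_cast at this
          exact this

lemma main_factor (k : ℕ) : ∃ C : ℝ, 0 < C ∧ ∀ (w : ℝ) (q : ℕ), q ≠ 0 → ∀ g : ℤ → ℝ, RC q g →
    (∏ p ∈ PS w, ((p:ℝ) / (p - 1)) ^ (2 ^ k)) * (|mean q (chG k g)| *
      ∏ p ∈ (PS w).filter (fun p => ¬ p ∣ q), (1 - mean p (Jf (k := k) p))) ≤ C * (q:ℝ) ^ (-(1/4) : ℝ) := by
  obtain ⟨C1, hC1, hb⟩ := char_bound k
  set D : ℝ := 2 ^ (2 ^ k) * (2 ^ k) ^ 2 with hD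
  have hsum : Summable fun n : ℕ => D * (1 / (n:ℝ) ^ 2) := (Real.summable_one_div_nat_pow.mpr (by norm_num)).mul_left D
  refine ⟨C1 * Real.exp (∑' n : ℕ, D * (1 / (n:ℝ) ^ 2)), by positivity, fun w q hq g h => ?_⟩
  have hq0 : (0:ℝ) < q := by exact_mod_cast Nat.pos_of_ne_zero hq
  have h2 : ∀ p ∈ PS w, (2:ℝ) ≤ p := fun p hp => by exact_mod_cast (mem_PS hp).1.two_le
  have hA0 : ∀ p ∈ (PS w).filter (fun p => ¬ p ∣ q), 0 ≤ (((p:ℝ) / (p - 1)) ^ (2 ^ k) * (1 - mean p (Jf (k := k) p))) := by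
    intro p hp
    have hp' := (Finset.mem_filter.mp hp).1
    have := h2 p hp'
    have h3 := abs_mean_le (k := k) (mem_PS hp').1.ne_zero (G := Jf p) (fun v => by rw [abs_of_nonneg (Jf_nonneg v)]; exact Jf_le_one v)
    have h4 := (abs_le.mp h3).2
    exact mul_nonneg (pow_nonneg (div_nonneg (by linarith) (by linarith)) _) (by linarith)
  have hA00 := Finset.prod_nonneg hA0
  have hA : ∏ p ∈ (PS w).filter (fun p => ¬ p ∣ q), (((p:ℝ) / (p - 1)) ^ (2 ^ k) * (1 - mean p (Jf (k := k) p))) ≤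
      Real.exp (∑' n : ℕ, D * (1 / (n:ℝ) ^ 2)) := by
    refine le_trans ?_ (Real.exp_le_exp.mpr (hsum.sum_le_tsum ((PS w).filter (fun p => ¬ p ∣ q)) fun n _ => by positivity))
    rw [Real.exp_sum]
    refine Finset.prod_le_prod hA0 fun p hp => ?_
    · have hp' := (Finset.mem_filter.mp hp).1
      refine (local_factor (mem_PS hp').1).trans ?_
      have := Real.add_one_le_exp (D * (1 / (p:ℝ) ^ 2))
      refine le_trans (le_of_eq ?_) this
      rw [hD]; ring
  have hB : ∏ p ∈ (PS w).filter (fun p => ¬ ¬ p ∣ q), ((p:ℝ) / (p - 1)) ^ (2 ^ k) ≤ (2 ^ (2 ^ k)) ^ q.primeFactors.card := by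
    calc _ ≤ ∏ p ∈ (PS w).filter (fun p => ¬ ¬ p ∣ q), (2:ℝ) ^ (2 ^ k) := by
          refine Finset.prod_le_prod (fun p hp => ?_) fun p hp => ?_
          · have := h2 p (Finset.mem_filter.mp hp).1
            exact pow_nonneg (div_nonneg (by linarith) (by linarith)) _
          · have := h2 p (Finset.mem_filter.mp hp).1
            have h5 : (p:ℝ) / (p - 1) ≤ 2 := by rw [div_le_iff₀ (by linarith)]; linarith
            exact pow_le_pow_left₀ (div_nonneg (by linarith) (by linarith)) h5 _
      _ = (2 ^ (2 ^ k)) ^ ((PS w).filter (fun p => ¬ ¬ p ∣ q)).card := by rw [Finset.prod_const]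
      _ ≤ _ := by
          apply pow_le_pow_right₀ (one_le_pow₀ (by norm_num))
          apply Finset.card_le_card
          intro p hp
          rw [Finset.mem_filter, not_not] at hp
          exact Nat.mem_primeFactors.mpr ⟨(mem_PS hp.1).1, hp.2, hq⟩
  have hB0 : 0 ≤ ∏ p ∈ (PS w).filter (fun p => ¬ ¬ p ∣ q), ((p:ℝ) / (p - 1)) ^ (2 ^ k) :=
    Finset.prod_nonneg fun p hp => by
      have := h2 p (Finset.mem_filter.mp hp).1
      exact pow_nonneg (div_nonneg (by linarith) (by linarith)) _
  rw [← Finset.prod_filter_mul_prod_filter_not (PS w) (fun p => ¬ p ∣ q)]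
  have hb' := hb q hq g h
  have hqq : (q:ℝ) ^ (1/4:ℝ) * (q:ℝ) ^ (-(1/4) : ℝ) = 1 := by
    rw [← Real.rpow_add hq0]; simp
  have hqn : 0 < (q:ℝ) ^ (-(1/4) : ℝ) := Real.rpow_pos_of_pos hq0 _
  calc _ = (|mean q (chG k g)| * ∏ p ∈ (PS w).filter (fun p => ¬ ¬ p ∣ q), ((p:ℝ) / (p - 1)) ^ (2 ^ k)) *
        ∏ p ∈ (PS w).filter (fun p => ¬ p ∣ q), (((p:ℝ) / (p - 1)) ^ (2 ^ k) * (1 - mean p (Jf (k := k) p))) := by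
        rw [Finset.prod_mul_distrib]; ring
    _ ≤ (|mean q (chG k g)| * (2 ^ (2 ^ k)) ^ q.primeFactors.card) * Real.exp (∑' n : ℕ, D * (1 / (n:ℝ) ^ 2)) := by
        gcongr
    _ = (|mean q (chG k g)| * (2 ^ (2 ^ k)) ^ q.primeFactors.card * (q:ℝ)^(1/4:ℝ)) * (q:ℝ) ^ (-(1/4) : ℝ) * Real.exp (∑' n : ℕ, D * (1 / (n:ℝ) ^ 2)) := by
        linear_combination (-(|mean q (chG k g)| * (2 ^ (2 ^ k)) ^ q.primeFactors.card) * Real.exp (∑' n : ℕ, D * (1 / (n:ℝ) ^ 2))) * hqq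
    _ ≤ C1 * (q:ℝ) ^ (-(1/4) : ℝ) * Real.exp (∑' n : ℕ, D * (1 / (n:ℝ) ^ 2)) := by gcongr
    _ = _ := by ring

end

section


lemma poly1 {l K : ℝ} (hK : 1 ≤ K) (hl : 15 * K + 16 ≤ l) :
    5 * K * (2 + l) + l ≤ l ^ 2 ∧ 2 * K * (2 + l) + (l^2 + 1) + (2 * l^2 + 3) * (l + 1) + 1 + l ≤ l ^ 10 ∧
    (l^2 + 2) * (l + 1) ≤ l ^ 10 - 1 ∧ l ≤ l ^ 10 := by
  have hl16 : 16 ≤ l := by linarith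
  have h1 : 5 * K * (2 + l) + l ≤ l ^ 2 := by nlinarith
  have h3 : 16 * l^2 ≤ l ^ 3 := by nlinarith [sq_nonneg l]
  have h4 : 16 * l^3 ≤ l ^ 4 := by nlinarith [sq_nonneg l, pow_pos (by linarith : 0 < l) 3]
  have h10 : l ^ 4 ≤ l ^ 10 := pow_le_pow_right₀ (by linarith) (by norm_num)
  have h2 : 16 * l ≤ l ^ 2 := by nlinarith
  have h5 : 2 * K * (2 + l) ≤ l ^ 2 := by nlinarith
  refine ⟨h1, ?_, ?_, ?_⟩
  · have : (2 * l^2 + 3) * (l + 1) = 2 * l^3 + 2 * l^2 + 3 * l + 3 := by ring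
    rw [this]; nlinarith
  · have : (l^2 + 2) * (l + 1) = l^3 + l^2 + 2 * l + 2 := by ring
    rw [this]; nlinarith
  · nlinarith

lemma numerics (k : ℕ) : ∃ N₀ : ℝ, 1 ≤ N₀ ∧ ∀ N : ℝ, N₀ ≤ N → ∃ (l : ℝ) (r : ℕ), 0 ≤ l ∧ Qparam N = Real.exp l ∧
    2 * (k + 1) ≤ ⌊N⌋₊ ∧ ⌈Qparam N⌉₊ ^ (r+1) ≤ ⌊N⌋₊ ∧
    Real.exp (2 * (1 + Real.log ⌈Qparam N⌉₊)) ^ (2 ^ k) * (2 * Real.exp (-r + 3 * 2 ^ k * (1 + Real.log ⌈Qparam N⌉₊))) ≤ 2 * Real.exp (-l) ∧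
    Real.exp (2 * (1 + Real.log ⌈Qparam N⌉₊)) ^ (2 ^ k) * ((r + 1) * (⌈Qparam N⌉₊:ℝ) ^ r * (⌈Qparam N⌉₊:ℝ) ^ (r+1)) ≤ (⌊N⌋₊ : ℝ) * Real.exp (-l) := by
  set K : ℝ := 2 ^ k with hKd
  have hK : 1 ≤ K := one_le_pow₀ (by norm_num)
  set a : ℝ := 15 * K + 16 with ha
  have ha16 : 16 ≤ a := by linarith
  refine ⟨Real.exp (a ^ 10), Real.one_le_exp (by positivity), fun N hN => ?_⟩
  have hN0 : 0 < N := lt_of_lt_of_le (Real.exp_pos _) hN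
  have hlog : a ^ 10 ≤ Real.log N := by rwa [Real.le_log_iff_exp_le hN0]
  have hlog0 : 0 ≤ Real.log N := le_trans (by positivity) hlog
  set l : ℝ := Real.log N ^ ((1:ℝ)/10) with hl
  have hl10 : l ^ 10 = Real.log N := by
    rw [hl, ← Real.rpow_natCast, ← Real.rpow_mul hlog0]; norm_num
  have hl0 : 0 ≤ l := Real.rpow_nonneg hlog0 _
  have hal : a ≤ l := by
    by_contra hcon
    push Not at hcon
    have : l ^ 10 < a ^ 10 := by gcongr
    linarith
  obtain ⟨p1, p2, p3, p4⟩ := poly1 hK hal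
  have hNe : N = Real.exp (l ^ 10) := by rw [hl10, Real.exp_log hN0]
  have hQ : Qparam N = Real.exp l := rfl
  have hl16 : 16 ≤ l := by linarith
  have hMlow : Real.exp (l ^ 10 - 1) ≤ (⌊N⌋₊ : ℝ) := by
    have h1 : N < ⌊N⌋₊ + 1 := Nat.lt_floor_add_one N
    have h2 : Real.exp (l ^ 10 - 1) * Real.exp 1 = N := by rw [← Real.exp_add, hNe]; ring_nf
    have h3 := Real.add_one_le_exp (l ^ 10 - 1)
    have h4 := Real.exp_one_gt_d9
    nlinarith
  set b := Real.log ⌈Qparam N⌉₊ with hb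
  have hQ1 : 1 ≤ Qparam N := by rw [hQ]; exact Real.one_le_exp hl0
  have hQn0 : (0:ℝ) < ⌈Qparam N⌉₊ := lt_of_lt_of_le (by linarith) (Nat.le_ceil _)
  have hQnb : (⌈Qparam N⌉₊:ℝ) = Real.exp b := (Real.exp_log hQn0).symm
  have hb1 : b ≤ l + 1 := by
    rw [hb, Real.log_le_iff_le_exp hQn0]
    have h1 := (Nat.ceil_lt_add_one (by linarith : 0 ≤ Qparam N)).le
    refine h1.trans ?_
    rw [Real.exp_add, ← hQ]
    have h4 := Real.exp_one_gt_d9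
    nlinarith
  have hb0 : 0 ≤ b := Real.log_natCast_nonneg _
  set r := ⌈l ^ 2⌉₊ with hr
  have hr1 : l ^ 2 ≤ r := Nat.le_ceil _
  have hr2 : (r:ℝ) ≤ l ^ 2 + 1 := (Nat.ceil_lt_add_one (by positivity)).le
  refine ⟨l, r, hl0, hQ, ?_, ?_, ?_, ?_⟩
  · have h1 : ((2 * (k + 1) : ℕ) : ℝ) ≤ ⌊N⌋₊ := by
      refine le_trans ?_ hMlow
      have h3 := Real.add_one_le_exp (l ^ 10 - 1)
      have h5 : ((k + 1 : ℕ):ℝ) ≤ K := by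
        rw [hKd]; exact_mod_cast (Nat.lt_two_pow_self : k < 2 ^ k)
      push_cast at h5 ⊢
      linarith
    exact_mod_cast h1
  · have h1 : ((⌈Qparam N⌉₊ ^ (r+1) : ℕ) : ℝ) ≤ ⌊N⌋₊ := by
      refine le_trans ?_ hMlow
      push_cast
      rw [hQnb, ← Real.exp_nat_mul]
      apply Real.exp_le_exp.mpr
      push_cast
      refine le_trans ?_ p3
      have : (r:ℝ) + 1 ≤ l^2 + 2 := by linarith
      gcongr
    exact_mod_cast h1
  · rw [← Real.exp_nat_mul, mul_left_comm, ← Real.exp_add]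
    push_cast
    rw [← hKd]
    gcongr
    have : K * (1 + b) ≤ K * (2 + l) := mul_le_mul_of_nonneg_left (by linarith) (by linarith)
    linarith
  · have hre : (r:ℝ) + 1 ≤ Real.exp r := Real.add_one_le_exp _
    rw [hQnb]
    calc _ ≤ Real.exp (2 * (1 + b)) ^ (2 ^ k) * (Real.exp r * Real.exp b ^ r * Real.exp b ^ (r+1)) := by gcongr
      _ = Real.exp (2 * K * (1 + b) + r + (2 * r + 1) * b) := by
        rw [← Real.exp_nat_mul, ← Real.exp_nat_mul, ← Real.exp_nat_mul, ← Real.exp_add, ← Real.exp_add, ← Real.exp_add]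
        push_cast
        rw [← hKd]
        ring_nf
      _ ≤ Real.exp ((l ^ 10 - 1) + -l) := by
        apply Real.exp_le_exp.mpr
        have h1 : 2 * K * (1 + b) ≤ 2 * K * (2 + l) := mul_le_mul_of_nonneg_left (by linarith) (by linarith)
        have h2 : (2 * (r:ℝ) + 1) * b ≤ (2 * l^2 + 3) * (l + 1) := by
          have : (2 * (r:ℝ) + 1) ≤ 2 * l^2 + 3 := by linarith
          gcongr
        linarith
      _ ≤ _ := by rw [Real.exp_add]; gcongr

noncomputable def Fw (M : ℕ) (β : ℝ) (x : ℤ) : ℝ := if 1 ≤ x ∧ x ≤ M then (x.toNat : ℝ) ^ (β - 1) else 0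

lemma Fw_Wt (M : ℕ) {β : ℝ} (hβ : β ≤ 1) : Wt M (Fw M β) := by
  refine ⟨fun x => ?_, fun x => ?_, fun x hx => ?_, fun x y hx hxy => ?_⟩
  · unfold Fw; split_ifs
    · positivity
    · exact le_rfl
  · unfold Fw; split_ifs with h
    · apply Real.rpow_le_one_of_one_le_of_nonpos
      · have : 1 ≤ x.toNat := by omega
        exact_mod_cast this
      · linarith
    · norm_num
  · unfold Fw at hx
    by_contra h
    exact hx (if_neg h)
  · unfold Fw
    by_cases hy : 1 ≤ y ∧ y ≤ M
    · rw [if_pos hy, if_pos (by omega)]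
      apply Real.rpow_le_rpow_of_nonpos
      · have : 0 < x.toNat := by omega
        exact_mod_cast this
      · have : x.toNat ≤ y.toNat := by omega
        exact_mod_cast this
      · linarith
    · rw [if_neg hy]
      split_ifs
      · positivity
      · exact le_rfl

lemma floor_cond {N : ℝ} (hN : 0 ≤ N) (n : ℤ) : (1 ≤ n ∧ (n:ℝ) ≤ N) ↔ (1 ≤ n ∧ n ≤ (⌊N⌋₊ : ℤ)) := by
  refine and_congr_right fun h => ?_
  rw [Int.natCast_floor_eq_floor hN, Int.le_floor]

theorem main_thm (k : ℕ) :
    ∃ c₀ c C : ℝ, 0 < c₀ ∧ 0 < c ∧ 0 < C ∧ ∃ N₀ : ℝ, ∀ N : ℝ, N₀ ≤ N →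
      ∀ (q : ℕ) [NeZero q] (χ : DirichletCharacter ℂ q), (q : ℝ) < Qparam N →
        χ.IsPrimitive → (∀ n : ZMod q, (starRingEnd ℂ) (χ n) = χ n) →
        ∀ β : ℝ, 1 - c₀ / Real.log (Qparam N) < β → β < 1 →
          DirichletCharacter.LFunction χ (β : ℂ) = 0 →
          gowersUN k N
              (fun n : ℤ => ((cramer (Qparam N) n : ℝ) : ℂ) *
                (((n.toNat : ℝ) ^ (β - 1) : ℝ) : ℂ) * χ ((n.toNat : ℕ) : ZMod q))
            ≤ C * (q : ℝ) ^ (-c) := by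
  obtain ⟨N₀, hN₀, hnum⟩ := numerics k
  obtain ⟨C1, hC1, hmain⟩ := main_factor k
  set C3 : ℝ := 2 ^ k * 5 ^ k * (2 * (k + 1)) ^ (k + 2) with hC3
  have hC30 : 0 < C3 := by positivity
  refine ⟨1, (1/4) * (1 / 2 ^ k), (C1 + 2 + C3) ^ ((1:ℝ) / 2 ^ k), one_pos, by positivity, by positivity, N₀, ?_⟩
  intro N hN q _ χ hqQ hprim hreal β _ hβ _
  obtain ⟨l, r, hl0, hQ, hM1, hM2, hn1, hn2⟩ := hnum N hN
  have hN0 : 0 ≤ N := by linarith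
  set Q := Qparam N with hQd
  set M := ⌊N⌋₊ with hMd
  set g : ℤ → ℝ := fun x => (χ (x : ZMod q)).re with hg
  have hRC : RC q g := RC_of_char χ hprim hreal
  have hq : q ≠ 0 := NeZero.ne q
  have hq0 : (0:ℝ) < q := by exact_mod_cast Nat.pos_of_ne_zero hq
  have hF := Fw_Wt M hβ.le
  have hF1 := Fw_Wt M (le_refl (1:ℝ))
  have hF1v : ∀ x : ℤ, 1 ≤ x → x ≤ M → Fw M 1 x = 1 := fun x h1 h2 => by
    unfold Fw; rw [if_pos ⟨h1, h2⟩]; simp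
  set φ : ℤ → ℝ := fun n => Fw M β n * (cramer Q n * g n) with hφ
  set Den := ∑' v, chG k (Fw M 1) v with hDen
  have hDlow : ((M:ℝ) / (2 * (k + 1))) ^ (k+1) ≤ Den := den_lower hF1 hF1v hM1
  have hMpos : 0 < M := by omega
  have hMpos' : (0:ℝ) < M := by exact_mod_cast hMpos
  have hDen0 : 0 < Den := lt_of_lt_of_le (by positivity) hDlow
  have hred : gowersUN k N (fun n : ℤ => ((cramer Q n : ℝ) : ℂ) * (((n.toNat : ℝ) ^ (β - 1) : ℝ) : ℂ) * χ ((n.toNat : ℕ) : ZMod q))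
      ≤ (|∑' v, chG k φ v| / Den) ^ ((1:ℝ) / 2 ^ k) := by
    refine gowersUN_le _ φ (Fw M 1) (fun n => ?_) (fun n => ?_) hDen0
    · unfold truncN
      simp only [hφ, Fw]
      by_cases h : 1 ≤ n ∧ (n:ℝ) ≤ N
      · rw [if_pos h, if_pos ((floor_cond hN0 n).mp h)]
        have h1 : ((n.toNat : ℕ) : ZMod q) = (n : ZMod q) := by
          have : ((n.toNat : ℕ) : ℤ) = n := Int.toNat_of_nonneg (by omega)
          rw [← Int.cast_natCast, this]
        have h2 : ((g n : ℝ) : ℂ) = χ (n : ZMod q) := Complex.conj_eq_iff_re.mp (hreal _)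
        rw [h1, ← h2]
        push_cast
        ring
      · rw [if_neg h, if_neg (fun h' => h ((floor_cond hN0 n).mpr h'))]
        simp
    · unfold truncN Fw
      by_cases h : 1 ≤ n ∧ (n:ℝ) ≤ N
      · rw [if_pos h, if_pos ((floor_cond hN0 n).mp h)]
        simp
      · rw [if_neg h, if_neg (fun h' => h ((floor_cond hN0 n).mpr h'))]
        simp
  set P := (PS Q).filter (fun p => ¬ p ∣ q) with hP
  set W := ∏ p ∈ PS Q, ((p:ℝ) / (p - 1)) ^ (2 ^ k) with hW
  set SA := ∑' v, chG k (Fw M β) v with hSA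
  have hW0 : 0 ≤ W := Finset.prod_nonneg fun p hp => by
    have : (2:ℝ) ≤ p := by exact_mod_cast (mem_PS hp).1.two_le
    exact pow_nonneg (div_nonneg (by linarith) (by linarith)) _
  have hWle : W ≤ Real.exp (2 * (1 + Real.log ⌈Q⌉₊)) ^ (2 ^ k) := by
    rw [hW, Finset.prod_pow]
    refine pow_le_pow_left₀ (Finset.prod_nonneg fun p hp => ?_) (cW_bound Q) _
    have : (2:ℝ) ≤ p := by exact_mod_cast (mem_PS hp).1.two_le
    exact div_nonneg (by linarith) (by linarith)
  have hY : ∑' v, chG k φ v = W * ∑' v, chG k (Fw M β) v * (chG k g v * ∏ p ∈ P, (1 - Jf p v)) := by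
    rw [← tsum_mul_left]
    refine tsum_congr fun v => ?_
    rw [hφ, chG_mul, chG_mul, chG_main Q hRC v]
    ring
  have hSAD : SA ≤ Den := by
    refine hF.summ0.tsum_le_tsum (fun v => ?_) hF1.summ0
    refine Finset.prod_le_prod (fun ω _ => hF.nn _) fun ω _ => ?_
    by_cases hx : 1 ≤ Lf ω v ∧ Lf ω v ≤ M
    · rw [hF1v _ hx.1 hx.2]; exact hF.le1 _
    · have : Fw M β (Lf ω v) = 0 := if_neg hx
      rw [this]; exact hF1.nn _
  have hSA0 : 0 ≤ SA := tsum_nonneg fun v => (hF.chG01 v).1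
  have hqQn : q ≤ ⌈Q⌉₊ := by
    have : (q:ℝ) ≤ ⌈Q⌉₊ := hqQ.le.trans (Nat.le_ceil _)
    exact_mod_cast this
  have hs := sieve (k := k) hF (P := P) hq hqQn (fun p hp => by
    rw [hP, Finset.mem_filter] at hp
    exact ⟨(mem_PS hp.1).1, (mem_PS hp.1).2, hp.2⟩) hM2 hRC.chG_per hRC.chG_abs
  rw [← hSA] at hs
  have hmn := hmain Q q hq g hRC
  rw [← hW, ← hP] at hmn
  set X := ∑' v, chG k (Fw M β) v * (chG k g v * ∏ p ∈ P, (1 - Jf p v)) with hX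
  set mu := |mean q (chG k g)| * ∏ p ∈ P, (1 - mean p (Jf (k := k) p)) with hmu
  set E := 2 * Real.exp (-r + 3 * 2 ^ k * (1 + Real.log ⌈Q⌉₊)) with hE
  have hE0 : 0 ≤ E := by positivity
  set qq := (q:ℝ) ^ (-(1/4) : ℝ) with hqq
  have hel : Real.exp (-l) ≤ qq := by
    have h1 : Real.exp (-l) ≤ Real.exp l ^ (-(1/4) : ℝ) := by
      rw [← Real.exp_mul]
      apply Real.exp_le_exp.mpr
      linarith
    refine h1.trans ?_
    apply Real.rpow_le_rpow_of_nonpos hq0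
    · rw [← hQ]; exact hqQ.le
    · norm_num
  have hqq0 : 0 < qq := Real.rpow_pos_of_pos hq0 _
  have hWE : W * E ≤ 2 * qq := by
    calc W * E ≤ Real.exp (2 * (1 + Real.log ⌈Q⌉₊)) ^ (2 ^ k) * E := by gcongr
      _ ≤ 2 * Real.exp (-l) := hn1
      _ ≤ _ := by gcongr
  have hWR : W * ((r + 1) * (⌈Q⌉₊:ℝ) ^ r * (⌈Q⌉₊:ℝ) ^ (r+1)) ≤ M * qq := by
    calc _ ≤ Real.exp (2 * (1 + Real.log ⌈Q⌉₊)) ^ (2 ^ k) * ((r + 1) * (⌈Q⌉₊:ℝ) ^ r * (⌈Q⌉₊:ℝ) ^ (r+1)) := by gcongr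
      _ ≤ M * Real.exp (-l) := hn2
      _ ≤ _ := by gcongr
  have hmu1 : SA * (W * (mu + E)) ≤ Den * ((C1 + 2) * qq) := by
    have h1 : W * (mu + E) ≤ (C1 + 2) * qq := by
      rw [mul_add, add_mul]; exact add_le_add hmn hWE
    calc _ ≤ SA * ((C1 + 2) * qq) := by gcongr
      _ ≤ _ := by gcongr
  have herr : (W * ((r + 1) * (⌈Q⌉₊:ℝ) ^ r * (⌈Q⌉₊:ℝ) ^ (r+1))) * (2 ^ k * (4 * M + 1) ^ k * (2 * (k + 1))) ≤ Den * (C3 * qq) := by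
    have h45 : 4 * (M:ℝ) + 1 ≤ 5 * M := by
      have : (1:ℝ) ≤ M := by exact_mod_cast hMpos
      linarith
    calc _ ≤ (M * qq) * (2 ^ k * (5 * M) ^ k * (2 * (k + 1))) := by gcongr
      _ = ((M:ℝ) / (2 * (k + 1))) ^ (k+1) * (C3 * qq) := by
        rw [hC3, div_pow, mul_pow]
        field_simp
        try ring
      _ ≤ _ := by gcongr
  have hYb : |∑' v, chG k φ v| ≤ Den * ((C1 + 2 + C3) * qq) := by
    rw [hY, abs_mul, abs_of_nonneg hW0]
    calc _ ≤ W * (SA * (mu + E) + (r + 1) * (⌈Q⌉₊:ℝ) ^ r * (2 ^ k * ((4 * M + 1) ^ k * (2 * ((k + 1) * (⌈Q⌉₊:ℝ) ^ (r+1)))))) := by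
          gcongr
      _ = SA * (W * (mu + E)) + (W * ((r + 1) * (⌈Q⌉₊:ℝ) ^ r * (⌈Q⌉₊:ℝ) ^ (r+1))) * (2 ^ k * (4 * M + 1) ^ k * (2 * (k + 1))) := by ring
      _ ≤ Den * ((C1 + 2) * qq) + Den * (C3 * qq) := add_le_add hmu1 herr
      _ = _ := by ring
  refine hred.trans ?_
  have h1 : |∑' v, chG k φ v| / Den ≤ (C1 + 2 + C3) * qq := by
    rw [div_le_iff₀ hDen0]; linarith
  calc _ ≤ ((C1 + 2 + C3) * qq) ^ ((1:ℝ) / 2 ^ k) := by gcongr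
    _ = _ := by
      rw [Real.mul_rpow (by positivity) hqq0.le, hqq, ← Real.rpow_mul hq0.le]
      congr 2
      ring

end

theorem siegel_correction_vonMangoldt_gowers_uniform (k : ℕ) (hk : 2 ≤ k) :
    ∃ c₀ c C : ℝ, 0 < c₀ ∧ 0 < c ∧ 0 < C ∧ ∃ N₀ : ℝ, ∀ N : ℝ, N₀ ≤ N →
      ∀ (q : ℕ) [NeZero q] (χ : DirichletCharacter ℂ q), (q : ℝ) < Qparam N →
        χ.IsPrimitive → (∀ n : ZMod q, (starRingEnd ℂ) (χ n) = χ n) →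
        ∀ β : ℝ, 1 - c₀ / Real.log (Qparam N) < β → β < 1 →
          DirichletCharacter.LFunction χ (β : ℂ) = 0 →
          gowersUN k N
              (fun n : ℤ => ((cramer (Qparam N) n : ℝ) : ℂ) *
                (((n.toNat : ℝ) ^ (β - 1) : ℝ) : ℂ) * χ ((n.toNat : ℕ) : ZMod q))
            ≤ C * (q : ℝ) ^ (-c) := by
  exact main_thm k
end

section
/- Let k ≥ 1 be an integer, let G be an additive abelian group, let H be a subgroup of G, and let f: G → ℂ be finitely supported. For each coset a + H ∈ G/H define F(a + H) := ‖f(a + ·)‖_{Ũ^k(H)}, the unnormalized Gowers norm over H of the function h ↦ f(a + h) (this value does not depend on the choice of coset representative a, and F: G/H → ℝ is finitely supported). Then ‖f‖_{Ũ^k(G)} ≤ ‖F‖_{Ũ^k(G/H)}. -/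
open scoped Classical

noncomputable def gIP {G : Type*} [AddCommGroup G] (k : ℕ) (f : (Fin k → Bool) → G → ℂ) (n : G)
    (h : Fin k → G) : ℂ :=
  ∏ ω : Fin k → Bool,
    (⇑(starRingEnd ℂ))^[(Finset.univ.filter fun i => ω i = true).card]
      (f ω (n + ∑ i, if ω i then h i else 0))

lemma conj_iter_eq_zero (n : ℕ) (x : ℂ) : (⇑(starRingEnd ℂ))^[n] x = 0 ↔ x = 0 := by
  constructor
  · intro h
    have h2 : (⇑(starRingEnd ℂ))^[n] x = (⇑(starRingEnd ℂ))^[n] 0 := by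
      rw [h, iterate_map_zero]
    exact (Function.Injective.iterate (RingHom.injective _) n) h2
  · rintro rfl
    exact iterate_map_zero _ _

lemma gIP_support {G : Type*} [AddCommGroup G] (k : ℕ) (f : (Fin k → Bool) → G → ℂ)
    (hf : ∀ ω, (Function.support (f ω)).Finite) :
    (Function.support fun p : G × (Fin k → G) => gIP k f p.1 p.2).Finite := by
  have hfin : (Set.pi Set.univ fun ω : Fin k → Bool => Function.support (f ω)).Finite :=
    Set.Finite.pi' hf |>.subset (by intro x hx; simpa using hx)
  let φ : G × (Fin k → G) → ((Fin k → Bool) → G) :=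
    fun p ω => p.1 + ∑ i, if ω i then p.2 i else 0
  have hinj : Function.Injective φ := by
    rintro ⟨n, h⟩ ⟨n', h'⟩ e
    have e0 : n = n' := by simpa [φ] using congrFun e (fun _ => false)
    subst e0
    have : h = h' := by
      funext i
      simpa [φ] using congrFun e (fun j => decide (j = i))
    rw [this]
  refine (hfin.preimage hinj.injOn).subset ?_
  intro p hp
  simp only [Function.mem_support, gIP, Finset.prod_ne_zero_iff, ne_eq, conj_iter_eq_zero] at hp
  simpa [φ] using hp

lemma gIP_split {G : Type*} [AddCommGroup G] (m : ℕ) (i : Fin (m+1))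
    (f : (Fin (m+1) → Bool) → G → ℂ) (n : G) (h : Fin (m+1) → G) :
    gIP (m+1) f n h =
      gIP m (fun ω => f (i.insertNth (α := fun _ => Bool) false ω)) n (fun j => h (i.succAbove j)) *
      (starRingEnd ℂ) (gIP m (fun ω => f (i.insertNth (α := fun _ => Bool) true ω)) (n + h i)
        (fun j => h (i.succAbove j))) := by
  unfold gIP
  rw [← (Fin.insertNthEquiv (fun _ => Bool) i).prod_comp, Fintype.prod_prod_type]
  simp only [Fintype.prod_bool, map_prod]
  rw [mul_comm]
  congr 1
  · refine Finset.prod_congr rfl fun ω _ => ?_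
    simp only [Finset.card_filter, Fin.sum_univ_succAbove _ i, Fin.insertNthEquiv_apply,
      Fin.insertNth_apply_same, Fin.insertNth_apply_succAbove, Bool.false_eq_true, if_false,
      zero_add]
    rfl
  · refine Finset.prod_congr rfl fun ω _ => ?_
    simp only [Finset.card_filter, Fin.sum_univ_succAbove _ i, Fin.insertNthEquiv_apply,
      Fin.insertNth_apply_same, Fin.insertNth_apply_succAbove, if_true]
    rw [add_comm 1, Function.iterate_succ_apply', add_assoc]
    rfl

noncomputable def gS {G : Type*} [AddCommGroup G] (m : ℕ) (f : (Fin m → Bool) → G → ℂ) (h : Fin m → G) : ℂ :=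
  ∑' n, gIP m f n h

noncomputable def gI {G : Type*} [AddCommGroup G] (k : ℕ) (f : (Fin k → Bool) → G → ℂ) : ℂ :=
  ∑' p : G × (Fin k → G), gIP k f p.1 p.2

noncomputable def gEquiv (G : Type*) [AddCommGroup G] (m : ℕ) (i : Fin (m+1)) :
    G × (Fin (m+1) → G) ≃ (Fin m → G) × (G × G) where
  toFun p := (fun j => p.2 (i.succAbove j), (p.1, p.1 + p.2 i))
  invFun q := (q.2.1, i.insertNth (α := fun _ => G) (q.2.2 - q.2.1) q.1)
  left_inv := by
    rintro ⟨n, h⟩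
    simp only [add_sub_cancel_left, Prod.mk.injEq, true_and]
    exact Fin.insertNth_self_removeNth i h
  right_inv := by
    rintro ⟨h, n, n'⟩
    simp

lemma gS_support {G : Type*} [AddCommGroup G] (m : ℕ) (f : (Fin m → Bool) → G → ℂ)
    (hf : ∀ ω, (Function.support (f ω)).Finite) : (Function.support (gS m f)).Finite := by
  refine ((gIP_support m f hf).image Prod.snd).subset ?_
  intro h hh
  by_contra hc
  apply hh
  have : ∀ n, gIP m f n h = 0 := by
    intro n
    by_contra h0
    exact hc ⟨(n, h), h0, rfl⟩
  simp [gS, this]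

lemma gI_eq {G : Type*} [AddCommGroup G] (m : ℕ) (i : Fin (m+1))
    (f : (Fin (m+1) → Bool) → G → ℂ) (hf : ∀ ω, (Function.support (f ω)).Finite) :
    gI (m+1) f = ∑' h : Fin m → G,
      gS m (fun ω => f (i.insertNth (α := fun _ => Bool) false ω)) h *
      (starRingEnd ℂ) (gS m (fun ω => f (i.insertNth (α := fun _ => Bool) true ω)) h) := by
  set A := gIP m (fun ω => f (i.insertNth (α := fun _ => Bool) false ω)) with hA
  set B := gIP m (fun ω => f (i.insertNth (α := fun _ => Bool) true ω)) with hB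
  have key : ∀ p : G × (Fin (m+1) → G), gIP (m+1) f p.1 p.2 =
      (fun q : (Fin m → G) × (G × G) => A q.2.1 q.1 * (starRingEnd ℂ) (B q.2.2 q.1))
        (gEquiv G m i p) := by
    intro p
    rw [gIP_split m i]
    rfl
  have hs : Summable (fun q : (Fin m → G) × (G × G) =>
      A q.2.1 q.1 * (starRingEnd ℂ) (B q.2.2 q.1)) := by
    rw [← (gEquiv G m i).summable_iff]
    apply summable_of_hasFiniteSupport
    refine (gIP_support (m+1) f hf).subset ?_
    intro p hp
    rw [Function.mem_support, key]
    exact hp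
  unfold gI
  rw [tsum_congr key, (gEquiv G m i).tsum_eq (fun q : (Fin m → G) × (G × G) => A q.2.1 q.1 * (starRingEnd ℂ) (B q.2.2 q.1)), hs.tsum_prod]
  refine tsum_congr fun h => ?_
  have fs : ∀ g : (Fin m → Bool) → G → ℂ, (∀ ω, (Function.support (g ω)).Finite) →
      (Function.support fun n => gIP m g n h).Finite := by
    intro g hg
    refine ((gIP_support m g hg).image Prod.fst).subset ?_
    intro n hn
    exact ⟨(n, h), hn, rfl⟩
  have hAs := fs _ fun ω => hf (i.insertNth (α := fun _ => Bool) false ω)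
  have hBs := fs _ fun ω => hf (i.insertNth (α := fun _ => Bool) true ω)
  have hB2 : (Function.support fun n => (starRingEnd ℂ) (B n h)).Finite := by
    refine hBs.subset ?_
    intro n hn h0
    apply hn
    simp only at h0 ⊢
    rw [hB, h0, map_zero]
  unfold gS
  rw [Complex.conj_tsum]
  have s1 : Summable fun n => ‖A n h‖ := by
    apply summable_of_hasFiniteSupport
    refine hAs.subset ?_
    intro n hn
    simpa using hn
  have s2 : Summable fun n => ‖(starRingEnd ℂ) (B n h)‖ := by
    apply summable_of_hasFiniteSupport
    refine hBs.subset ?_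
    intro n hn
    simpa using hn
  exact (tsum_mul_tsum_of_summable_norm s1 s2).symm

lemma gI_nonneg {G : Type*} [AddCommGroup G] (m : ℕ)
    (f : G → ℂ) (hf : (Function.support f).Finite) :
    gI (m+1) (fun _ => f) = (‖gI (m+1) (fun _ => f)‖ : ℂ) := by
  rw [gI_eq m 0 _ (fun _ => hf)]
  simp_rw [Complex.mul_conj]
  rw [← Complex.ofReal_tsum, Complex.norm_real, Real.norm_of_nonneg]
  exact tsum_nonneg fun _ => Complex.normSq_nonneg _

lemma gI_cs {G : Type*} [AddCommGroup G] (k : ℕ) (i : Fin k)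
    (f : (Fin k → Bool) → G → ℂ) (hf : ∀ ω, (Function.support (f ω)).Finite) :
    ‖gI k f‖ ^ 2 ≤ ‖gI k (fun ω => f (Function.update ω i false))‖ *
      ‖gI k (fun ω => f (Function.update ω i true))‖ := by
  obtain _ | m := k
  · exact i.elim0
  have hupd : ∀ (ω : Fin m → Bool) (b c : Bool),
      Function.update (i.insertNth (α := fun _ => Bool) b ω) i c =
        i.insertNth (α := fun _ => Bool) c ω := by
    intro ω b c
    simp
  rw [gI_eq m i f hf, gI_eq m i _ (fun ω => hf (Function.update ω i false)),
    gI_eq m i _ (fun ω => hf (Function.update ω i true))]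
  simp only [hupd]
  have h0 := gS_support m _ fun ω => hf (i.insertNth (α := fun _ => Bool) false ω)
  have h1 := gS_support m _ fun ω => hf (i.insertNth (α := fun _ => Bool) true ω)
  set a := gS m fun ω => f (i.insertNth (α := fun _ => Bool) false ω)
  set b := gS m fun ω => f (i.insertNth (α := fun _ => Bool) true ω)
  have ha : ∀ h ∉ h0.toFinset ∪ h1.toFinset, a h = 0 := by
    intro h hh
    by_contra hc
    exact hh (by simp [hc])
  have hb : ∀ h ∉ h0.toFinset ∪ h1.toFinset, b h = 0 := by
    intro h hh
    by_contra hc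
    exact hh (by simp [hc])
  rw [tsum_eq_sum (s := h0.toFinset ∪ h1.toFinset) (by intro h hh; simp [ha h hh]),
    tsum_eq_sum (s := h0.toFinset ∪ h1.toFinset) (by intro h hh; simp [ha h hh]),
    tsum_eq_sum (s := h0.toFinset ∪ h1.toFinset) (by intro h hh; simp [hb h hh])]
  have hsq : ∀ c : (Fin m → G) → ℂ, ∀ s : Finset (Fin m → G),
      ‖∑ h ∈ s, c h * (starRingEnd ℂ) (c h)‖ = ∑ h ∈ s, ‖c h‖ ^ 2 := by
    intro c s
    simp_rw [Complex.mul_conj, Complex.normSq_eq_norm_sq]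
    rw [← Complex.ofReal_sum, Complex.norm_real, Real.norm_of_nonneg]
    positivity
  rw [hsq, hsq]
  refine le_trans ?_ (Finset.sum_mul_sq_le_sq_mul_sq _ _ _)
  gcongr
  refine (norm_sum_le _ _).trans (le_of_eq ?_)
  simp

lemma gcs_abstract {X : Type*} (k : ℕ) (P : X → Prop) (N : ((Fin k → Bool) → X) → ℝ)
    (h0 : ∀ f, 0 ≤ N f)
    (hcs : ∀ i f, (∀ ω, P (f ω)) → N f ^ 2 ≤ N (fun ω => f (Function.update ω i false)) *
      N (fun ω => f (Function.update ω i true)))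
    (f : (Fin k → Bool) → X) (hf : ∀ ω, P (f ω)) (S : Finset (Fin k)) :
    N f ^ (2 ^ k) ≤ ∏ σ : Fin k → Bool, N (fun ω => f (S.piecewise σ ω)) := by
  induction S using Finset.induction_on with
  | empty => simp
  | insert i S hi ih =>
    refine ih.trans ?_
    rw [← pow_le_pow_iff_left₀ (Finset.prod_nonneg fun _ _ => h0 _)
      (Finset.prod_nonneg fun _ _ => h0 _) two_ne_zero, ← Finset.prod_pow]
    have hpw : ∀ (σ ω : Fin k → Bool) (b : Bool), S.piecewise σ (Function.update ω i b) =
        (insert i S).piecewise (Function.update σ i b) ω := by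
      intro σ ω b
      funext j
      by_cases hj : j = i
      · subst hj
        simp [hi]
      · by_cases hjS : j ∈ S <;> simp [hj, hjS]
    let M : (Fin k → Bool) → ℝ := fun σ => N (fun ω => f ((insert i S).piecewise σ ω))
    have step : ∏ σ : Fin k → Bool, N (fun ω => f (S.piecewise σ ω)) ^ 2 ≤
        ∏ σ : Fin k → Bool, M σ * M (Function.update σ i (!σ i)) := by
      refine Finset.prod_le_prod (fun _ _ => sq_nonneg _) fun σ _ => ?_
      refine (hcs i _ fun ω => hf _).trans (le_of_eq ?_)
      simp only [hpw, M]
      cases h : σ i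
      · have : Function.update σ i false = σ := by rw [← h]; simp
        rw [this]; rfl
      · have : Function.update σ i true = σ := by rw [← h]; simp
        rw [this, mul_comm]; rfl
    refine step.trans (le_of_eq ?_)
    rw [Finset.prod_mul_distrib, sq]
    congr 1
    have hinv : Function.Involutive fun σ : Fin k → Bool => Function.update σ i (!σ i) := by
      intro σ
      simp
    exact Equiv.prod_comp hinv.toPerm M

lemma gI_gcs {G : Type*} [AddCommGroup G] (k : ℕ)
    (f : (Fin k → Bool) → G → ℂ) (hf : ∀ ω, (Function.support (f ω)).Finite) :
    ‖gI k f‖ ^ (2 ^ k) ≤ ∏ σ : Fin k → Bool, ‖gI k (fun _ => f σ)‖ := by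
  have := gcs_abstract k (fun g : G → ℂ => (Function.support g).Finite) (fun f => ‖gI k f‖)
    (fun _ => norm_nonneg _) (fun i f hf => gI_cs k i f hf) f hf Finset.univ
  simpa using this

lemma gT_nonneg {G : Type*} [AddCommGroup G] (k : ℕ) (hk : 1 ≤ k)
    (f : G → ℂ) (hf : (Function.support f).Finite) :
    gowersTildeU k f = ‖gI k (fun _ => f)‖ ^ ((1 : ℝ) / 2 ^ k) := by
  obtain _ | m := k
  · omega
  have : gowersTildeU (m+1) f = (gI (m+1) (fun _ => f)).re ^ ((1 : ℝ) / 2 ^ (m+1)) := rfl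
  rw [this]
  conv_lhs => rw [gI_nonneg m f hf]
  rw [Complex.ofReal_re]

lemma gI_gcs' {G : Type*} [AddCommGroup G] (k : ℕ) (hk : 1 ≤ k)
    (f : (Fin k → Bool) → G → ℂ) (hf : ∀ ω, (Function.support (f ω)).Finite) :
    ‖gI k f‖ ≤ ∏ σ : Fin k → Bool, gowersTildeU k (f σ) := by
  have hn : ∀ σ, 0 ≤ gowersTildeU k (f σ) := by
    intro σ
    rw [gT_nonneg k hk _ (hf σ)]
    positivity
  rw [← pow_le_pow_iff_left₀ (norm_nonneg _) (Finset.prod_nonneg fun _ _ => hn _)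
    (n := 2 ^ k) (by positivity), ← Finset.prod_pow]
  refine (gI_gcs k f hf).trans (le_of_eq ?_)
  refine Finset.prod_congr rfl fun σ _ => ?_
  rw [gT_nonneg k hk _ (hf σ), ← Real.rpow_natCast, ← Real.rpow_mul (norm_nonneg _)]
  simp

noncomputable def cEquiv {G : Type*} [AddCommGroup G] (H : AddSubgroup G) : (G ⧸ H) × H ≃ G :=
  Equiv.ofBijective (fun p => p.1.out + p.2) (by
    constructor
    · rintro ⟨x, h⟩ ⟨y, h'⟩ e
      simp only at e
      have e2 : x = y := by
        have := congrArg (QuotientAddGroup.mk (s := H)) e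
        simpa using this
      subst e2
      have : h = h' := Subtype.ext (add_left_cancel e)
      rw [this]
    · intro g
      have hm : -(QuotientAddGroup.mk (s := H) g).out + g ∈ H := by
        rw [← QuotientAddGroup.eq]
        simp
      exact ⟨(QuotientAddGroup.mk g, ⟨_, hm⟩), by simp⟩)

noncomputable def dEquiv {G : Type*} [AddCommGroup G] (H : AddSubgroup G) (k : ℕ) :
    ((G ⧸ H) × (Fin k → G ⧸ H)) × (H × (Fin k → H)) ≃ G × (Fin k → G) where
  toFun p := (cEquiv H (p.1.1, p.2.1), fun i => cEquiv H (p.1.2 i, p.2.2 i))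
  invFun q := ((((cEquiv H).symm q.1).1, fun i => ((cEquiv H).symm (q.2 i)).1),
    (((cEquiv H).symm q.1).2, fun i => ((cEquiv H).symm (q.2 i)).2))
  left_inv := by
    rintro ⟨⟨a, b⟩, c, d⟩
    simp
  right_inv := by
    rintro ⟨a, b⟩
    simp

lemma gIP_coset {G : Type*} [AddCommGroup G] (H : AddSubgroup G) (k : ℕ) (f : G → ℂ)
    (p : ((G ⧸ H) × (Fin k → G ⧸ H)) × (H × (Fin k → H))) :
    gIP k (fun _ => f) (dEquiv H k p).1 (dEquiv H k p).2 =
      gIP k (fun ω (z : H) => f ((p.1.1.out + ∑ i, if ω i then (p.1.2 i).out else 0) + z))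
        p.2.1 p.2.2 := by
  unfold gIP
  refine Finset.prod_congr rfl fun ω _ => ?_
  refine congrArg _ (congrArg f ?_)
  have : ∀ i, (if ω i then (dEquiv H k p).2 i else 0) =
      (if ω i then (p.1.2 i).out else 0) + ((if ω i then p.2.2 i else 0 : H) : G) := by
    intro i
    split_ifs
    · rfl
    · simp
  simp_rw [this, Finset.sum_add_distrib]
  have h1 : (dEquiv H k p).1 = p.1.1.out + p.2.1 := rfl
  rw [h1]
  push_cast
  abel

theorem gowers_fubini {G : Type*} [AddCommGroup G] (k : ℕ) (hk : 1 ≤ k)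
    (H : AddSubgroup G) (f : G → ℂ) (hf : (Function.support f).Finite)
    (F : G ⧸ H → ℝ)
    (hF : ∀ a : G, F (QuotientAddGroup.mk a) = gowersTildeU k fun h : H => f (a + h)) :
    gowersTildeU k f ≤ gowersTildeU k fun x : G ⧸ H => ((F x : ℝ) : ℂ) := by
  have hfa : ∀ a : G, (Function.support fun h : H => f (a + h)).Finite := by
    intro a
    refine hf.preimage (f := fun h : H => a + h) ?_
    intro x _ y _ e
    exact Subtype.ext (add_left_cancel e)
  have hF0 : ∀ x, 0 ≤ F x := by
    intro x
    obtain ⟨a, rfl⟩ := QuotientAddGroup.mk_surjective x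
    rw [hF, gT_nonneg k hk _ (hfa a)]
    positivity
  have hFs : (Function.support fun x : G ⧸ H => ((F x : ℝ) : ℂ)).Finite := by
    refine (hf.image (QuotientAddGroup.mk (s := H))).subset ?_
    intro x hx
    obtain ⟨a, rfl⟩ := QuotientAddGroup.mk_surjective x
    by_contra hc
    apply hx
    have hz : (fun h : H => f (a + h)) = fun _ => 0 := by
      funext h
      by_contra h0
      exact hc ⟨a + h, h0, by simp⟩
    simp only [hF, hz]
    rw [gT_nonneg k hk _ (by simp)]
    have : gI k (fun _ => (fun _ : H => (0 : ℂ))) = 0 := by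
      unfold gI gIP
      simp [iterate_map_zero]
    rw [this, norm_zero, Real.zero_rpow (by positivity)]
    simp
  rw [gT_nonneg k hk f hf, gT_nonneg k hk _ hFs]
  refine Real.rpow_le_rpow (norm_nonneg _) ?_ (by positivity)
  have hprod : ∀ q : (G ⧸ H) × (Fin k → G ⧸ H),
      gIP k (fun _ x => ((F x : ℝ) : ℂ)) q.1 q.2 =
        ((∏ ω : Fin k → Bool, F (q.1 + ∑ i, if ω i then q.2 i else 0) : ℝ) : ℂ) := by
    intro q
    unfold gIP
    rw [Complex.ofReal_prod]
    refine Finset.prod_congr rfl fun ω _ => ?_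
    exact Function.iterate_fixed (Complex.conj_ofReal _) _
  have hsF : Summable fun q : (G ⧸ H) × (Fin k → G ⧸ H) =>
      (∏ ω : Fin k → Bool, F (q.1 + ∑ i, if ω i then q.2 i else 0) : ℝ) := by
    have : Summable fun p : (G ⧸ H) × (Fin k → G ⧸ H) =>
        gIP k (fun _ x => ((F x : ℝ) : ℂ)) p.1 p.2 :=
      summable_of_hasFiniteSupport (gIP_support k (fun _ x => ((F x : ℝ) : ℂ)) fun _ => hFs)
    simp_rw [hprod] at this
    exact Complex.summable_ofReal.mp this
  have hR : ‖gI k (fun _ (x : G ⧸ H) => ((F x : ℝ) : ℂ))‖ =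
      ∑' q : (G ⧸ H) × (Fin k → G ⧸ H),
        (∏ ω : Fin k → Bool, F (q.1 + ∑ i, if ω i then q.2 i else 0) : ℝ) := by
    unfold gI
    simp_rw [hprod]
    rw [← Complex.ofReal_tsum, Complex.norm_real, Real.norm_of_nonneg]
    exact tsum_nonneg fun _ => Finset.prod_nonneg fun _ _ => hF0 _
  rw [hR]
  have hL : gI k (fun _ => f) = ∑' q : (G ⧸ H) × (Fin k → G ⧸ H),
      gI k (fun ω (z : H) => f ((q.1.out + ∑ i, if ω i then (q.2 i).out else 0) + z)) := by
    have hs : Summable fun p : G × (Fin k → G) => gIP k (fun _ => f) p.1 p.2 :=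
      summable_of_hasFiniteSupport (gIP_support k (fun _ => f) fun _ => hf)
    rw [← (dEquiv H k).summable_iff] at hs
    have := hs.tsum_prod
    rw [gI, ← (dEquiv H k).tsum_eq]
    refine this.trans ?_
    refine tsum_congr fun q => ?_
    unfold gI
    refine tsum_congr fun r => ?_
    exact gIP_coset H k f (q, r)
  rw [hL]
  refine tsum_of_norm_bounded hsF.hasSum fun q => ?_
  refine (gI_gcs' k hk _ fun ω => hfa _).trans (le_of_eq ?_)
  refine Finset.prod_congr rfl fun ω _ => ?_
  rw [← hF]
  congr 1
  have hm : ∀ g : G, (QuotientAddGroup.mk g : G ⧸ H) = QuotientAddGroup.mk' H g := fun _ => rfl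
  have ho : ∀ x : G ⧸ H, QuotientAddGroup.mk' H x.out = x := fun x => by simp
  rw [hm, map_add, map_sum, ho]
  congr 1
  refine Finset.sum_congr rfl fun i _ => ?_
  split_ifs
  · exact ho _
  · exact map_zero _
end

section
/- For every integer k ≥ 1 there is a constant C_k > 0 such that the following holds. Let N ≥ 100 be a real number, let q be an integer with 1 ≤ q ≤ N, and let f: ℤ → [−1, 1] be supported on {n ∈ ℕ : 1 ≤ n ≤ N}. Then ‖f‖_{U^k([N])}^{2^k} ≤ C_k·∑_{d | q} (1/d)·‖n ↦ f(d·n)·1_{gcd(n, q/d) = 1}‖_{U^k([N/d])}. -/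
open scoped Classical

noncomputable section
namespace GTV

def A : (k : ℕ) → (ℤ → ℝ) → (ℤ → ℝ) → (Fin k → ℤ) → ℤ → ℝ
  | 0, g, _, _, n => g n
  | (k+1), g, f, h, n => A k g f (Fin.tail h) n * A k f f (Fin.tail h) (n + h 0)

def S (L : ℕ) : Finset ℤ := Finset.Icc 1 (L : ℤ)
def T (L : ℕ) : Finset ℤ := Finset.Icc (-(L : ℤ)) (L : ℤ)
def H (L k : ℕ) : Finset (Fin k → ℤ) := Fintype.piFinset (fun _ => T L)
def I (L k : ℕ) (g f : ℤ → ℝ) : ℝ := ∑ h ∈ H L k, ∑ n ∈ S L, A k g f h n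
def D (t : ℤ) (g : ℤ → ℝ) : ℤ → ℝ := fun n => g n * g (n + t)
def V (k : ℕ) (f : ℤ → ℝ) : ℝ := ∑' p : ℤ × (Fin k → ℤ), A k f f p.2 p.1
def Sup (L : ℕ) (f : ℤ → ℝ) : Prop := ∀ n, f n ≠ 0 → n ∈ S L

lemma A_D (k : ℕ) (t : ℤ) : ∀ (g f : ℤ → ℝ) (h : Fin k → ℤ) (n : ℤ),
    A k (D t g) (D t f) h n = A k g f h n * A k g f h (n + t) := by
  induction k with
  | zero => intro g f h n; rfl
  | succ k ih =>
    intro g f h n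
    simp only [A, ih]
    rw [add_right_comm n t (h 0)]
    ring

lemma A_supp {L : ℕ} (k : ℕ) : ∀ (g f : ℤ → ℝ), Sup L g → Sup L f →
    ∀ (h : Fin k → ℤ) (n : ℤ), A k g f h n ≠ 0 → n ∈ S L ∧ h ∈ H L k := by
  induction k with
  | zero => intro g f hg hf h n hn; exact ⟨hg n hn, by simp only [H, Fintype.mem_piFinset]; exact fun i => i.elim0⟩
  | succ k ih =>
    intro g f hg hf h n hn
    simp only [A] at hn
    have h1 := ih g f hg hf _ _ (left_ne_zero_of_mul hn)
    have h2 := ih f f hf hf _ _ (right_ne_zero_of_mul hn)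
    refine ⟨h1.1, ?_⟩
    have h3 := h1.2
    simp only [H, Fintype.mem_piFinset] at h3 ⊢
    intro i
    refine Fin.cases ?_ (fun j => h3 j) i
    have a1 := h1.1
    have a2 := h2.1
    simp only [S, T, Finset.mem_Icc] at a1 a2 ⊢
    omega

lemma A_dvd {d : ℤ} (k : ℕ) : ∀ (g f : ℤ → ℝ), (∀ n, g n ≠ 0 → d ∣ n) → (∀ n, f n ≠ 0 → d ∣ n) →
    ∀ (h : Fin k → ℤ) (n : ℤ), A k g f h n ≠ 0 → d ∣ n ∧ ∀ i, d ∣ h i := by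
  induction k with
  | zero => intro g f hg hf h n hn; exact ⟨hg n hn, fun i => i.elim0⟩
  | succ k ih =>
    intro g f hg hf h n hn
    simp only [A] at hn
    have h1 := ih g f hg hf _ _ (left_ne_zero_of_mul hn)
    have h2 := ih f f hf hf _ _ (right_ne_zero_of_mul hn)
    refine ⟨h1.1, ?_⟩
    intro i
    refine Fin.cases ?_ (fun j => h1.2 j) i
    exact (Int.dvd_add_right h1.1).mp h2.1

lemma A_scale (d : ℤ) (k : ℕ) : ∀ (g f : ℤ → ℝ) (h : Fin k → ℤ) (n : ℤ),
    A k (fun m => g (d * m)) (fun m => f (d * m)) h n = A k g f (fun i => d * h i) (d * n) := by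
  induction k with
  | zero => intro g f h n; rfl
  | succ k ih =>
    intro g f h n
    simp only [A, ih, mul_add]
    rfl

lemma A_abs (k : ℕ) : ∀ (g f : ℤ → ℝ), (∀ n, |g n| ≤ 1) → (∀ n, |f n| ≤ 1) →
    ∀ (h : Fin k → ℤ) (n : ℤ), |A k g f h n| ≤ 1 := by
  induction k with
  | zero => intro g f hg hf h n; exact hg n
  | succ k ih =>
    intro g f hg hf h n
    simp only [A, abs_mul]
    exact mul_le_one₀ (ih g f hg hf _ _) (abs_nonneg _) (ih f f hf hf _ _)

lemma A_zero (k : ℕ) : ∀ (f : ℤ → ℝ) (h : Fin k → ℤ) (n : ℤ), A k (fun _ => 0) f h n = 0 := by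
  induction k with
  | zero => intro f h n; rfl
  | succ k ih => intro f h n; simp [A, ih]

lemma A_sum {ι : Type*} (s : Finset ι) (k : ℕ) : ∀ (g : ι → ℤ → ℝ) (f : ℤ → ℝ) (h : Fin k → ℤ)
    (n : ℤ), A k (fun m => ∑ i ∈ s, g i m) f h n = ∑ i ∈ s, A k (g i) f h n := by
  induction k with
  | zero => intro g f h n; rfl
  | succ k ih => intro g f h n; simp only [A, ih, Finset.sum_mul]

lemma I_sum {ι : Type*} (s : Finset ι) (L k : ℕ) (g : ι → ℤ → ℝ) (f : ℤ → ℝ) :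
    I L k (fun m => ∑ i ∈ s, g i m) f = ∑ i ∈ s, I L k (g i) f := by
  simp only [I, A_sum]
  rw [Finset.sum_comm]
  rw [Finset.sum_congr rfl (fun n _ => Finset.sum_comm), Finset.sum_comm]
  refine Finset.sum_congr rfl fun i _ => Finset.sum_comm

lemma conv {L : ℕ} (a b : ℤ → ℝ) (hb : Sup L b) :
    ∑ t ∈ T L, ∑ n ∈ S L, a n * b (n + t) = (∑ n ∈ S L, a n) * ∑ m ∈ S L, b m := by
  rw [Finset.sum_comm, Finset.sum_mul]
  refine Finset.sum_congr rfl fun n hn => ?_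
  rw [← Finset.mul_sum]
  congr 1
  refine (Finset.sum_of_injOn (fun m => m - n) ?_ ?_ ?_ ?_).symm
  · intro x _ y _ h; simpa using h
  · intro x hx
    simp only [S, T, Finset.coe_Icc, Set.mem_Icc, Finset.mem_Icc] at *
    omega
  · intro t _ ht
    by_contra h
    exact ht ⟨n + t, hb _ h, by simp⟩
  · intro m _; simp

lemma I_succ {L k : ℕ} (g f : ℤ → ℝ) (hf : Sup L f) :
    I L (k+1) g f = ∑ h ∈ H L k, (∑ n ∈ S L, A k g f h n) * ∑ m ∈ S L, A k f f h m := by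
  have e : ∀ h ∈ H L k, (∑ n ∈ S L, A k g f h n) * ∑ m ∈ S L, A k f f h m =
      ∑ t ∈ T L, ∑ n ∈ S L, A k g f h n * A k f f h (n + t) := by
    intro h _
    exact (conv _ _ (fun n hn => (A_supp k f f hf hf h n hn).1)).symm
  rw [Finset.sum_congr rfl e, Finset.sum_comm, ← Finset.sum_product', I]
  refine Finset.sum_bij' (fun h _ => (h 0, Fin.tail h)) (fun p _ => Fin.cons p.1 p.2) ?_ ?_ ?_ ?_ ?_
  · intro h hh
    simp only [H, Fintype.mem_piFinset, Finset.mem_product] at *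
    exact ⟨hh 0, fun i => hh _⟩
  · intro p hp
    simp only [H, Fintype.mem_piFinset, Finset.mem_product] at *
    intro i
    refine Fin.cases ?_ (fun j => ?_) i
    · simpa using hp.1
    · simpa using hp.2 j
  · intro h _; simp
  · intro p _; simp
  · intro h _; rfl

lemma sq_sum {L k : ℕ} (g f : ℤ → ℝ) (hg : Sup L g) (hf : Sup L f) :
    ∑ h ∈ H L k, (∑ n ∈ S L, A k g f h n) ^ 2 = ∑ t ∈ T L, I L k (D t g) (D t f) := by
  simp only [I]
  rw [Finset.sum_comm]
  refine Finset.sum_congr rfl fun h _ => ?_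
  rw [sq, ← conv _ _ (fun n hn => (A_supp k g f hg hf h n hn).1)]
  simp only [A_D]

lemma U_succ {L k : ℕ} (g : ℤ → ℝ) (hg : Sup L g) :
    I L (k+1) g g = ∑ h ∈ H L k, (∑ n ∈ S L, A k g g h n) ^ 2 := by
  rw [I_succ g g hg]
  simp only [sq]

lemma U_nonneg {L k : ℕ} (g : ℤ → ℝ) (hg : Sup L g) : 0 ≤ I L (k+1) g g := by
  rw [U_succ g hg]; positivity

lemma card_T {L : ℕ} (hL : 1 ≤ L) : ((T L).card : ℝ) ≤ 3 * L := by
  have : (T L).card = 2 * L + 1 := by simp [T]; omega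
  rw [this]
  have : (1:ℝ) ≤ L := by exact_mod_cast hL
  push_cast; linarith

lemma card_H {L k : ℕ} (hL : 1 ≤ L) : ((H L k).card : ℝ) ≤ (3 * L) ^ k := by
  have : (H L k).card = (T L).card ^ k := by simp [H]
  rw [this]
  push_cast
  gcongr
  exact card_T hL

lemma card_Td {L d : ℕ} (hd : 1 ≤ d) (hdL : d ≤ L) :
    (((T L).filter (fun t => (d:ℤ) ∣ t)).card : ℝ) ≤ 3 * L / d := by
  have h1 : ((T L).filter (fun t => (d:ℤ) ∣ t)) ⊆
      (T (L / d)).image (fun t => (d:ℤ) * t) := by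
    intro t ht
    simp only [T, Finset.mem_filter, Finset.mem_Icc, Finset.mem_image] at *
    obtain ⟨⟨h1, h2⟩, c, rfl⟩ := ht
    refine ⟨c, ⟨?_, ?_⟩, rfl⟩
    · push_cast
      have : -c ≤ (L:ℤ) / d := by
        rw [Int.le_ediv_iff_mul_le (by omega)]; linarith
      linarith
    · push_cast
      rw [Int.le_ediv_iff_mul_le (by omega)]; linarith
  have h2 := (Finset.card_le_card h1).trans Finset.card_image_le
  have h3 : 1 ≤ L / d := (Nat.one_le_div_iff (by omega)).2 hdL
  have h4 := card_T h3
  have h5 : ((L / d : ℕ) : ℝ) ≤ L / d := Nat.cast_div_le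
  have h6 : ((((T L).filter (fun t => (d:ℤ) ∣ t)).card : ℕ) : ℝ) ≤ ((T (L/d)).card : ℝ) := by
    exact_mod_cast h2
  rw [mul_div_assoc]
  linarith

lemma sumA_abs {L k : ℕ} (g f : ℤ → ℝ) (hg : ∀ n, |g n| ≤ 1) (hf : ∀ n, |f n| ≤ 1)
    (h : Fin k → ℤ) : |∑ n ∈ S L, A k g f h n| ≤ L := by
  calc _ ≤ ∑ n ∈ S L, |A k g f h n| := Finset.abs_sum_le_sum_abs _ _
    _ ≤ ∑ n ∈ S L, 1 := Finset.sum_le_sum fun n _ => A_abs k g f hg hf h n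
    _ = L := by simp [S]

lemma D_sup {L : ℕ} {g : ℤ → ℝ} (t : ℤ) (hg : Sup L g) : Sup L (D t g) :=
  fun n hn => hg n (left_ne_zero_of_mul hn)

lemma D_abs {g : ℤ → ℝ} (t : ℤ) (hg : ∀ n, |g n| ≤ 1) : ∀ n, |D t g n| ≤ 1 := by
  intro n
  simp only [D, abs_mul]
  exact mul_le_one₀ (hg _) (abs_nonneg _) (hg _)

lemma D_zero {g : ℤ → ℝ} {d t : ℤ} (hg : ∀ n, g n ≠ 0 → d ∣ n) (ht : ¬ d ∣ t) :
    D t g = fun _ => 0 := by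
  funext n
  by_contra h
  exact ht ((Int.dvd_add_right (hg _ (left_ne_zero_of_mul h))).mp (hg _ (right_ne_zero_of_mul h)))

lemma I_D_zero {L k : ℕ} {g f : ℤ → ℝ} {d t : ℤ} (hg : ∀ n, g n ≠ 0 → d ∣ n) (ht : ¬ d ∣ t) :
    I L k (D t g) f = 0 := by
  rw [D_zero hg ht]
  simp [I, A_zero]

lemma I_D_zero' {L k : ℕ} {g f : ℤ → ℝ} {d : ℤ} (hg : ∀ n, g n ≠ 0 → d ∣ n) :
    ∑ t ∈ T L, I L k (D t g) (D t f) = 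
    ∑ t ∈ (T L).filter (fun t => d ∣ t), I L k (D t g) (D t f) := by
  rw [Finset.sum_filter]
  refine Finset.sum_congr rfl fun t _ => ?_
  split_ifs with h
  · rfl
  · exact I_D_zero hg h

lemma B_bound {L k : ℕ} (hL : 1 ≤ L) (f : ℤ → ℝ) (hf : ∀ n, |f n| ≤ 1) :
    ∑ h ∈ H L k, (∑ n ∈ S L, A k f f h n) ^ 2 ≤ (3 * L : ℝ) ^ (k + 2) := by
  calc _ ≤ ∑ h ∈ H L k, (3 * L : ℝ) ^ 2 := by
        refine Finset.sum_le_sum fun h _ => ?_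
        rw [← sq_abs]
        have := sumA_abs (L := L) f f hf hf h
        gcongr
        have : (0:ℝ) ≤ L := by positivity
        linarith
    _ = (H L k).card * (3 * L : ℝ) ^ 2 := by simp
    _ ≤ (3 * L) ^ k * (3 * L : ℝ) ^ 2 := by gcongr; exact card_H hL
    _ = _ := by ring

lemma I_sq {L k : ℕ} (hL : 1 ≤ L) (g f : ℤ → ℝ) (hfs : Sup L f) (hf : ∀ n, |f n| ≤ 1) :
    (I L (k+1) g f) ^ 2 ≤ (∑ h ∈ H L k, (∑ n ∈ S L, A k g f h n) ^ 2) * (3 * L : ℝ) ^ (k + 2) := by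
  rw [I_succ g f hfs]
  refine (Finset.sum_mul_sq_le_sq_mul_sq _ _ _).trans ?_
  gcongr
  exact B_bound hL f hf

lemma pow_sum_le {ι : Type*} (s : Finset ι) (a : ι → ℝ) (Y : ℝ) (hY : (s.card : ℝ) ≤ Y)
    (m : ℕ) (ha : ∀ i ∈ s, 0 ≤ a i) :
    (∑ i ∈ s, a i) ^ (m + 1) ≤ Y ^ m * ∑ i ∈ s, a i ^ (m + 1) := by
  rcases s.eq_empty_or_nonempty with rfl | hs
  · simp
  · have h0 : (0:ℝ) < s.card := by exact_mod_cast hs.card_pos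
    have := pow_sum_div_card_le_sum_pow (s := s) (f := a) ha m
    rw [div_le_iff₀ (by positivity)] at this
    refine this.trans ?_
    rw [mul_comm]
    have : 0 ≤ ∑ i ∈ s, a i ^ (m + 1) := Finset.sum_nonneg fun i hi => pow_nonneg (ha i hi) _
    gcongr

lemma main {L d : ℕ} (hd : 1 ≤ d) (hdL : d ≤ L) (k : ℕ) : ∀ (g f : ℤ → ℝ), Sup L g → Sup L f →
    (∀ n, |f n| ≤ 1) → (∀ n, g n ≠ 0 → (d:ℤ) ∣ n) →
    |I L (k+1) g f| ^ (2 ^ (k+1)) * (3 * L / d : ℝ) ^ (k + 2) ≤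
      (3 * L : ℝ) ^ ((k+1) * 2 ^ (k+1)) * (3 * L / d : ℝ) ^ (2 ^ (k+1)) * I L (k+1) g g := by
  have hL : 1 ≤ L := hd.trans hdL
  induction k with
  | zero =>
    intro g f hg hf hf1 hgd
    have h1 := I_sq (k := 0) hL g f hf hf1
    rw [U_succ g hg]
    simp only [zero_add, pow_one, one_mul, sq_abs]
    have : ∀ h, ∑ n ∈ S L, A 0 g f h n = ∑ n ∈ S L, A 0 g g h n := fun h => rfl
    simp only [this, zero_add] at h1
    calc _ ≤ _ := mul_le_mul_of_nonneg_right h1 (by positivity)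
      _ = _ := by ring
  | succ k ih =>
    intro g f hg hf hf1 hgd
    have h1 := I_sq (k := k+1) hL g f hf hf1
    set X : ℝ := 3 * L with hX
    set Y : ℝ := 3 * L / d with hY
    have hX0 : 0 ≤ X := by positivity
    have hY0 : 0 ≤ Y := by positivity
    rw [sq_sum g f hg hf, I_D_zero' hgd] at h1
    rw [U_succ g hg, sq_sum g g hg hg, I_D_zero' hgd]
    set Td := (T L).filter (fun t => (d:ℤ) ∣ t) with hTd
    obtain ⟨m, hm⟩ : ∃ m, 2 ^ (k+1) = m + 1 := ⟨2^(k+1) - 1, by have := Nat.one_le_two_pow (n := k+1); omega⟩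
    have h2 : ∑ t ∈ Td, I L (k+1) (D t g) (D t f) ≤ ∑ t ∈ Td, |I L (k+1) (D t g) (D t f)| :=
      Finset.sum_le_sum fun t _ => le_abs_self _
    have h3 := pow_sum_le Td (fun t => |I L (k+1) (D t g) (D t f)|) Y (card_Td hd hdL) m
      (fun _ _ => abs_nonneg _)
    rw [← hm] at h3
    have h4 : (∑ t ∈ Td, |I L (k+1) (D t g) (D t f)| ^ 2 ^ (k+1)) * Y ^ (k+2) ≤
        X ^ ((k+1) * 2 ^ (k+1)) * Y ^ (2 ^ (k+1)) * ∑ t ∈ Td, I L (k+1) (D t g) (D t g) := by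
      rw [Finset.sum_mul, Finset.mul_sum]
      refine Finset.sum_le_sum fun t _ => ?_
      exact ih (D t g) (D t f) (D_sup t hg) (D_sup t hf) (D_abs t hf1)
        (fun n hn => hgd n (left_ne_zero_of_mul hn))
    set Z := ∑ t ∈ Td, |I L (k+1) (D t g) (D t f)|
    set Q := ∑ t ∈ Td, |I L (k+1) (D t g) (D t f)| ^ 2 ^ (k+1)
    set R := ∑ t ∈ Td, I L (k+1) (D t g) (D t g)
    have h5 : |I L (k+1+1) g f| ^ 2 ≤ Z * X ^ (k+1+2) := by
      rw [sq_abs]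
      exact h1.trans (mul_le_mul_of_nonneg_right h2 (by positivity))
    calc |I L (k+1+1) g f| ^ 2 ^ (k+1+1) * Y ^ (k+1+2)
        = (|I L (k+1+1) g f| ^ 2) ^ 2 ^ (k+1) * Y ^ (k+1+2) := by
          rw [← pow_mul, ← pow_succ' 2 (k+1)]
      _ ≤ (Z * X ^ (k+1+2)) ^ 2 ^ (k+1) * Y ^ (k+1+2) := by gcongr
      _ = Z ^ 2 ^ (k+1) * (X ^ ((k+1+2) * 2 ^ (k+1)) * Y ^ (k+1+2)) := by
          rw [mul_pow, ← pow_mul]; ring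
      _ ≤ (Y ^ m * Q) * (X ^ ((k+1+2) * 2 ^ (k+1)) * Y ^ (k+1+2)) := by gcongr
      _ = (Y ^ (m + 1) * X ^ ((k+1+2) * 2 ^ (k+1))) * (Q * Y ^ (k+2)) := by ring
      _ ≤ (Y ^ (m + 1) * X ^ ((k+1+2) * 2 ^ (k+1))) * 
          (X ^ ((k+1) * 2 ^ (k+1)) * Y ^ (2 ^ (k+1)) * R) := by gcongr
      _ = (X ^ ((k+1+2) * 2 ^ (k+1)) * X ^ ((k+1) * 2 ^ (k+1))) *
          (Y ^ (2 ^ (k+1)) * Y ^ (2 ^ (k+1))) * R := by rw [← hm]; ring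
      _ = _ := by
          rw [← pow_add, ← pow_add]
          congr 3 <;> ring

def one (L : ℕ) : ℤ → ℝ := fun n => if n ∈ S L then 1 else 0

lemma one_sup (L : ℕ) : Sup L (one L) := fun n hn => by
  by_contra h; simp [one, h] at hn

lemma one_abs (L : ℕ) : ∀ n, |one L n| ≤ 1 := fun n => by
  simp only [one]; split_ifs <;> simp

lemma lower (k : ℕ) : ∃ c : ℝ, 0 < c ∧ ∀ L : ℕ, 1 ≤ L →
    c * (L:ℝ) ^ (k+1) ≤ I L k (one L) (one L) := by
  induction k with
  | zero =>
    refine ⟨1, one_pos, fun L hL => ?_⟩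
    have e : ∑ n ∈ S L, one L n = ∑ n ∈ S L, (1:ℝ) :=
      Finset.sum_congr rfl fun n hn => by simp [one, hn]
    simp only [I, H, A, e]
    simp [S]
  | succ k ih =>
    obtain ⟨c, hc, h⟩ := ih
    refine ⟨c ^ 2 / 3 ^ k, by positivity, fun L hL => ?_⟩
    have hL0 : (0:ℝ) < L := by exact_mod_cast hL
    have h1 := h L hL
    rw [U_succ _ (one_sup L)]
    have h2 := sq_sum_le_card_mul_sum_sq (s := H L k) (f := fun h => ∑ n ∈ S L, A k (one L) (one L) h n)
    have h3 : (c * (L:ℝ) ^ (k+1)) ^ 2 ≤ (I L k (one L) (one L)) ^ 2 := by gcongr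
    have h4 : (c * (L:ℝ) ^ (k+1)) ^ 2 ≤ (3 * L) ^ k *
        ∑ h ∈ H L k, (∑ n ∈ S L, A k (one L) (one L) h n) ^ 2 := by
      refine h3.trans (h2.trans ?_)
      gcongr
      exact card_H hL
    rw [← mul_le_mul_iff_right₀ (show (0:ℝ) < (3 * L) ^ k by positivity)]
    refine le_trans (le_of_eq ?_) h4
    rw [mul_pow 3]
    field_simp
    ring

lemma upper {L k : ℕ} (hL : 1 ≤ L) : I L k (one L) (one L) ≤ (3 * L : ℝ) ^ (k+1) := by
  calc I L k (one L) (one L) ≤ ∑ h ∈ H L k, (3 * L : ℝ) := by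
        refine Finset.sum_le_sum fun h _ => ?_
        have := (le_abs_self _).trans (sumA_abs (L := L) _ _ (one_abs L) (one_abs L) h)
        have : (0:ℝ) ≤ L := by positivity
        linarith
    _ = (H L k).card * (3 * L : ℝ) := by simp
    _ ≤ (3 * L) ^ k * (3 * L : ℝ) := by gcongr; exact card_H hL
    _ = _ := by ring

lemma V_eq {L k : ℕ} (f : ℤ → ℝ) (hf : Sup L f) : V k f = I L k f f := by
  rw [V, tsum_eq_sum (s := S L ×ˢ H L k)]
  · rw [Finset.sum_product, Finset.sum_comm]; rfl
  · intro p hp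
    by_contra h
    exact hp (Finset.mem_product.2 (A_supp k f f hf hf _ _ h))

lemma V_scale {k : ℕ} {d : ℤ} (hd : d ≠ 0) (f : ℤ → ℝ) (hf : ∀ n, f n ≠ 0 → d ∣ n) :
    V k (fun m => f (d * m)) = V k f := by
  have hi : Function.Injective (fun p : ℤ × (Fin k → ℤ) => ((d * p.1, fun i => d * p.2 i) : ℤ × (Fin k → ℤ))) := by
    intro p p' h
    simp only [Prod.mk.injEq] at h
    refine Prod.ext (mul_left_cancel₀ hd h.1) (funext fun i => mul_left_cancel₀ hd (congrFun h.2 i))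
  rw [V, V, ← hi.tsum_eq (f := fun p : ℤ × (Fin k → ℤ) => A k f f p.2 p.1)]
  · refine tsum_congr fun p => ?_
    exact A_scale d k f f _ _
  · intro p hp
    have := A_dvd k f f hf hf _ _ hp
    refine ⟨(p.1 / d, fun i => p.2 i / d), Prod.ext ?_ (funext fun i => ?_)⟩
    · exact Int.mul_ediv_cancel' this.1
    · exact Int.mul_ediv_cancel' (this.2 i)

lemma prod_eq (f : ℤ → ℝ) (k : ℕ) : ∀ (n : ℤ) (h : Fin k → ℤ),
    ∏ ω : Fin k → Bool, f (n + ∑ i, if ω i then h i else 0) = A k f f h n := by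
  induction k with
  | zero => intro n h; simp [A]
  | succ k ih =>
    intro n h
    rw [← (Fin.consEquiv (fun _ => Bool)).prod_comp, Fintype.prod_prod_type]
    simp only [Fin.sum_univ_succ, Fintype.univ_bool, Fin.consEquiv_apply, Fin.cons_zero, Fin.cons_succ]
    rw [Finset.prod_pair (by simp), mul_comm, A, ← ih, ← ih]
    simp [Fin.tail, add_assoc]

lemma gp_eq (f : ℤ → ℝ) (k : ℕ) (n : ℤ) (h : Fin k → ℤ) :
    gowersProd k (fun n => ((f n : ℝ) : ℂ)) n h = ((A k f f h n : ℝ) : ℂ) := by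
  rw [← prod_eq, gowersProd]
  push_cast
  refine Finset.prod_congr rfl fun ω _ => ?_
  exact Function.iterate_fixed (Complex.conj_ofReal _) _

lemma tilde_eq (f : ℤ → ℝ) (k : ℕ) :
    gowersTildeU k (fun n => ((f n : ℝ) : ℂ)) = (V k f) ^ ((1:ℝ) / 2 ^ k) := by
  rw [gowersTildeU]
  simp only [gp_eq]
  rw [← Complex.ofReal_tsum, Complex.ofReal_re]
  rfl

lemma trunc_one {N : ℝ} {L : ℕ} (hL : L = ⌊N⌋₊) (hN : 0 ≤ N) :
    truncN N (fun _ => 1) = fun n => ((one L n : ℝ) : ℂ) := by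
  funext n
  have : (1 ≤ n ∧ (n:ℝ) ≤ N) ↔ n ∈ S L := by
    simp only [S, Finset.mem_Icc, and_congr_right_iff]
    intro hn
    obtain ⟨m, rfl⟩ := Int.eq_ofNat_of_zero_le (by omega : 0 ≤ n)
    rw [hL]
    simp [Nat.le_floor_iff hN]
  simp only [truncN, one, this]
  split_ifs <;> simp

lemma mem_S_of {N : ℝ} {L : ℕ} (hL : L = ⌊N⌋₊) (hN : 0 ≤ N) {n : ℤ} (h : 1 ≤ n ∧ (n:ℝ) ≤ N) :
    n ∈ S L := by
  obtain ⟨m, rfl⟩ := Int.eq_ofNat_of_zero_le (by omega : 0 ≤ n)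
  simp only [S, Finset.mem_Icc]
  refine ⟨h.1, ?_⟩
  rw [hL]
  have := h.2
  simp only [Int.cast_natCast] at this
  exact_mod_cast Nat.le_floor this

lemma UN_eq {N : ℝ} {L k : ℕ} (hL : L = ⌊N⌋₊) (hN : 0 ≤ N) (f : ℤ → ℝ)
    (hf : ∀ n : ℤ, f n ≠ 0 → 1 ≤ n ∧ (n : ℝ) ≤ N) :
    gowersUN k N (fun n => ((f n : ℝ) : ℂ)) =
      (V k f) ^ ((1:ℝ) / 2 ^ k) / (I L k (one L) (one L)) ^ ((1:ℝ) / 2 ^ k) := by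
  rw [gowersUN, trunc_one hL hN, tilde_eq, V_eq _ (one_sup L)]
  have : truncN N (fun n => ((f n : ℝ) : ℂ)) = fun n => ((f n : ℝ) : ℂ) := by
    funext n
    simp only [truncN]
    split_ifs with h
    · rfl
    · by_contra h'
      exact h (hf n (by intro h0; simp [h0] at h'))
  rw [this, tilde_eq]

lemma rpow_pow_div {a b : ℝ} (ha : 0 ≤ a) (hb : 0 ≤ b) (k : ℕ) :
    (a ^ ((1:ℝ) / 2 ^ k) / b ^ ((1:ℝ) / 2 ^ k)) ^ (2 ^ k) = a / b := by
  have e : ((1:ℝ) / 2 ^ k) = ((2 ^ k : ℕ) : ℝ)⁻¹ := by push_cast; rw [one_div]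
  rw [div_pow, e, Real.rpow_inv_natCast_pow ha (by positivity),
    Real.rpow_inv_natCast_pow hb (by positivity)]

end GTV
end

open GTV in
theorem gowers_triangle_variant (k : ℕ) (hk : 1 ≤ k) :
    ∃ C : ℝ, 0 < C ∧ ∀ N : ℝ, 100 ≤ N → ∀ q : ℕ, 1 ≤ q → (q : ℝ) ≤ N →
      ∀ f : ℤ → ℝ, (∀ n, |f n| ≤ 1) → (∀ n : ℤ, f n ≠ 0 → 1 ≤ n ∧ (n : ℝ) ≤ N) →
        gowersUN k N (fun n => ((f n : ℝ) : ℂ)) ^ (2 ^ k) ≤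
          C * ∑ d ∈ q.divisors, (1 / (d : ℝ)) *
            gowersUN k (N / d)
              (fun n => ((f ((d : ℤ) * n) : ℝ) : ℂ) *
                (if Int.gcd n ((q / d : ℕ) : ℤ) = 1 then 1 else 0)) := by
  obtain ⟨k, rfl⟩ : ∃ j, k = j + 1 := ⟨k - 1, by omega⟩
  obtain ⟨c, hc, hlow⟩ := lower (k+1)
  refine ⟨3 ^ (k+2) / c, by positivity, fun N hN q hq hqN f hf1 hf => ?_⟩
  have hN0 : 0 ≤ N := by linarith
  set L := ⌊N⌋₊ with hL
  have hqL : q ≤ L := Nat.le_floor hqN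
  have hL1 : 1 ≤ L := hq.trans hqL
  have hL0 : (0:ℝ) < L := by exact_mod_cast hL1
  have hfs : Sup L f := fun n hn => mem_S_of hL hN0 (hf n hn)
  have hW := hlow L hL1
  have hW0 : 0 < I L (k+1) (one L) (one L) := lt_of_lt_of_le (by positivity) hW
  rw [UN_eq hL hN0 f hf, V_eq f hfs, rpow_pow_div (U_nonneg f hfs) hW0.le]
  let g : ℕ → ℤ → ℝ := fun d n => if Int.gcd n q = d then f n else 0
  have hfg : f = fun n => ∑ d ∈ q.divisors, g d n := by
    funext n
    simp only [g]
    rw [Finset.sum_ite_eq, if_pos]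
    rw [Nat.mem_divisors]
    refine ⟨?_, by omega⟩
    exact_mod_cast Int.gcd_dvd_right n (q:ℤ)
  have hU : I L (k+1) f f = ∑ d ∈ q.divisors, I L (k+1) (g d) f := by
    conv_lhs => rw [show I L (k+1) f f = I L (k+1) (fun n => ∑ d ∈ q.divisors, g d n) f by rw [← hfg]]
    exact I_sum _ _ _ _ _
  have key : ∀ d ∈ q.divisors, I L (k+1) (g d) f ≤ (3 * L : ℝ) ^ (k+2) * ((1 / (d:ℝ)) *
      gowersUN (k+1) (N / d) (fun n => ((f ((d : ℤ) * n) : ℝ) : ℂ) *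
                (if Int.gcd n ((q / d : ℕ) : ℤ) = 1 then 1 else 0))) := by
    intro d hd
    have hdq : d ∣ q := Nat.dvd_of_mem_divisors hd
    have hd1 : 1 ≤ d := Nat.pos_of_mem_divisors hd
    have hdL : d ≤ L := (Nat.le_of_dvd hq hdq).trans hqL
    have hd0 : (0:ℝ) < d := by exact_mod_cast hd1
    have hgd : ∀ n, g d n ≠ 0 → (d:ℤ) ∣ n := by
      intro n hn
      have : Int.gcd n q = d := by
        by_contra h; simp [g, h] at hn
      rw [← this]; exact Int.gcd_dvd_left n (q:ℤ)
    have hgf : ∀ n, g d n ≠ 0 → f n ≠ 0 := by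
      intro n hn h; simp [g, h] at hn
    have hgs : Sup L (g d) := fun n hn => hfs n (hgf n hn)
    have hG : (fun n => ((f ((d : ℤ) * n) : ℝ) : ℂ) *
                (if Int.gcd n ((q / d : ℕ) : ℤ) = 1 then 1 else 0)) =
        fun n => (((fun m => g d (d * m)) n : ℝ) : ℂ) := by
      funext n
      have : (Int.gcd n ((q / d : ℕ) : ℤ) = 1) ↔ Int.gcd (d * n) q = d := by
        obtain ⟨e, rfl⟩ := hdq
        rw [Nat.mul_div_cancel_left _ hd1]
        push_cast
        rw [Int.gcd_mul_left, Int.natAbs_natCast]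
        constructor
        · intro h; rw [h, mul_one]
        · intro h; exact Nat.eq_of_mul_eq_mul_left hd1 (by rw [h, mul_one])
      simp only [g, this]
      split_ifs <;> simp
    have hLd : L / d = ⌊N / d⌋₊ := (Nat.floor_div_natCast N d).symm
    have hLd1 : 1 ≤ L / d := (Nat.one_le_div_iff (by omega)).2 hdL
    rw [hG, UN_eq hLd (by positivity) _ ?_, V_scale (by positivity) _ hgd, V_eq _ hgs]
    swap
    · intro n hn
      have := hf _ (hgf _ hn)
      have hdz : (0:ℤ) < d := by exact_mod_cast hd1
      refine ⟨?_, ?_⟩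
      · by_contra h
        have : (d:ℤ) * n ≤ 0 := mul_nonpos_of_nonneg_of_nonpos hdz.le (by omega)
        omega
      · rw [le_div_iff₀ hd0]
        have := this.2
        push_cast at this
        linarith
    set w := I (L/d) (k+1) (one (L/d)) (one (L/d)) with hw
    have hw0 : 0 < w := by
      have h1 : (0:ℝ) < ((L/d : ℕ):ℝ) := by exact_mod_cast hLd1
      exact lt_of_lt_of_le (by positivity) (hlow (L/d) hLd1)
    have hu0 := U_nonneg (k := k) (g d) hgs
    have hν := rpow_pow_div hu0 hw0.le (k+1)
    set ν := I L (k+1) (g d) (g d) ^ ((1:ℝ) / 2 ^ (k+1)) / w ^ ((1:ℝ) / 2 ^ (k+1)) with hνdef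
    have hν0 : 0 ≤ ν := by positivity
    have hm := main hd1 hdL k (g d) f hgs hfs hf1 hgd
    have hwY : w ≤ (3 * L / d : ℝ) ^ (k+2) := by
      refine (upper hLd1).trans ?_
      have h5 : ((L / d : ℕ) : ℝ) ≤ L / d := Nat.cast_div_le
      rw [mul_div_assoc]
      gcongr
    have h1 : |I L (k+1) (g d) f| ^ (2 ^ (k+1)) * w ≤
        (3 * L : ℝ) ^ ((k+1) * 2 ^ (k+1)) * (3 * L / d : ℝ) ^ (2 ^ (k+1)) * I L (k+1) (g d) (g d) :=
      le_trans (by gcongr) hm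
    have h2 : |I L (k+1) (g d) f| ^ (2 ^ (k+1)) ≤
        ((3 * L : ℝ) ^ (k+1) * (3 * L / d) * ν) ^ (2 ^ (k+1)) := by
      rw [mul_pow, hν, mul_pow, ← pow_mul, ← mul_div_assoc, le_div_iff₀ hw0]
      exact h1
    have h3 : |I L (k+1) (g d) f| ≤ (3 * L : ℝ) ^ (k+1) * (3 * L / d) * ν :=
      (pow_le_pow_iff_left₀ (abs_nonneg _) (by positivity) (by positivity)).1 h2
    refine (le_abs_self _).trans (h3.trans (le_of_eq ?_))
    ring
  have hsum : I L (k+1) f f ≤ (3 * L : ℝ) ^ (k+2) * ∑ d ∈ q.divisors, (1 / (d : ℝ)) *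
            gowersUN (k+1) (N / d)
              (fun n => ((f ((d : ℤ) * n) : ℝ) : ℂ) *
                (if Int.gcd n ((q / d : ℕ) : ℤ) = 1 then 1 else 0)) := by
    rw [hU, Finset.mul_sum]
    exact Finset.sum_le_sum key
  set R := ∑ d ∈ q.divisors, (1 / (d : ℝ)) *
            gowersUN (k+1) (N / d)
              (fun n => ((f ((d : ℤ) * n) : ℝ) : ℂ) *
                (if Int.gcd n ((q / d : ℕ) : ℤ) = 1 then 1 else 0)) with hR
  have hR0 : 0 ≤ R := by
    have := (U_nonneg (k := k) f hfs).trans hsum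
    exact nonneg_of_mul_nonneg_right this (by positivity)
  rw [div_le_iff₀ hW0]
  refine hsum.trans ?_
  calc (3 * L : ℝ) ^ (k+2) * R = 3 ^ (k+2) / c * R * (c * (L:ℝ) ^ (k+1+1)) := by
        rw [mul_pow]; field_simp
    _ ≤ _ := by gcongr
end
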